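/- arXiv:2303.12768 — 2 statements merged into one kernel-verified Lean document; each statement's English description precedes it below -/
import Mathlib

section
/- There exists an absolute constant C such that every finite undirected unweighted simple graph G on n vertices has a subgraph H ⊆ G with at most C · n edges such that for every pair of vertices u, v connected in G, dist_H(u,v) ≤ dist_G(u,v) + C · n^(0.403). -/
open Finset


/-- There is a walk of length at most `k` from `x` to `y`. -/
def Wk {V : Type} (G : SimpleGraph V) (k : ℕ) (x y : V) : Prop :=
  ∃ p : G.Walk x y, p.length ≤ k

namespace Wk
variable {V : Type} {G H : SimpleGraph V} {x y z : V} {k l : ℕ}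

theorem rfl' (k : ℕ) (x : V) : Wk G k x x := ⟨SimpleGraph.Walk.nil, by simp⟩

theorem mono (h : Wk G k x y) (hkl : k ≤ l) : Wk G l x y := by
  obtain ⟨p, hp⟩ := h
  exact ⟨p, hp.trans hkl⟩

theorem trans (h : Wk G k x y) (h' : Wk G l y z) : Wk G (k + l) x z := by
  obtain ⟨p, hp⟩ := h
  obtain ⟨q, hq⟩ := h'
  exact ⟨p.append q, by rw [SimpleGraph.Walk.length_append]; omega⟩

theorem symm (h : Wk G k x y) : Wk G k y x := by
  obtain ⟨p, hp⟩ := h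
  exact ⟨p.reverse, by rwa [SimpleGraph.Walk.length_reverse]⟩

theorem graph_mono (h : Wk G k x y) (hGH : G ≤ H) : Wk H k x y := by
  obtain ⟨p, hp⟩ := h
  exact ⟨p.mapLe hGH, by simpa using hp⟩

theorem of_adj (h : G.Adj x y) : Wk G 1 x y := ⟨h.toWalk, by simp⟩

theorem zero_iff : Wk G 0 x y ↔ x = y := by
  constructor
  · rintro ⟨p, hp⟩
    exact SimpleGraph.Walk.eq_of_length_eq_zero (Nat.le_zero.1 hp)
  · rintro rfl
    exact rfl' 0 _

theorem of_fun (f : ℕ → V) {a b : ℕ} (hab : a ≤ b)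
    (h : ∀ i, a ≤ i → i < b → G.Adj (f i) (f (i + 1))) : Wk G (b - a) (f a) (f b) := by
  induction b, hab using Nat.le_induction with
  | base => exact rfl' _ _
  | succ b hab ih =>
    have h1 := ih (fun i hi hib => h i hi (by omega))
    have h2 : Wk G 1 (f b) (f (b + 1)) := of_adj (h b hab (by omega))
    exact (h1.trans h2).mono (by omega)

theorem exists_fun (h : Wk G k x y) : ∃ (f : ℕ → V) (d : ℕ), d ≤ k ∧ f 0 = x ∧ f d = y ∧
    ∀ i, i < d → G.Adj (f i) (f (i + 1)) := by
  obtain ⟨p, hp⟩ := h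
  exact ⟨p.getVert, p.length, hp, by simp, by simp, fun i hi => p.adj_getVert_succ hi⟩

/-- last step -/
theorem succ_cases (h : Wk G (k + 1) x y) : x = y ∨ ∃ z, Wk G k x z ∧ G.Adj z y := by
  obtain ⟨f, d, hd, h0, h1, hadj⟩ := h.exists_fun
  rcases Nat.eq_zero_or_pos d with rfl | hpos
  · left; rw [← h0, ← h1]
  · right
    refine ⟨f (d - 1), ?_, ?_⟩
    · have := of_fun (G := G) f (Nat.zero_le (d - 1)) (fun i _ hi => hadj i (by omega))
      rw [h0] at this
      exact this.mono (by omega)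
    · have := hadj (d - 1) (by omega)
      rwa [Nat.sub_add_cancel hpos, h1] at this

end Wk

/-- `f` restricted to `[0,d]` is a geodesic of `G`. -/
structure Geo {V : Type} (G : SimpleGraph V) (f : ℕ → V) (d : ℕ) : Prop where
  adj : ∀ i, i < d → G.Adj (f i) (f (i + 1))
  short : ∀ k, Wk G k (f 0) (f d) → d ≤ k

namespace Geo
variable {V : Type} {G : SimpleGraph V} {f : ℕ → V} {d : ℕ}

theorem wk (h : Geo G f d) {i j : ℕ} (hij : i ≤ j) (hj : j ≤ d) : Wk G (j - i) (f i) (f j) :=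
  Wk.of_fun f hij (fun a _ ha => h.adj a (by omega))

theorem le (h : Geo G f d) {i j k : ℕ} (hij : i ≤ j) (hj : j ≤ d) (hk : Wk G k (f i) (f j)) :
    j - i ≤ k := by
  have := h.short _ (((h.wk (Nat.zero_le i) (by omega)).trans hk).trans (h.wk hj le_rfl))
  omega

theorem inj (h : Geo G f d) {i j : ℕ} (hi : i ≤ d) (hj : j ≤ d) (hij : f i = f j) : i = j := by
  rcases le_total i j with hle | hle
  · have := h.le (k := 0) hle hj (Wk.zero_iff.2 hij)
    omega
  · have := h.le (k := 0) hle hi (Wk.zero_iff.2 hij.symm)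
    omega

theorem lt_card [Fintype V] (h : Geo G f d) : d + 1 ≤ Fintype.card V := by
  classical
  have : ((range (d + 1)).image f).card = d + 1 := by
    rw [card_image_of_injOn, card_range]
    intro i hi j hj hij
    simp only [coe_range, Set.mem_Iio] at hi hj
    exact h.inj (by omega) (by omega) hij
  rw [← this]
  exact card_le_univ _

theorem exists_of_wk {k : ℕ} {x y : V} (h : Wk G k x y) :
    ∃ f d, Geo G f d ∧ f 0 = x ∧ f d = y ∧ d ≤ k := by
  classical
  have hex : ∃ k, Wk G k x y := ⟨k, h⟩
  obtain ⟨f, d, hd, h0, h1, hadj⟩ := (Nat.find_spec hex).exists_fun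
  refine ⟨f, d, ⟨hadj, ?_⟩, h0, h1, ?_⟩
  · intro k hk
    rw [h0, h1] at hk
    exact hd.trans (Nat.find_min' hex hk)
  · exact hd.trans (Nat.find_min' hex h)

end Geo

/-- number of edges -/
noncomputable def ec {V : Type} (G : SimpleGraph V) : ℕ := G.edgeSet.ncard

theorem ec_bot {V : Type} : ec (⊥ : SimpleGraph V) = 0 := by simp [ec]

theorem ec_sup_le {V : Type} [Fintype V] (G H : SimpleGraph V) : ec (G ⊔ H) ≤ ec G + ec H := by
  unfold ec
  rw [SimpleGraph.edgeSet_sup]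
  exact Set.ncard_union_le _ _

theorem ec_mono {V : Type} [Fintype V] {G H : SimpleGraph V} (h : G ≤ H) : ec G ≤ ec H :=
  Set.ncard_le_ncard (SimpleGraph.edgeSet_mono h) (Set.toFinite _)

theorem ec_sup_finset {V ι : Type} [Fintype V] (s : Finset ι) (F : ι → SimpleGraph V) :
    ec (s.sup F) ≤ ∑ i ∈ s, ec (F i) := by
  classical
  induction s using Finset.induction_on with
  | empty => simp [ec_bot]
  | insert a s ha ih =>
    rw [Finset.sup_insert, sum_insert ha]
    exact (ec_sup_le _ _).trans (by omega)

/-- `G` restricted to the vertex set `W` -/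
def loc {V : Type} (G : SimpleGraph V) (W : Finset V) : SimpleGraph V where
  Adj x y := G.Adj x y ∧ x ∈ W ∧ y ∈ W
  symm := ⟨fun _ _ h => ⟨h.1.symm, h.2.2, h.2.1⟩⟩
  loopless := ⟨fun _ h => G.loopless.irrefl _ h.1⟩

theorem loc_le {V : Type} (G : SimpleGraph V) (W : Finset V) : loc G W ≤ G := fun _ _ h => h.1

/-- graph with edges `s(f i, f (i+1))` for `i < d` -/
def pathG {V : Type} (G : SimpleGraph V) (f : ℕ → V) (d : ℕ) : SimpleGraph V where
  Adj x y := G.Adj x y ∧ ∃ i, i < d ∧ ((x = f i ∧ y = f (i + 1)) ∨ (y = f i ∧ x = f (i + 1)))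
  symm := ⟨fun _ _ h => ⟨h.1.symm, by obtain ⟨i, hi, h'⟩ := h.2; exact ⟨i, hi, h'.symm⟩⟩⟩
  loopless := ⟨fun _ h => G.loopless.irrefl _ h.1⟩


/-- The geodesic replacement step. -/
theorem geo_splice {V : Type} {G : SimpleGraph V} {f g : ℕ → V} {d e a b a' b' : ℕ}
    (hf : Geo G f d) (hg : Geo G g e) (hab : a ≤ b) (hb : b ≤ d) (ha' : a' ≤ e) (hb' : b' ≤ e)
    (h1 : f a = g a') (h2 : f b = g b') :
    ∃ f' : ℕ → V, Geo G f' d ∧ f' 0 = f 0 ∧ f' d = f d ∧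
      (∀ i, i < d → ¬ (a ≤ i ∧ i < b) → f' i = f i ∧ f' (i + 1) = f (i + 1)) ∧
      (∀ i, a ≤ i → i < b → ∃ j, j < e ∧
        ((f' i = g j ∧ f' (i + 1) = g (j + 1)) ∨ (f' i = g (j + 1) ∧ f' (i + 1) = g j))) := by
  have hlen : b - a = b' - a' + (a' - b') := by
    rcases le_total a' b' with hle | hle
    · have e1 := hf.le hab hb (by rw [h1, h2]; exact hg.wk hle hb')
      have e2 := hg.le hle hb' (by rw [← h1, ← h2]; exact hf.wk hab hb)
      omega
    · have e1 := hf.le hab hb (by rw [h1, h2]; exact (hg.wk hle ha').symm)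
      have e2 := hg.le hle ha' (by rw [← h1, ← h2]; exact (hf.wk hab hb).symm)
      omega
  -- the middle part
  have key : ∃ m : ℕ → V, m a = f a ∧ m b = f b ∧ (∀ i, a ≤ i → i < b → ∃ j, j < e ∧
        ((m i = g j ∧ m (i + 1) = g (j + 1)) ∨ (m i = g (j + 1) ∧ m (i + 1) = g j))) := by
    rcases le_total a' b' with hle | hle
    · refine ⟨fun i => g (a' + (i - a)), by simp [h1], ?_, ?_⟩
      · show g _ = _
        rw [h2]; congr 1; omega
      · intro i hi hib
        refine ⟨a' + (i - a), by omega, Or.inl ⟨rfl, ?_⟩⟩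
        show g _ = _
        congr 1; omega
    · refine ⟨fun i => g (a' - (i - a)), by simp [h1], ?_, ?_⟩
      · show g _ = _
        rw [h2]; congr 1; omega
      · intro i hi hib
        refine ⟨a' - (i - a) - 1, by omega, Or.inr ⟨?_, ?_⟩⟩
        · show g _ = _
          congr 1; omega
        · show g _ = _
          congr 1; omega
  obtain ⟨m, hma, hmb, hm⟩ := key
  have hout : ∀ i, ¬ (a < i ∧ i < b) → (if a ≤ i ∧ i ≤ b then m i else f i) = f i := by
    intro i hi
    by_cases h : a ≤ i ∧ i ≤ b
    · rw [if_pos h]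
      have : i = a ∨ i = b := by omega
      rcases this with rfl | rfl <;> assumption
    · rw [if_neg h]
  refine ⟨fun i => if a ≤ i ∧ i ≤ b then m i else f i, ⟨?_, ?_⟩, ?_, ?_, ?_, ?_⟩
  · intro i hi
    by_cases h : a ≤ i ∧ i < b
    · obtain ⟨j, hj, h'⟩ := hm i h.1 h.2
      show G.Adj (if _ then _ else _) (if _ then _ else _)
      rw [if_pos (by omega), if_pos (by omega)]
      have := hg.adj j hj
      rcases h' with ⟨e1, e2⟩ | ⟨e1, e2⟩
      · rw [e1, e2]; exact this
      · rw [e1, e2]; exact this.symm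
    · show G.Adj (if _ then _ else _) (if _ then _ else _)
      rw [hout i (by omega), hout (i + 1) (by omega)]
      exact hf.adj i hi
  · intro k hk
    beta_reduce at hk
    rw [hout 0 (by omega), hout d (by omega)] at hk
    exact hf.short k hk
  · exact hout 0 (by omega)
  · exact hout d (by omega)
  · intro i hi h
    exact ⟨hout i (by omega), hout (i + 1) (by omega)⟩
  · intro i hi hib
    obtain ⟨j, hj, h'⟩ := hm i hi hib
    refine ⟨j, hj, ?_⟩
    show ((if _ then _ else _) = _ ∧ (if _ then _ else _) = _) ∨ ((if _ then _ else _) = _ ∧ (if _ then _ else _) = _)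
    rw [if_pos (by omega), if_pos (by omega)]
    exact (h')

theorem sep_aux : True := trivial

/-- Double counting: sets meeting pairwise in at most one point. -/
theorem card_sum_of_pairwise {V : Type} [DecidableEq V] (W : Finset V) {p : ℕ}
    (I : Fin p → Finset V) (hW : ∀ i, I i ⊆ W) (hI : ∀ i j, i ≠ j → (I i ∩ I j).card ≤ 1) :
    (∑ i, (I i).card) ^ 2 ≤ W.card * (∑ i, (I i).card + p ^ 2) := by
  have h1 : ∑ i, (I i).card = ∑ v ∈ W, (univ.filter (fun i => v ∈ I i)).card := by
    have : ∀ i, (I i).card = ∑ v ∈ W, if v ∈ I i then 1 else 0 := by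
      intro i
      rw [← card_filter]
      congr 1
      ext v
      simp only [mem_filter]
      exact ⟨fun h => ⟨hW i h, h⟩, fun h => h.2⟩
    rw [sum_congr rfl (fun i _ => this i), sum_comm]
    refine sum_congr rfl (fun v _ => ?_)
    rw [card_filter]
  have h2 : ∑ v ∈ W, (univ.filter (fun i => v ∈ I i)).card ^ 2 = ∑ i, ∑ j, (I i ∩ I j).card := by
    have : ∀ i j, (I i ∩ I j).card = ∑ v ∈ W, (if v ∈ I i then 1 else 0) * (if v ∈ I j then 1 else 0) := by
      intro i j
      rw [show (I i ∩ I j).card = (W.filter (fun v => v ∈ I i ∧ v ∈ I j)).card from ?_, card_filter]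
      · refine sum_congr rfl (fun v _ => ?_)
        by_cases a : v ∈ I i <;> by_cases b : v ∈ I j <;> simp [a, b]
      · congr 1
        ext v
        simp only [mem_filter, mem_inter]
        exact ⟨fun h => ⟨hW i h.1, h⟩, fun h => h.2⟩
    rw [sum_congr rfl (fun i _ => sum_congr rfl (fun j _ => this i j))]
    simp_rw [sum_comm (t := W)]
    refine sum_congr rfl (fun v _ => ?_)
    rw [card_filter, sq, sum_mul_sum]
  have h3 : ∑ i, ∑ j, (I i ∩ I j).card ≤ ∑ i, (I i).card + p ^ 2 := by
    have : ∀ i, ∑ j, (I i ∩ I j).card ≤ (I i).card + p := by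
      intro i
      calc ∑ j, (I i ∩ I j).card ≤ ∑ j, ((if i = j then (I i).card else 0) + 1) := by
            refine sum_le_sum (fun j _ => ?_)
            by_cases h : i = j
            · subst h; simp
            · simp [h, hI i j h]
        _ = _ := by rw [sum_add_distrib]; simp
    calc _ ≤ ∑ i, ((I i).card + p) := sum_le_sum (fun i _ => this i)
      _ = _ := by rw [sum_add_distrib]; simp [sq]
  rw [h1]
  calc _ ≤ W.card * ∑ v ∈ W, (univ.filter (fun i => v ∈ I i)).card ^ 2 := sq_sum_le_card_mul_sum_sq
    _ ≤ _ := by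
      rw [h2, ← h1]
      exact Nat.mul_le_mul_left _ h3


theorem ec_pathG_sup {V : Type} [Fintype V] [DecidableEq V] {G H : SimpleGraph V} (f : ℕ → V) (d : ℕ)
    (I : Finset V) (hI : ∀ i, i < d → ¬ H.Adj (f i) (f (i + 1)) → f (i + 1) ∈ I)
    (hinj : ∀ i j, i < d → j < d → f (i + 1) = f (j + 1) → i = j) :
    ec (H ⊔ pathG G f d) ≤ ec H + I.card := by
  classical
  unfold ec
  have hsub : (H ⊔ pathG G f d).edgeSet ⊆ H.edgeSet ∪
      (Set.image (fun i => s(f i, f (i + 1))) {i | i < d ∧ f (i + 1) ∈ I}) := by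
    intro e
    induction e using Sym2.ind with
    | _ x y =>
      intro h
      rw [SimpleGraph.mem_edgeSet, SimpleGraph.sup_adj] at h
      by_cases hH : H.Adj x y
      · exact Or.inl hH
      · rcases h with h | ⟨hG, i, hi, h⟩
        · exact absurd h hH
        · right
          refine ⟨i, ⟨hi, hI i hi ?_⟩, ?_⟩
          · rcases h with ⟨rfl, rfl⟩ | ⟨rfl, rfl⟩
            · exact hH
            · exact fun h' => hH h'.symm
          · rcases h with ⟨rfl, rfl⟩ | ⟨rfl, rfl⟩
            · rfl
            · exact Sym2.eq_swap
  have hfin : ({i | i < d ∧ f (i + 1) ∈ I} : Set ℕ).Finite :=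
    (Set.finite_lt_nat d).subset (fun i hi => hi.1)
  calc _ ≤ _ := Set.ncard_le_ncard hsub (Set.toFinite _)
    _ ≤ _ := Set.ncard_union_le _ _
    _ ≤ _ := by
      refine Nat.add_le_add_left ((Set.ncard_image_le hfin).trans ?_) _
      rw [← Set.ncard_coe_finset I]
      refine Set.ncard_le_ncard_of_injOn (fun i => f (i + 1)) (fun i hi => hi.2) ?_ (Set.toFinite _)
      intro i hi j hj hij
      exact hinj i j hi.1 hj.1 hij

theorem ce_aux {V : Type} [Fintype V] [DecidableEq V] (G : SimpleGraph V) (W : Finset V)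
    (hW : ∀ x y, G.Adj x y → y ∈ W) (l : List (V × V)) :
    ∃ H : SimpleGraph V, H ≤ G ∧ ∃ I : Fin l.length → Finset V, (∀ i, I i ⊆ W) ∧
      (∀ i j, i ≠ j → (I i ∩ I j).card ≤ 1) ∧
      (∀ i, ∃ g e, Geo G g e ∧ (∀ j, j < e → H.Adj (g j) (g (j + 1))) ∧ ∀ v ∈ I i, ∃ j, j ≤ e ∧ g j = v) ∧
      ec H ≤ ∑ i, (I i).card ∧ ∀ p ∈ l, ∀ k, Wk G k p.1 p.2 → Wk H k p.1 p.2 := by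
  classical
  induction l with
  | nil => exact ⟨⊥, bot_le, fun i => ∅, by simp, by simp, fun i => i.elim0, by simp [ec_bot], by simp⟩
  | cons p l ih =>
    obtain ⟨H, hHG, I, hIW, hII, hIg, hec, hl⟩ := ih
    by_cases hex : ∃ k, Wk G k p.1 p.2
    · obtain ⟨k0, hk0⟩ := hex
      obtain ⟨f0, d, hf0, hx0, hy0, -⟩ := Geo.exists_of_wk hk0
      -- choose the geodesic with fewest new edges
      let cost : (ℕ → V) → ℕ := fun f => ((range d).filter (fun i => ¬ H.Adj (f i) (f (i + 1)))).card
      have hP : ∃ c, ∃ f, Geo G f d ∧ f 0 = p.1 ∧ f d = p.2 ∧ cost f = c := ⟨_, f0, hf0, hx0, hy0, rfl⟩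
      obtain ⟨f, hf, hx, hy, hc⟩ := Nat.find_spec hP
      have hmin : ∀ f', Geo G f' d → f' 0 = p.1 → f' d = p.2 → cost f ≤ cost f' := by
        intro f' h1 h2 h3
        rw [hc]
        exact Nat.find_min' hP ⟨f', h1, h2, h3, rfl⟩
      let J : Finset V := ((range d).filter (fun i => ¬ H.Adj (f i) (f (i + 1)))).image (fun i => f (i + 1))
      have hJ : ∀ v ∈ J, ∃ i, i < d ∧ ¬ H.Adj (f i) (f (i + 1)) ∧ f (i + 1) = v := by
        intro v hv
        simp only [J, mem_image, mem_filter, mem_range] at hv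
        obtain ⟨i, ⟨h1, h2⟩, h3⟩ := hv
        exact ⟨i, h1, h2, h3⟩
      have hmeet : ∀ i, (J ∩ I i).card ≤ 1 := by
        intro i
        obtain ⟨g, e, hg, hgH, hgI⟩ := hIg i
        rw [card_le_one]
        -- key: no two distinct indices
        have key : ∀ a b, a < b → b < d → ¬ H.Adj (f b) (f (b + 1)) → f (a + 1) ∈ I i → f (b + 1) ∈ I i → False := by
          intro a b hab hb hnew hva hvb
          obtain ⟨a', ha', hga⟩ := hgI _ hva
          obtain ⟨b', hb', hgb⟩ := hgI _ hvb
          obtain ⟨f', hf', h0, hd, hout, hin⟩ := geo_splice hf hg (a := a + 1) (b := b + 1) (by omega) (by omega) ha' hb' hga.symm hgb.symm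
          have hlt : cost f' < cost f := by
            apply card_lt_card
            rw [Finset.ssubset_iff_of_subset]
            · refine ⟨b, by simp [hb, hnew], ?_⟩
              obtain ⟨j, hj, h'⟩ := hin b (by omega) (by omega)
              have hh := hgH j hj
              simp only [mem_filter, not_and, not_not]
              intro _
              rcases h' with ⟨e1, e2⟩ | ⟨e1, e2⟩
              · rw [e1, e2]; exact hh
              · rw [e1, e2]; exact hh.symm
            · intro t ht
              simp only [mem_filter, mem_range] at ht ⊢
              refine ⟨ht.1, ?_⟩
              by_cases hcase : a + 1 ≤ t ∧ t < b + 1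
              · exfalso
                obtain ⟨j, hj, h'⟩ := hin t hcase.1 hcase.2
                have hh := hgH j hj
                rcases h' with ⟨e1, e2⟩ | ⟨e1, e2⟩
                · rw [e1, e2] at ht; exact ht.2 hh
                · rw [e1, e2] at ht; exact ht.2 hh.symm
              · obtain ⟨e1, e2⟩ := hout t ht.1 hcase
                rw [e1, e2] at ht
                exact ht.2
          have := hmin f' hf' (h0.trans hx) (hd.trans hy)
          omega
        intro v hv w hw
        rw [mem_inter] at hv hw
        obtain ⟨a, ha, hna, rfl⟩ := hJ v hv.1
        obtain ⟨b, hb, hnb, rfl⟩ := hJ w hw.1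
        rcases lt_trichotomy a b with h | h | h
        · exact (key a b h hb hnb hv.2 hw.2).elim
        · rw [h]
        · exact (key b a h ha hna hw.2 hv.2).elim
      have hfH : ∀ j, j < d → (H ⊔ pathG G f d).Adj (f j) (f (j + 1)) := by
        intro j hj
        exact Or.inr ⟨hf.adj j hj, j, hj, Or.inl ⟨rfl, rfl⟩⟩
      refine ⟨H ⊔ pathG G f d, sup_le hHG (fun _ _ h => h.1), Fin.cons J I, ?_, ?_, ?_, ?_, ?_⟩
      · intro i
        refine Fin.cases ?_ (fun i => ?_) i
        · intro v hv
          obtain ⟨a, ha, -, rfl⟩ := hJ v hv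
          exact hW _ _ (hf.adj a ha)
        · exact hIW i
      · intro i j
        refine Fin.cases ?_ (fun i => ?_) i <;> refine Fin.cases ?_ (fun j => ?_) j
        · intro h; exact absurd rfl h
        · intro _; exact hmeet j
        · intro _; rw [inter_comm]; exact hmeet i
        · intro h
          exact hII i j (fun h' => h (by rw [h']))
      · intro i
        refine Fin.cases ?_ (fun i => ?_) i
        · refine ⟨f, d, hf, hfH, ?_⟩
          intro v hv
          obtain ⟨a, ha, -, rfl⟩ := hJ v hv
          exact ⟨a + 1, by omega, rfl⟩
        · obtain ⟨g, e, hg, hgH, hgI⟩ := hIg i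
          exact ⟨g, e, hg, fun j hj => Or.inl (hgH j hj), hgI⟩
      · have h1 : ec (H ⊔ pathG G f d) ≤ ec H + J.card := by
          apply ec_pathG_sup
          · intro i hi hn
            simp only [J, mem_image, mem_filter, mem_range]
            exact ⟨i, ⟨hi, hn⟩, rfl⟩
          · intro i j hi hj hij
            have := hf.inj (i := i + 1) (j := j + 1) (by omega) (by omega) hij
            omega
        have h2 : ∑ i, ((Fin.cons J I : Fin (l.length + 1) → Finset V) i).card = J.card + ∑ i, (I i).card := by
          rw [Fin.sum_univ_succ]; simp
        have h3 : ∑ i : Fin (p :: l).length, ((Fin.cons J I : Fin (l.length + 1) → Finset V) i).card = J.card + ∑ i, (I i).card := h2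
        rw [h3]; omega
      · intro q hq k hk
        rcases List.mem_cons.1 hq with rfl | hq
        · have h1 := Wk.of_fun f (Nat.zero_le d) (fun i _ hi => hfH i hi)
          rw [hx, hy] at h1
          rw [← hx, ← hy] at hk
          have := hf.short k hk
          exact h1.mono (by omega)
        · exact (hl q hq k hk).graph_mono le_sup_left
    · refine ⟨H, hHG, Fin.cons ∅ I, ?_, ?_, ?_, ?_, ?_⟩
      · intro i
        refine Fin.cases ?_ (fun i => ?_) i
        · exact empty_subset _
        · exact hIW i
      · intro i j
        refine Fin.cases ?_ (fun i => ?_) i <;> refine Fin.cases ?_ (fun j => ?_) j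
        · intro h; exact absurd rfl h
        · intro _; simp
        · intro _; simp
        · intro h
          exact hII i j (fun h' => h (by rw [h']))
      · intro i
        refine Fin.cases ?_ (fun i => ?_) i
        · refine ⟨fun _ => p.1, 0, ⟨by simp, by simp⟩, by simp, by simp⟩
        · exact hIg i
      · have h3 : ∑ i : Fin (p :: l).length, ((Fin.cons ∅ I : Fin (l.length + 1) → Finset V) i).card = ∑ i, (I i).card := by
          have : ∑ i, ((Fin.cons ∅ I : Fin (l.length + 1) → Finset V) i).card = ∑ i, (I i).card := by
            rw [Fin.sum_univ_succ]; simp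
          exact this
        rw [h3]; exact hec
      · intro q hq k hk
        rcases List.mem_cons.1 hq with rfl | hq
        · exact absurd ⟨k, hk⟩ hex
        · exact hl q hq k hk

/-- Coppersmith–Elkin: distance preservers for a set of pairs. -/
theorem ce {V : Type} [Fintype V] (G : SimpleGraph V) (W : Finset V)
    (hW : ∀ x y, G.Adj x y → y ∈ W) (P : Finset (V × V)) :
    ∃ H : SimpleGraph V, H ≤ G ∧ (ec H ≤ 2 * W.card ∨ ec H ^ 2 ≤ 2 * (W.card * P.card ^ 2)) ∧
      ∀ p ∈ P, ∀ k, Wk G k p.1 p.2 → Wk H k p.1 p.2 := by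
  classical
  obtain ⟨H, hH, I, h1, h2, -, h4, h5⟩ := ce_aux G W hW P.toList
  refine ⟨H, hH, ?_, fun p hp => h5 p (by simpa using hp)⟩
  have h6 := card_sum_of_pairwise W I h1 h2
  have hlen : P.toList.length = P.card := length_toList P
  generalize (∑ i, (I i).card) = T at h4 h6
  rw [hlen] at h6
  by_cases hT : T ≤ 2 * W.card
  · left; omega
  · right
    have : ec H ^ 2 ≤ T ^ 2 := Nat.pow_le_pow_left h4 2
    nlinarith


/-- BFS tree inside `W`. -/
theorem tree {V : Type} [Fintype V] (G : SimpleGraph V) (W : Finset V) (c : V) (r : ℕ)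
    (h : ∀ y ∈ W, Wk (loc G W) r c y) :
    ∃ T : SimpleGraph V, T ≤ G ∧ ec T ≤ W.card ∧ ∀ y ∈ W, Wk T r c y := by
  classical
  have hpar : ∀ y : V, ∃ z : V, y ∈ W → y ≠ c → (loc G W).Adj z y ∧
      ∀ k, Wk (loc G W) (k + 1) c y → Wk (loc G W) k c z := by
    intro y
    by_cases hy : y ∈ W ∧ y ≠ c
    · have hex : ∃ k, Wk (loc G W) k c y := ⟨r, h y hy.1⟩
      have hs := Nat.find_spec hex
      obtain ⟨k, hk⟩ : ∃ k, Nat.find hex = k + 1 := by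
        refine Nat.exists_eq_succ_of_ne_zero (fun h0 => ?_)
        rw [h0, Wk.zero_iff] at hs
        exact hy.2 hs.symm
      rw [hk] at hs
      rcases hs.succ_cases with h1 | ⟨z, hz, hadj⟩
      · exact absurd h1.symm hy.2
      · refine ⟨z, fun _ _ => ⟨hadj, fun k' hk' => hz.mono ?_⟩⟩
        have := Nat.find_min' hex hk'
        omega
    · exact ⟨y, fun h1 h2 => absurd ⟨h1, h2⟩ hy⟩
  choose par hpar using hpar
  let T : SimpleGraph V :=
    { Adj := fun x y => (loc G W).Adj x y ∧ ((y ∈ W ∧ x = par y) ∨ (x ∈ W ∧ y = par x))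
      symm := ⟨fun _ _ h => ⟨h.1.symm, h.2.symm⟩⟩
      loopless := ⟨fun _ h => (loc G W).loopless.irrefl _ h.1⟩ }
  refine ⟨T, fun _ _ h => h.1.1, ?_, ?_⟩
  · have hsub : T.edgeSet ⊆ Set.image (fun y => s(y, par y)) (W : Set V) := by
      intro e
      induction e using Sym2.ind with
      | _ x y =>
        intro h1
        have h2 : (loc G W).Adj x y ∧ ((y ∈ W ∧ x = par y) ∨ (x ∈ W ∧ y = par x)) := h1
        rcases h2.2 with ⟨hy, hx⟩ | ⟨hx, hy⟩
        · refine ⟨y, hy, ?_⟩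
          rw [hx]; exact Sym2.eq_swap
        · refine ⟨x, hx, ?_⟩
          rw [hy]
    calc ec T ≤ _ := Set.ncard_le_ncard hsub (Set.toFinite _)
      _ ≤ (W : Set V).ncard := Set.ncard_image_le (Set.toFinite _)
      _ = W.card := Set.ncard_coe_finset W
  · have key : ∀ k, ∀ y ∈ W, Wk (loc G W) k c y → Wk T k c y := by
      intro k
      induction k with
      | zero =>
        intro y _ hk
        rw [Wk.zero_iff] at hk ⊢
        exact hk
      | succ k ih =>
        intro y hy hk
        by_cases hyc : y = c
        · subst hyc; exact Wk.rfl' _ _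
        · obtain ⟨h1, h2⟩ := hpar y hy hyc
          exact (ih _ h1.2.1 (h2 k hk)).trans (Wk.of_adj ⟨h1, Or.inl ⟨hy, rfl⟩⟩)
    intro y hy
    exact key r y hy (h y hy)

open Classical in
/-- the `R`-neighbourhood of `U` -/
noncomputable def Nb {V : Type} [Fintype V] (G : SimpleGraph V) (R : ℕ) (U : Finset V) : Finset V :=
  univ.filter (fun y => ∃ x ∈ U, Wk G R x y)

theorem mem_Nb {V : Type} [Fintype V] {G : SimpleGraph V} {R : ℕ} {U : Finset V} {y : V} :
    y ∈ Nb G R U ↔ ∃ x ∈ U, Wk G R x y := by simp [Nb]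

theorem Nb_mono {V : Type} [Fintype V] {G : SimpleGraph V} {R : ℕ} {U U' : Finset V} (h : U ⊆ U') :
    Nb G R U ⊆ Nb G R U' := by
  intro y
  rw [mem_Nb, mem_Nb]
  rintro ⟨x, hx, hy⟩
  exact ⟨x, h hx, hy⟩

theorem loc_mono {V : Type} {G : SimpleGraph V} {W W' : Finset V} (h : W ⊆ W') :
    loc G W ≤ loc G W' := fun _ _ hh => ⟨hh.1, h hh.2.1, h hh.2.2⟩

theorem wk_loc_ball {V : Type} [Fintype V] {G : SimpleGraph V} {R : ℕ} {U : Finset V} {x z : V} {k : ℕ}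
    (hx : x ∈ U) (hz : z ∈ U) (h : Wk G k x z) (hk : k ≤ 2 * R) : Wk (loc G (Nb G R U)) k x z := by
  obtain ⟨f, d, hd, h0, h1, hadj⟩ := h.exists_fun
  have hmem : ∀ j, j ≤ d → f j ∈ Nb G R U := by
    intro j hj
    rw [mem_Nb]
    by_cases hjR : j ≤ R
    · refine ⟨x, hx, ?_⟩
      have := Wk.of_fun (G := G) f (Nat.zero_le j) (fun i _ hi => hadj i (by omega))
      rw [h0] at this
      exact this.mono (by omega)
    · refine ⟨z, hz, ?_⟩
      have := Wk.of_fun (G := G) f hj (fun i _ hi => hadj i (by omega))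
      rw [h1] at this
      exact this.symm.mono (by omega)
  have := Wk.of_fun (G := loc G (Nb G R U)) f (Nat.zero_le d)
    (fun i _ hi => ⟨hadj i hi, hmem i (by omega), hmem (i + 1) (by omega)⟩)
  rw [h0, h1] at this
  exact this.mono (by omega)

theorem wk_loc_ball' {V : Type} [Fintype V] {G : SimpleGraph V} {R : ℕ} {U : Finset V} {x y : V}
    (hx : x ∈ U) (h : Wk G R x y) : Wk (loc G (Nb G R U)) R x y := by
  obtain ⟨f, d, hd, h0, h1, hadj⟩ := h.exists_fun
  have hmem : ∀ j, j ≤ d → f j ∈ Nb G R U := by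
    intro j hj
    rw [mem_Nb]
    refine ⟨x, hx, ?_⟩
    have := Wk.of_fun (G := G) f (Nat.zero_le j) (fun i _ hi => hadj i (by omega))
    rw [h0] at this
    exact this.mono (by omega)
  have := Wk.of_fun (G := loc G (Nb G R U)) f (Nat.zero_le d)
    (fun i _ hi => ⟨hadj i hi, hmem i (by omega), hmem (i + 1) (by omega)⟩)
  rw [h0, h1] at this
  exact this.mono (by omega)

/-- ball growing step -/
theorem grow {V : Type} [Fintype V] [DecidableEq V] (G : SimpleGraph V) (R Λ : ℕ)
    (hΛ : Fintype.card V < 2 ^ Λ) (U : Finset V) (c : V) (hc : c ∈ U) :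
    ∃ Z Z' : Finset V, c ∈ Z ∧ Z ⊆ Z' ∧ Z' ⊆ U ∧ (Nb G R Z').card ≤ 2 * (Nb G R Z).card ∧
      (∀ y ∈ Nb G R Z', Wk (loc G (Nb G R Z')) (R + 2 * R * Λ) c y) ∧
      (∀ x ∈ U, x ∉ Z' → ∀ z ∈ Z, ¬ Wk G (2 * R) x z) := by
  classical
  obtain ⟨Z, hZ0, hZs⟩ : ∃ Z : ℕ → Finset V, Z 0 = {c} ∧
      ∀ i, Z (i + 1) = U.filter (fun x => ∃ z ∈ Z i, Wk G (2 * R) x z) :=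
    ⟨fun i => Nat.rec {c} (fun _ Zi => U.filter (fun x => ∃ z ∈ Zi, Wk G (2 * R) x z)) i,
      rfl, fun i => rfl⟩
  have hU : ∀ i, Z i ⊆ U := by
    intro i
    cases i with
    | zero => rw [hZ0]; simpa using hc
    | succ i => rw [hZs]; exact filter_subset _ _
  have hmono : ∀ i, Z i ⊆ Z (i + 1) := by
    intro i x hx
    rw [hZs, mem_filter]
    exact ⟨hU i hx, x, hx, Wk.rfl' _ _⟩
  have hcZ : ∀ i, c ∈ Z i := by
    intro i
    induction i with
    | zero => rw [hZ0]; simp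
    | succ i ih => exact hmono i ih
  have hconn : ∀ i, ∀ x ∈ Z i, Wk (loc G (Nb G R (Z i))) (2 * R * i) c x := by
    intro i
    induction i with
    | zero =>
      intro x hx
      rw [hZ0, mem_singleton] at hx
      subst hx
      exact Wk.rfl' _ _
    | succ i ih =>
      intro x hx
      have hx' := hx
      rw [hZs, mem_filter] at hx'
      obtain ⟨-, z, hz, hxz⟩ := hx'
      have h1 := (ih z hz).graph_mono (loc_mono (Nb_mono (hmono i)))
      have h2 := wk_loc_ball (hmono i hz) hx hxz.symm le_rfl
      exact (h1.trans h2).mono (by rw [Nat.mul_succ])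
  have hi : ∃ i, i < Λ ∧ (Nb G R (Z (i + 1))).card ≤ 2 * (Nb G R (Z i)).card := by
    by_contra hcon
    push Not at hcon
    have : ∀ i, i ≤ Λ → 2 ^ i ≤ (Nb G R (Z i)).card := by
      intro i
      induction i with
      | zero =>
        intro _
        rw [pow_zero]
        exact Finset.card_pos.2 ⟨c, mem_Nb.2 ⟨c, hcZ 0, Wk.rfl' _ _⟩⟩
      | succ i ih =>
        intro hi
        have h1 := ih (by omega)
        have h2 := hcon i (by omega)
        rw [pow_succ]; omega
    have h1 := this Λ le_rfl
    have h2 : (Nb G R (Z Λ)).card ≤ Fintype.card V := card_le_univ _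
    omega
  obtain ⟨i, hiΛ, hi⟩ := hi
  refine ⟨Z i, Z (i + 1), hcZ i, hmono i, hU (i + 1), hi, ?_, ?_⟩
  · intro y hy
    obtain ⟨x, hx, hxy⟩ := mem_Nb.1 hy
    refine ((hconn _ x hx).trans (wk_loc_ball' hx hxy)).mono ?_
    have : 2 * R * (i + 1) ≤ 2 * R * Λ := Nat.mul_le_mul_left _ hiΛ
    omega
  · intro x hx hxn z hz hw
    apply hxn
    rw [hZs, mem_filter]
    exact ⟨hx, z, hz, hw⟩

theorem cover_aux {V : Type} [Fintype V] [DecidableEq V] (G : SimpleGraph V) (R Λ : ℕ)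
    (hΛ : Fintype.card V < 2 ^ Λ) (m : ℕ) : ∀ U : Finset V, U.card ≤ m →
    ∃ home : V → V, (∀ x ∈ U, home x ∈ U) ∧
      (∀ c, ∀ y ∈ Nb G R (U.filter (fun x => home x = c)),
        Wk (loc G (Nb G R (U.filter (fun x => home x = c)))) (R + 2 * R * Λ) c y) ∧
      ∑ c ∈ U, (Nb G R (U.filter (fun x => home x = c))).card ≤ 2 * (Nb G R U).card := by
  induction m with
  | zero =>
    intro U hU
    have : U = ∅ := by rw [← card_eq_zero]; omega
    subst this
    exact ⟨id, by simp, by simp [Nb], by simp⟩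
  | succ m ih =>
    intro U hU
    rcases U.eq_empty_or_nonempty with rfl | ⟨c, hc⟩
    · exact ⟨id, by simp, by simp [Nb], by simp⟩
    obtain ⟨Z, Z', hcZ, hZZ, hZU, hcard, hconn, hfar⟩ := grow G R Λ hΛ U c hc
    have hcZ' := hZZ hcZ
    obtain ⟨h0, hin, hconn0, hsum0⟩ := ih (U \ Z') (by
      have : (U \ Z').card < U.card := card_lt_card (by
        refine ⟨sdiff_subset, fun h => ?_⟩
        have := h hc
        rw [mem_sdiff] at this
        exact this.2 hcZ')
      omega)
    let home : V → V := fun x => if x ∈ Z' then c else h0 x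
    have e1 : U.filter (fun x => home x = c) = Z' := by
      ext x
      simp only [mem_filter, home]
      constructor
      · rintro ⟨hx, hh⟩
        by_contra hn
        rw [if_neg hn] at hh
        have := hin x (mem_sdiff.2 ⟨hx, hn⟩)
        rw [hh, mem_sdiff] at this
        exact this.2 hcZ'
      · intro hx
        exact ⟨hZU hx, if_pos hx⟩
    have e2 : ∀ c', c' ≠ c → U.filter (fun x => home x = c') = (U \ Z').filter (fun x => h0 x = c') := by
      intro c' hc'
      ext x
      simp only [mem_filter, home, mem_sdiff]
      by_cases hx : x ∈ Z'
      · simp [hx, hc'.symm]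
      · simp [hx]
    refine ⟨home, ?_, ?_, ?_⟩
    · intro x hx
      by_cases hxZ : x ∈ Z'
      · simp only [home, if_pos hxZ]; exact hc
      · simp only [home, if_neg hxZ]
        exact (mem_sdiff.1 (hin x (mem_sdiff.2 ⟨hx, hxZ⟩))).1
    · intro c'
      by_cases hcc : c' = c
      · subst hcc
        rw [e1]; exact hconn
      · rw [e2 c' hcc]; exact hconn0 c'
    · have hdisj : Disjoint (Nb G R Z) (Nb G R (U \ Z')) := by
        rw [disjoint_left]
        intro y hy hy'
        obtain ⟨z, hz, hzy⟩ := mem_Nb.1 hy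
        obtain ⟨x, hx, hxy⟩ := mem_Nb.1 hy'
        rw [mem_sdiff] at hx
        exact hfar x hx.1 hx.2 z hz ((hxy.trans hzy.symm).mono (by omega))
      have hle : (Nb G R Z).card + (Nb G R (U \ Z')).card ≤ (Nb G R U).card := by
        rw [← card_union_of_disjoint hdisj]
        exact card_le_card (union_subset (Nb_mono (hZZ.trans hZU)) (Nb_mono sdiff_subset))
      have hs1 : ∑ c' ∈ U, (Nb G R (U.filter (fun x => home x = c'))).card =
          (Nb G R Z').card + ∑ c' ∈ U.erase c, (Nb G R ((U \ Z').filter (fun x => h0 x = c'))).card := by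
        rw [← add_sum_erase U _ hc, e1]
        congr 1
        exact sum_congr rfl (fun c' hc' => by rw [e2 c' (ne_of_mem_erase hc')])
      have hs2 : ∑ c' ∈ U.erase c, (Nb G R ((U \ Z').filter (fun x => h0 x = c'))).card =
          ∑ c' ∈ U \ Z', (Nb G R ((U \ Z').filter (fun x => h0 x = c'))).card := by
        symm
        apply sum_subset
        · intro x hx
          rw [mem_sdiff] at hx
          rw [mem_erase]
          exact ⟨fun h => hx.2 (h ▸ hcZ'), hx.1⟩
        · intro x _ hx
          have : (U \ Z').filter (fun y => h0 y = x) = ∅ := by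
            rw [filter_eq_empty_iff]
            intro y hy hyx
            exact hx (hyx ▸ hin y hy)
          rw [this]; simp [Nb]
      rw [hs1, hs2]
      omega


theorem Nb_mono' {V : Type} [Fintype V] {G : SimpleGraph V} {i j : ℕ} {U : Finset V} (h : i ≤ j) :
    Nb G i U ⊆ Nb G j U := by
  intro y
  rw [mem_Nb, mem_Nb]
  rintro ⟨x, hx, hy⟩
  exact ⟨x, hx, hy.mono h⟩

theorem thin_layer {V : Type} [Fintype V] [DecidableEq V] (G : SimpleGraph V) (R : ℕ) (hR : 1 ≤ R)
    (U : Finset V) : ∃ i, R < 2 * i ∧ i ≤ R ∧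
      (Nb G i U \ Nb G (i - 1) U).card * R ≤ 2 * (Nb G R U).card := by
  by_contra hcon
  push Not at hcon
  have key : ∀ t, t ≤ R - R / 2 → t * (2 * (Nb G R U).card + 1) ≤ (Nb G (R / 2 + t) U).card * R := by
    intro t
    induction t with
    | zero => intro _; simp
    | succ t ih =>
      intro ht
      have h1 := ih (by omega)
      have h2 := hcon (R / 2 + (t + 1)) (by omega) (by omega)
      have h3 : R / 2 + (t + 1) - 1 = R / 2 + t := by omega
      rw [h3] at h2
      have h4 : Nb G (R / 2 + t) U ⊆ Nb G (R / 2 + (t + 1)) U := Nb_mono' (by omega)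
      have h5 := card_sdiff_add_card_eq_card h4
      rw [← h5]
      nlinarith
  have h1 := key (R - R / 2) le_rfl
  have h2 : R / 2 + (R - R / 2) = R := by omega
  rw [h2] at h1
  have h3 : R ≤ 2 * (R - R / 2) := by omega
  nlinarith

/-- The cluster package. -/
structure Pack {V : Type} [Fintype V] (G : SimpleGraph V) (R Λ : ℕ) where
  home : V → V
  W : V → Finset V
  bd : V → Finset V
  s : V → ℕ
  F : SimpleGraph V
  F_le : F ≤ G
  F_ec : ec F ≤ 2 * Fintype.card V
  rad : ∀ c, ∀ y ∈ W c, Wk F (3 * R * Λ) c y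
  mem : ∀ x, x ∈ W (home x)
  W_le : ∀ c, (W c).card ≤ s c
  s_le : ∀ c, s c ≤ Fintype.card V
  s_sum : ∑ c, s c ≤ 2 * Fintype.card V
  bd_sub : ∀ c, bd c ⊆ W c
  bd_card : ∀ c, (bd c).card * R ≤ 2 * s c
  exit : ∀ (f : ℕ → V) (a d : ℕ), a ≤ d → (∀ i, a ≤ i → i < d → G.Adj (f i) (f (i + 1))) →
    (∀ i, a ≤ i → i ≤ d → f i ∈ W (home (f a))) ∨
    ∃ b, a ≤ b ∧ b ≤ d ∧ f b ∈ bd (home (f a)) ∧ (∀ i, a ≤ i → i ≤ b → f i ∈ W (home (f a))) ∧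
      R < 2 * (b - a)

theorem pack_exists {V : Type} [Fintype V] (G : SimpleGraph V) (R Λ : ℕ) (hR : 1 ≤ R)
    (hΛ : Fintype.card V < 2 ^ Λ) : Nonempty (Pack G R Λ) := by
  classical
  obtain ⟨home, -, hconn, hsum⟩ := cover_aux G R Λ hΛ _ univ le_rfl
  let U : V → Finset V := fun c => univ.filter (fun x => home x = c)
  have hΛ1 : ∀ _ : V, 1 ≤ Λ := by
    intro c
    have : 0 < Fintype.card V := Fintype.card_pos_iff.2 ⟨c⟩
    by_contra h
    have : Λ = 0 := by omega
    subst this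
    simp at hΛ
    omega
  choose I hI1 hI2 hI3 using fun c => thin_layer G R hR (U c)
  choose T hT1 hT2 hT3 using fun c => tree G (Nb G R (U c)) c (R + 2 * R * Λ) (hconn c)
  have hsubN : ∀ c, Nb G (I c) (U c) ⊆ Nb G R (U c) := fun c => Nb_mono' (hI2 c)
  refine ⟨{ home := home, W := fun c => Nb G (I c) (U c),
            bd := fun c => Nb G (I c) (U c) \ Nb G (I c - 1) (U c),
            s := fun c => (Nb G R (U c)).card,
            F := univ.sup T, F_le := Finset.sup_le (fun c _ => hT1 c), F_ec := ?_, rad := ?_,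
            mem := ?_, W_le := fun c => card_le_card (hsubN c), s_le := fun c => card_le_univ _,
            s_sum := ?_, bd_sub := fun c => sdiff_subset, bd_card := hI3, exit := ?_ }⟩
  · calc ec (univ.sup T) ≤ ∑ c, ec (T c) := ec_sup_finset _ _
      _ ≤ ∑ c, (Nb G R (U c)).card := sum_le_sum (fun c _ => hT2 c)
      _ ≤ 2 * (Nb G R (univ : Finset V)).card := hsum
      _ ≤ _ := Nat.mul_le_mul_left _ (card_le_univ _)
  · intro c y hy
    have h1 := (hT3 c y (hsubN c hy)).graph_mono (Finset.le_sup (f := T) (mem_univ c))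
    refine h1.mono ?_
    have := hΛ1 c
    nlinarith
  · intro x
    exact mem_Nb.2 ⟨x, by simp [U], Wk.rfl' _ _⟩
  · exact hsum.trans (Nat.mul_le_mul_left _ (card_le_univ _))
  · intro f a d had hadj
    set c := home (f a) with hc
    have hfa : f a ∈ U c := by simp [U, hc]
    by_cases hall : ∀ i, a ≤ i → i ≤ d → f i ∈ Nb G (I c) (U c)
    · exact Or.inl hall
    · right
      push Not at hall
      have hs := Nat.find_spec hall
      have hmin : ∀ j, a ≤ j → j < Nat.find hall → f j ∈ Nb G (I c) (U c) := by
        intro j hj hjl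
        by_contra hn
        exact Nat.find_min hall hjl ⟨hj, by omega, hn⟩
      obtain ⟨j, hj⟩ : ∃ j, j = Nat.find hall := ⟨_, rfl⟩
      rw [← hj] at hs hmin
      obtain ⟨h1, h2, h3⟩ := hs
      have hja : a ≠ j := by
        rintro rfl
        exact h3 (mem_Nb.2 ⟨_, hfa, Wk.rfl' _ _⟩)
      have hb : f (j - 1) ∉ Nb G (I c - 1) (U c) := by
        intro hn
        obtain ⟨x, hx, hw⟩ := mem_Nb.1 hn
        have had := hadj (j - 1) (by omega) (by omega)
        rw [show j - 1 + 1 = j by omega] at had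
        refine h3 (mem_Nb.2 ⟨x, hx, (hw.trans (Wk.of_adj had)).mono ?_⟩)
        have := hI1 c
        omega
      refine ⟨j - 1, by omega, by omega, mem_sdiff.2 ⟨hmin _ (by omega) (by omega), hb⟩, ?_, ?_⟩
      · intro i hi hij
        exact hmin i hi (by omega)
      · by_contra hn
        apply hb
        refine mem_Nb.2 ⟨f a, hfa, ?_⟩
        have := Wk.of_fun (G := G) f (show a ≤ j - 1 by omega) (fun i hi hij => hadj i hi (by omega))
        refine this.mono ?_
        have := hI1 c
        omega

/-- A chain along a path. -/
structure Chain {V : Type} [Fintype V] {G : SimpleGraph V} {R Λ : ℕ} (P : Pack G R Λ)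
    (f : ℕ → V) (d m : ℕ) (a : ℕ → ℕ) : Prop where
  le : ∀ t, t ≤ m → a t ≤ d
  gap : ∀ t, t < m → R < 2 * (a (t + 1) - a t)
  bd : ∀ t, t < m → f (a (t + 1)) ∈ P.bd (P.home (f (a t)))
  seg : ∀ t, t < m → ∀ i, a t ≤ i → i ≤ a (t + 1) → f i ∈ P.W (P.home (f (a t)))
  last : ∀ i, a m ≤ i → i ≤ d → f i ∈ P.W (P.home (f (a m)))

theorem chain_aux {V : Type} [Fintype V] {G : SimpleGraph V} {R Λ : ℕ} (P : Pack G R Λ)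
    (f : ℕ → V) (d : ℕ) (hadj : ∀ i, i < d → G.Adj (f i) (f (i + 1))) (k : ℕ) :
    ∀ a0, a0 ≤ d → d - a0 ≤ k → ∃ m a, a 0 = a0 ∧ Chain P f d m a := by
  induction k with
  | zero =>
    intro a0 h0 hk
    refine ⟨0, fun _ => a0, rfl, ⟨fun _ _ => h0, by simp, by simp, by simp, ?_⟩⟩
    intro i hi hid
    have : i = a0 := by omega
    subst this
    exact P.mem _
  | succ k ih =>
    intro a0 h0 hk
    rcases P.exit f a0 d h0 (fun i _ hi => hadj i hi) with hall | ⟨b, hb1, hb2, hb3, hb4, hb5⟩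
    · exact ⟨0, fun _ => a0, rfl, ⟨fun _ _ => h0, by simp, by simp, by simp, hall⟩⟩
    · obtain ⟨m, a, ha0, hch⟩ := ih b hb2 (by omega)
      refine ⟨m + 1, fun t => Nat.casesOn t a0 a, rfl, ⟨?_, ?_, ?_, ?_, ?_⟩⟩
      · intro t ht
        cases t with
        | zero => exact h0
        | succ t => exact hch.le t (by omega)
      · intro t ht
        cases t with
        | zero => simpa [ha0] using hb5
        | succ t => exact hch.gap t (by omega)
      · intro t ht
        cases t with
        | zero => simpa [ha0] using hb3
        | succ t => exact hch.bd t (by omega)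
      · intro t ht
        cases t with
        | zero => simpa [ha0] using hb4
        | succ t => exact hch.seg t (by omega)
      · exact hch.last

theorem chain_exists {V : Type} [Fintype V] {G : SimpleGraph V} {R Λ : ℕ} (P : Pack G R Λ)
    {f : ℕ → V} {d : ℕ} (hf : Geo G f d) : ∃ m a, a 0 = 0 ∧ Chain P f d m a :=
  chain_aux P f d hf.adj d 0 (Nat.zero_le d) (by omega)

namespace Chain
variable {V : Type} [Fintype V] {G : SimpleGraph V} {R Λ : ℕ} {P : Pack G R Λ}
  {f : ℕ → V} {d m : ℕ} {a : ℕ → ℕ}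

theorem mono (h : Chain P f d m a) {i j : ℕ} (hij : i ≤ j) (hj : j ≤ m) :
    a i + (j - i) * (R + 1) / 2 ≤ a j ∧ 2 * a i + (j - i) * (R + 1) ≤ 2 * a j := by
  have : 2 * a i + (j - i) * (R + 1) ≤ 2 * a j := by
    induction j, hij using Nat.le_induction with
    | base => simp
    | succ j hij ih =>
      have h1 := ih (by omega)
      have h2 := h.gap j (by omega)
      rw [show j + 1 - i = (j - i) + 1 by omega, Nat.add_mul]
      omega
  omega

theorem mono' (h : Chain P f d m a) {i j : ℕ} (hij : i ≤ j) (hj : j ≤ m) : a i ≤ a j := by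
  have := (h.mono hij hj).1; omega

theorem m_le (h : Chain P f d m a) : m ≤ d := by
  have h1 := (h.mono (Nat.zero_le m) le_rfl).2
  have h2 := h.le m le_rfl
  have h3 := fun t => h.gap t
  have : ∀ t, t ≤ m → t ≤ a t := by
    intro t
    induction t with
    | zero => intro _; omega
    | succ t ih =>
      intro ht
      have := ih (by omega)
      have := h.gap t (by omega)
      omega
  have := this m le_rfl
  omega

/-- distance in index of two visits of the same cluster -/
theorem near (h : Chain P f d m a) (hf : Geo G f d) {i j : ℕ} (hij : i ≤ j) (hj : j ≤ m)
    (hc : P.home (f (a i)) = P.home (f (a j))) : j - i ≤ 12 * Λ := by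
  have h1 := P.rad _ _ (P.mem (f (a i)))
  have h2 := P.rad _ _ (P.mem (f (a j)))
  rw [← hc] at h2
  have h3 := (h1.symm.trans h2).graph_mono P.F_le
  have h4 := hf.le (h.mono' hij hj) (h.le j hj) h3
  have h5 := (h.mono hij hj).2
  by_contra hn
  push Not at hn
  have : (12 * Λ + 1) * (R + 1) ≤ (j - i) * (R + 1) := Nat.mul_le_mul_right _ hn
  have h6 : a j ≤ a i + (3 * R * Λ + 3 * R * Λ) := by omega
  nlinarith

theorem mult (h : Chain P f d m a) (hf : Geo G f d) [DecidableEq V] (c : V) :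
    ((range (m + 1)).filter (fun t => P.home (f (a t)) = c)).card ≤ 12 * Λ + 1 := by
  rcases ((range (m + 1)).filter (fun t => P.home (f (a t)) = c)).eq_empty_or_nonempty with h0 | h0
  · rw [h0]; simp
  · have hmin := min'_mem _ h0
    set t0 := min' _ h0 with ht0
    calc _ ≤ (Icc t0 (t0 + 12 * Λ)).card := by
          apply card_le_card
          intro t ht
          have hle : t0 ≤ t := min'_le _ _ ht
          rw [mem_filter, mem_range] at ht hmin
          have := h.near hf hle (by omega) (hmin.2.trans ht.2.symm)
          rw [mem_Icc]; omega
      _ = _ := by rw [Nat.card_Icc]; omega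

end Chain


/-- subset spanners with `K * m` edges and additive error `e` -/
def SubAt (m q K e : ℕ) : Prop :=
  ∀ (V : Type) [Fintype V] (G : SimpleGraph V) (S : Finset V), Fintype.card V ≤ m → S.card ≤ q →
    ∃ H : SimpleGraph V, H ≤ G ∧ ec H ≤ K * m ∧
      ∀ u ∈ S, ∀ v ∈ S, ∀ k, Wk G k u v → Wk H (k + e) u v

theorem SubAt.mono {m q K e q' K' e' : ℕ} (h : SubAt m q K e) (hq : q' ≤ q) (hK : K ≤ K')
    (he : e ≤ e') : SubAt m q' K' e' := by
  intro V _ G S hV hS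
  obtain ⟨H, h1, h2, h3⟩ := h V G S hV (hS.trans hq)
  exact ⟨H, h1, h2.trans (Nat.mul_le_mul_right _ hK),
    fun u hu v hv k hk => (h3 u hu v hv k hk).mono (by omega)⟩

theorem Wk.mem_loc {V : Type} {G : SimpleGraph V} {W : Finset V} {f : ℕ → V} {d : ℕ}
    (h0 : f 0 ∈ W) (hadj : ∀ i, i < d → (loc G W).Adj (f i) (f (i + 1))) (i : ℕ) (hi : i ≤ d) :
    f i ∈ W := by
  cases i with
  | zero => exact h0
  | succ i => exact (hadj i (by omega)).2.2

theorem SubAt.transfer {m q K e : ℕ} (h : SubAt m q K e) {V : Type} [Fintype V] (G : SimpleGraph V)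
    (W S : Finset V) (hW : W.card ≤ m) (hSW : S ⊆ W) (hS : S.card ≤ q) :
    ∃ H : SimpleGraph V, H ≤ loc G W ∧ ec H ≤ K * m ∧
      ∀ u ∈ S, ∀ v ∈ S, ∀ k, Wk (loc G W) k u v → Wk H (k + e) u v := by
  classical
  obtain ⟨H, h1, h2, h3⟩ := h {x // x ∈ W} (G.comap Subtype.val) (S.subtype (fun x => x ∈ W))
    (by simpa using hW) (by rw [card_subtype]; exact (card_filter_le _ _).trans hS)
  refine ⟨H.map (Function.Embedding.subtype _), ?_, ?_, ?_⟩
  · intro x y hxy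
    rw [SimpleGraph.map_adj] at hxy
    obtain ⟨a, b, hab, rfl, rfl⟩ := hxy
    exact ⟨h1 hab, a.2, b.2⟩
  · refine le_trans ?_ h2
    unfold ec
    rw [SimpleGraph.edgeSet_map]
    exact Set.ncard_image_le (Set.toFinite _)
  · intro u hu v hv k hk
    have huW := hSW hu
    obtain ⟨f, d, hd, h0, hd1, hadj⟩ := hk.exists_fun
    have hmem := Wk.mem_loc (G := G) (W := W) (f := f) (d := d) (by rw [h0]; exact huW) hadj
    let f' : ℕ → {x // x ∈ W} := fun i => if hi : f i ∈ W then ⟨f i, hi⟩ else ⟨u, huW⟩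
    have hf' : ∀ i, i ≤ d → (f' i : V) = f i := by
      intro i hi
      simp only [f', dif_pos (hmem i hi)]
    have hw := Wk.of_fun (G := G.comap Subtype.val) f' (Nat.zero_le d) (by
      intro i _ hi
      rw [SimpleGraph.comap_adj, hf' i (by omega), hf' (i + 1) (by omega)]
      exact (hadj i hi).1)
    have hm : ∀ i, i ≤ d → f i ∈ S → f' i ∈ S.subtype (fun x => x ∈ W) := by
      intro i hi hiS
      rw [mem_subtype, hf' i hi]; exact hiS
    have hw2 := h3 _ (hm 0 (by omega) (by rw [h0]; exact hu)) _ (hm d le_rfl (by rw [hd1]; exact hv))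
      k (hw.mono (by omega))
    obtain ⟨g, l, hl, g0, gl, hg⟩ := hw2.exists_fun
    have hw3 := Wk.of_fun (G := H.map (Function.Embedding.subtype _)) (fun i => (g i : V))
      (Nat.zero_le l) (by
        intro i _ hi
        rw [SimpleGraph.map_adj]
        exact ⟨_, _, hg i hi, rfl, rfl⟩)
    simp only [g0, gl] at hw3
    rw [hf' 0 (by omega), hf' d le_rfl, h0, hd1] at hw3
    exact hw3.mono (by omega)

theorem chunk {s q K e : ℕ} (h : SubAt s (2 * q) K e) {V : Type} [Fintype V] (G : SimpleGraph V)
    (W B : Finset V) (hW : W.card ≤ s) (hB : B ⊆ W) (hBq : B.card ≤ q) (n : ℕ) :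
    ∀ T : Finset V, T ⊆ W → T.card ≤ n * q →
    ∃ H : SimpleGraph V, H ≤ loc G W ∧ ec H ≤ n * (K * s) ∧
      ∀ x ∈ T, ∀ y ∈ B, ∀ k, Wk (loc G W) k x y → Wk H (k + e) x y := by
  classical
  induction n with
  | zero =>
    intro T _ hT
    refine ⟨⊥, bot_le, by rw [ec_bot]; omega, ?_⟩
    have : T = ∅ := by rw [← card_eq_zero]; omega
    subst this
    simp
  | succ n ih =>
    intro T hTW hT
    obtain ⟨T1, hT1, hc⟩ := exists_subset_card_eq (s := T) (n := min T.card q) (by omega)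
    obtain ⟨H1, a1, a2, a3⟩ := ih (T \ T1) (sdiff_subset.trans hTW) (by
      rw [card_sdiff_of_subset hT1, hc]
      rw [Nat.add_mul, one_mul] at hT
      omega)
    obtain ⟨H2, b1, b2, b3⟩ := h.transfer G W (T1 ∪ B) hW (union_subset (hT1.trans hTW) hB)
      ((card_union_le _ _).trans (by omega))
    refine ⟨H1 ⊔ H2, sup_le a1 b1, (ec_sup_le _ _).trans (by rw [Nat.add_mul, one_mul]; omega), ?_⟩
    intro x hx y hy k hk
    by_cases hx1 : x ∈ T1
    · exact (b3 x (mem_union_left _ hx1) y (mem_union_right _ hy) k hk).graph_mono le_sup_right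
    · exact (a3 x (mem_sdiff.2 ⟨hx, hx1⟩) y hy k hk).graph_mono le_sup_left

theorem inner {V : Type} [Fintype V] {G : SimpleGraph V} {R Λ : ℕ} (hR : 1 ≤ R) (P : Pack G R Λ)
    (K : ℕ) (e : V → ℕ) (Q : V → Prop)
    (h : ∀ c, Q c → R ≤ 2 * P.s c → SubAt (P.s c) (2 * (2 * P.s c / R)) K (e c)) :
    ∃ H : SimpleGraph V, H ≤ G ∧ ec H ≤ 6 * K * Fintype.card V ∧
      ∀ c, Q c → ∀ x y, P.home x = c → (∃ j, x ∈ P.bd j) → y ∈ P.bd c → ∀ k,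
        Wk (loc G (P.W c)) k x y → Wk H (k + e c) x y := by
  classical
  let T : Finset V := univ.biUnion P.bd
  let Tin : V → Finset V := fun c => T.filter (fun x => P.home x = c)
  have hper : ∀ c, ∃ H : SimpleGraph V, H ≤ G ∧ ec H ≤ K * (P.s c + R * (Tin c).card) ∧
      (Q c → ∀ x ∈ Tin c, ∀ y ∈ P.bd c, ∀ k, Wk (loc G (P.W c)) k x y → Wk H (k + e c) x y) := by
    intro c
    by_cases hQ : Q c
    swap
    · exact ⟨⊥, bot_le, by rw [ec_bot]; omega, fun h => absurd h hQ⟩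
    by_cases hs : R ≤ 2 * P.s c
    · have hq1 : 1 ≤ 2 * P.s c / R := (Nat.one_le_div_iff (by omega)).2 hs
      have hTW : Tin c ⊆ P.W c := by
        intro x hx
        have := (mem_filter.1 hx).2
        rw [← this]
        exact P.mem x
      obtain ⟨H, a1, a2, a3⟩ := chunk (h c hQ hs) G (P.W c) (P.bd c) (P.W_le c) (P.bd_sub c)
        ((Nat.le_div_iff_mul_le (by omega)).2 (P.bd_card c))
        ((Tin c).card / (2 * P.s c / R) + 1) (Tin c) hTW
        (by
          have := Nat.lt_div_mul_add (a := (Tin c).card) (b := 2 * P.s c / R) (by omega)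
          rw [Nat.add_mul, one_mul]; omega)
      refine ⟨H, a1.trans (loc_le _ _), a2.trans ?_, fun _ => a3⟩
      set q := 2 * P.s c / R with hq
      have h1 : 2 * P.s c < q * R + R := Nat.lt_div_mul_add (by omega)
      have h2 : R ≤ q * R := Nat.le_mul_of_pos_left _ (by omega)
      have h3 : P.s c ≤ q * R := by omega
      have h4 : (Tin c).card / q * q ≤ (Tin c).card := Nat.div_mul_le_self _ _
      calc ((Tin c).card / q + 1) * (K * P.s c)
          = K * (P.s c + (Tin c).card / q * P.s c) := by ring
        _ ≤ K * (P.s c + (Tin c).card / q * (q * R)) := by gcongr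
        _ = K * (P.s c + R * ((Tin c).card / q * q)) := by ring
        _ ≤ _ := by gcongr
    · refine ⟨⊥, bot_le, by rw [ec_bot]; omega, fun _ x _ y hy => ?_⟩
      exfalso
      have h1 := P.bd_card c
      have h2 : 0 < (P.bd c).card := Finset.card_pos.2 ⟨y, hy⟩
      have h3 : R ≤ (P.bd c).card * R := Nat.le_mul_of_pos_left _ h2
      omega
  choose H hH1 hH2 hH3 using hper
  refine ⟨univ.sup H, Finset.sup_le (fun c _ => hH1 c), ?_, ?_⟩
  · have hT : ∑ c, (Tin c).card = T.card := by
      exact (card_eq_sum_card_fiberwise (f := P.home) (s := T) (t := univ) (fun x _ => mem_univ _)).symm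
    have hT2 : R * T.card ≤ 4 * Fintype.card V := by
      calc R * T.card ≤ R * ∑ c, (P.bd c).card := Nat.mul_le_mul_left _ card_biUnion_le
        _ = ∑ c, (P.bd c).card * R := by rw [mul_comm, sum_mul]
        _ ≤ ∑ c, 2 * P.s c := sum_le_sum (fun c _ => P.bd_card c)
        _ = 2 * ∑ c, P.s c := by rw [mul_sum]
        _ ≤ _ := by have := P.s_sum; omega
    calc ec (univ.sup H) ≤ ∑ c, ec (H c) := ec_sup_finset _ _
      _ ≤ ∑ c, K * (P.s c + R * (Tin c).card) := sum_le_sum (fun c _ => hH2 c)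
      _ = K * (∑ c, P.s c + R * T.card) := by
        rw [← mul_sum, sum_add_distrib, ← mul_sum, hT]
      _ ≤ K * (2 * Fintype.card V + 4 * Fintype.card V) := by
        have := P.s_sum
        gcongr
      _ = _ := by ring
  · rintro c hQ x y hx ⟨j, hj⟩ hy k hk
    exact (hH3 c hQ x (mem_filter.2 ⟨mem_biUnion.2 ⟨j, mem_univ _, hj⟩, hx⟩) y hy k hk).graph_mono
      (Finset.le_sup (f := H) (mem_univ c))


namespace Chain
variable {V : Type} [Fintype V] {G : SimpleGraph V} {R Λ : ℕ} {P : Pack G R Λ}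
  {f : ℕ → V} {d m : ℕ} {a : ℕ → ℕ}

theorem segs (h : Chain P f d m a) (H : SimpleGraph V) (e : ℕ → ℕ) {i j : ℕ} (hij : i ≤ j)
    (hj : j ≤ m)
    (hseg : ∀ t, i ≤ t → t < j → Wk H (a (t + 1) - a t + e t) (f (a t)) (f (a (t + 1)))) :
    Wk H (a j - a i + ∑ t ∈ Ico i j, e t) (f (a i)) (f (a j)) := by
  induction j, hij using Nat.le_induction with
  | base => exact Wk.rfl' _ _
  | succ j hij ih =>
    have h1 := ih (by omega) (fun t h1 h2 => hseg t h1 (by omega))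
    have h2 := hseg j hij (by omega)
    have h3 := h.mono' hij (by omega)
    have h4 := h.mono' (show j ≤ j + 1 by omega) hj
    rw [sum_Ico_succ_top hij]
    exact (h1.trans h2).mono (by omega)

theorem from_center (h : Chain P f d m a) {H : SimpleGraph V} (hH : P.F ≤ H) (e : ℕ → ℕ)
    {i j : ℕ} (hij : i ≤ j) (hj : j ≤ m)
    (hseg : ∀ t, i + 1 ≤ t → t < j → Wk H (a (t + 1) - a t + e t) (f (a t)) (f (a (t + 1)))) :
    Wk H (3 * R * Λ + (a j - a i) + ∑ t ∈ Ico (i + 1) j, e t) (P.home (f (a i))) (f (a j)) := by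
  rcases Nat.eq_or_lt_of_le hij with rfl | hlt
  · exact ((P.rad _ _ (P.mem (f (a i)))).graph_mono hH).mono (by omega)
  · have h3 := h.mono' (show i ≤ i + 1 by omega) (by omega)
    have h4 := h.mono' (show i + 1 ≤ j by omega) hj
    have h1 := (P.rad _ _ (h.seg i (by omega) (a (i + 1)) h3 le_rfl)).graph_mono hH
    have h2 := h.segs H e (show i + 1 ≤ j by omega) hj hseg
    exact (h1.trans h2).mono (by omega)

theorem last_wk (h : Chain P f d m a) {H : SimpleGraph V} (hH : P.F ≤ H) :
    Wk H (3 * R * Λ + 3 * R * Λ) (f (a m)) (f d) := by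
  have h1 := (P.rad _ _ (P.mem (f (a m)))).graph_mono hH
  have h2 := (P.rad _ _ (h.last d (h.le m le_rfl) le_rfl)).graph_mono hH
  exact h1.symm.trans h2

theorem center_to_end (h : Chain P f d m a) {H : SimpleGraph V} (hH : P.F ≤ H) (e : ℕ → ℕ)
    {i : ℕ} (hi : i ≤ m)
    (hseg : ∀ t, i + 1 ≤ t → t < m → Wk H (a (t + 1) - a t + e t) (f (a t)) (f (a (t + 1)))) :
    Wk H (9 * R * Λ + (d - a i) + ∑ t ∈ Ico (i + 1) m, e t) (P.home (f (a i))) (f d) := by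
  have h1 := h.from_center hH e hi le_rfl hseg
  have h2 := h.last_wk hH
  have h3 := h.mono' hi le_rfl
  have h4 := h.le m le_rfl
  refine (h1.trans h2).mono ?_
  have : 9 * R * Λ = 3 * R * Λ + 3 * R * Λ + 3 * R * Λ := by ring
  omega

theorem start_to_center (h : Chain P f d m a) {H : SimpleGraph V} (hH : P.F ≤ H) (e : ℕ → ℕ)
    {j : ℕ} (hj : j ≤ m)
    (hseg : ∀ t, 1 ≤ t → t < j → Wk H (a (t + 1) - a t + e t) (f (a t)) (f (a (t + 1)))) :
    Wk H (9 * R * Λ + (a j - a 0) + ∑ t ∈ Ico 1 j, e t) (f (a 0)) (P.home (f (a j))) := by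
  have h1 := (P.rad _ _ (P.mem (f (a 0)))).graph_mono hH
  have h2 := h.from_center hH e (Nat.zero_le j) hj hseg
  have h3 := (P.rad _ _ (P.mem (f (a j)))).graph_mono hH
  refine ((h1.symm.trans h2).trans h3.symm).mono ?_
  have : 9 * R * Λ = 3 * R * Λ + 3 * R * Λ + 3 * R * Λ := by ring
  simp only [zero_add]
  omega

theorem wk_loc (h : Chain P f d m a) (hf : Geo G f d) {t : ℕ} (ht : t < m) :
    Wk (loc G (P.W (P.home (f (a t))))) (a (t + 1) - a t) (f (a t)) (f (a (t + 1))) := by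
  have h1 := h.mono' (show t ≤ t + 1 by omega) (by omega)
  have h2 := h.le (t + 1) (by omega)
  exact Wk.of_fun f h1 (fun i hi hi2 => ⟨hf.adj i (by omega), h.seg t ht i hi (by omega),
    h.seg t ht (i + 1) (by omega) (by omega)⟩)

end Chain

theorem chains {V : Type} [Fintype V] {G : SimpleGraph V} {R Λ : ℕ} (P : Pack G R Λ) :
    ∃ (f : V × V → ℕ → V) (d m : V × V → ℕ) (a : V × V → ℕ → ℕ), ∀ p : V × V,
      (∃ k, Wk G k p.1 p.2) → Geo G (f p) (d p) ∧ f p 0 = p.1 ∧ f p (d p) = p.2 ∧ a p 0 = 0 ∧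
        Chain P (f p) (d p) (m p) (a p) := by
  have : ∀ p : V × V, ∃ (f : ℕ → V) (d m : ℕ) (a : ℕ → ℕ),
      (∃ k, Wk G k p.1 p.2) → Geo G f d ∧ f 0 = p.1 ∧ f d = p.2 ∧ a 0 = 0 ∧
        Chain P f d m a := by
    intro p
    by_cases h : ∃ k, Wk G k p.1 p.2
    · obtain ⟨k, hk⟩ := h
      obtain ⟨f, d, h1, h2, h3, -⟩ := Geo.exists_of_wk hk
      obtain ⟨m, a, h4, h5⟩ := chain_exists P h1
      exact ⟨f, d, m, a, fun _ => ⟨h1, h2, h3, h4, h5⟩⟩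
    · exact ⟨fun _ => p.1, 0, 0, id, fun h' => absurd h' h⟩
  choose f d m a h using this
  exact ⟨f, d, m, a, h⟩

theorem subAt_ce {m q : ℕ} (h : q ^ 4 ≤ 2 * m) : SubAt m q 2 0 := by
  intro V _ G S hV hS
  obtain ⟨H, h1, h2, h3⟩ := ce G univ (fun _ _ _ => mem_univ _) (S ×ˢ S)
  refine ⟨H, h1, ?_, fun u hu v hv k hk => h3 (u, v) (mem_product.2 ⟨hu, hv⟩) k hk⟩
  rw [card_univ, card_product] at h2
  rcases h2 with h2 | h2
  · omega
  · have h4 : S.card * S.card ≤ q * q := Nat.mul_le_mul hS hS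
    have h5 : ec H ^ 2 ≤ (2 * m) ^ 2 := by
      calc ec H ^ 2 ≤ 2 * (Fintype.card V * (S.card * S.card) ^ 2) := h2
        _ ≤ 2 * (m * (q * q) ^ 2) := by gcongr
        _ = 2 * m * q ^ 4 := by ring
        _ ≤ 2 * m * (2 * m) := by gcongr
        _ = _ := by ring
    exact (Nat.pow_le_pow_iff_left (by norm_num)).1 h5

theorem base_num {s R q Λ : ℕ} (h : (26 * q * Λ) ^ 3 ≤ R ^ 2) (hs : 2 * s < (2 * (2 * s / R)) ^ 4) :
    (13 * q * Λ) ^ 2 ≤ 2 * s := by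
  have h1 : 2 * s / R * R ≤ 2 * s := Nat.div_mul_le_self _ _
  have h2 : 2 * s * R ^ 4 ≤ (4 * s) ^ 4 := by
    calc 2 * s * R ^ 4 ≤ (2 * (2 * s / R)) ^ 4 * R ^ 4 := by gcongr
      _ = (2 * (2 * s / R * R)) ^ 4 := by ring
      _ ≤ (2 * (2 * s)) ^ 4 := by gcongr
      _ = _ := by ring
  rcases Nat.eq_zero_or_pos s with rfl | hpos
  · simp at hs
  · have h3 : R ^ 4 ≤ 128 * s ^ 3 := by
      have : (2 * s) * R ^ 4 ≤ (2 * s) * (128 * s ^ 3) := by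
        calc _ ≤ _ := h2
          _ = _ := by ring
      exact Nat.le_of_mul_le_mul_left this (by omega)
    have h4 : (26 * q * Λ) ^ 6 ≤ R ^ 4 := by
      calc (26 * q * Λ) ^ 6 = ((26 * q * Λ) ^ 3) ^ 2 := by ring
        _ ≤ (R ^ 2) ^ 2 := by gcongr
        _ = _ := by ring
    have h5 : ((13 * q * Λ) ^ 2) ^ 3 ≤ (2 * s) ^ 3 := by
      have : 64 * ((13 * q * Λ) ^ 2) ^ 3 ≤ 64 * (2 * s) ^ 3 := by
        calc 64 * ((13 * q * Λ) ^ 2) ^ 3 = (26 * q * Λ) ^ 6 := by ring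
          _ ≤ 128 * s ^ 3 := h4.trans h3
          _ ≤ 64 * (2 * s) ^ 3 := by
            have : 64 * (2 * s) ^ 3 = 512 * s ^ 3 := by ring
            omega
      omega
    exact (Nat.pow_le_pow_iff_left (by norm_num)).1 h5

theorem base {n q R Λ : ℕ} (hR : 1 ≤ R) (hΛ : n < 2 ^ Λ) (hΛ1 : 1 ≤ Λ)
    (hq : (26 * q * Λ) ^ 3 ≤ R ^ 2) :
    SubAt n q 18 (30 * R * Λ) := by
  classical
  intro V _ G S hV hS
  obtain ⟨P⟩ := pack_exists G R Λ hR (by omega)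
  obtain ⟨f, d, m, a, hch⟩ := chains P
  let Large : V → Prop := fun c => 2 * P.s c < (2 * (2 * P.s c / R)) ^ 4
  obtain ⟨H1, hH1, hH1e, hH1w⟩ := inner hR P 2 (fun _ => 0) (fun c => ¬ Large c)
    (fun c hc _ => subAt_ce (by simpa [Large] using hc))
  let vis : V × V → Finset V := fun p => (range (m p + 1)).image (fun t => P.home (f p (a p t)))
  let En : Finset (V × V) → V → Finset V := fun D c =>
    S.filter (fun x => ∃ p ∈ D, (x = p.1 ∨ x = p.2) ∧ c ∈ vis p)
  let Inv : Finset (V × V) → Prop := fun D => ∀ c, Large c →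
    (D.filter (fun p => c ∈ vis p)).card ≤ (En D c).card
  let SS : Finset (V × V) := (S ×ˢ S).filter (fun p => ∃ k, Wk G k p.1 p.2)
  obtain ⟨D, hD, hDmax⟩ := exists_max_image (SS.powerset.filter Inv) Finset.card
    ⟨∅, by simp [Inv]⟩
  rw [mem_filter, mem_powerset] at hD
  obtain ⟨hDS, hDI⟩ := hD
  -- demand pairs
  let dem : V → Finset (V × V) := fun c => (D.filter (fun p => c ∈ vis p)).biUnion (fun p =>
    ((range (m p + 1)).filter (fun t => P.home (f p (a p t)) = c)).image
      (fun t => (f p (a p t), f p (a p (t + 1)))))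
  have hdem : ∀ c, Large c → (dem c).card ≤ 13 * q * Λ := by
    intro c hc
    calc (dem c).card ≤ (D.filter (fun p => c ∈ vis p)).card * (12 * Λ + 1) := by
          apply card_biUnion_le_card_mul
          intro p hp
          have hp' := hch p (mem_filter.1 (hDS (mem_filter.1 hp).1)).2
          exact card_image_le.trans (hp'.2.2.2.2.mult hp'.1 c)
      _ ≤ q * (12 * Λ + 1) := by
          gcongr
          exact (hDI c hc).trans ((card_filter_le _ _).trans hS)
      _ ≤ q * (13 * Λ) := by gcongr; omega
      _ = _ := by ring
  have hper : ∀ c, ∃ H : SimpleGraph V, H ≤ G ∧ ec H ≤ 2 * P.s c ∧ (Large c → ∀ p ∈ dem c, ∀ k,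
      Wk (loc G (P.W c)) k p.1 p.2 → Wk H k p.1 p.2) := by
    intro c
    by_cases hc : Large c
    · obtain ⟨H, h1, h2, h3⟩ := ce (loc G (P.W c)) (P.W c) (fun _ _ h => h.2.2) (dem c)
      refine ⟨H, h1.trans (loc_le _ _), ?_, fun _ => h3⟩
      have hW := P.W_le c
      rcases h2 with h2 | h2
      · omega
      · have h4 := base_num hq hc
        have h5 : ec H ^ 2 ≤ (2 * P.s c) ^ 2 := by
          calc ec H ^ 2 ≤ 2 * ((P.W c).card * (dem c).card ^ 2) := h2
            _ ≤ 2 * (P.s c * (13 * q * Λ) ^ 2) := by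
              have := hdem c hc
              gcongr
            _ ≤ 2 * (P.s c * (2 * P.s c)) := by gcongr
            _ = (2 * P.s c) ^ 2 := by ring
        exact (Nat.pow_le_pow_iff_left (by norm_num)).1 h5
    · exact ⟨⊥, bot_le, by rw [ec_bot]; omega, fun h => absurd h hc⟩
  choose H2 hH2 hH2e hH2w using hper
  let H := P.F ⊔ H1 ⊔ univ.sup H2
  have hFH : P.F ≤ H := le_sup_left.trans le_sup_left
  have hseg : ∀ p ∈ D, ∀ t, 1 ≤ t → t < m p →
      Wk H (a p (t + 1) - a p t + 0) (f p (a p t)) (f p (a p (t + 1))) := by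
    intro p hp t ht1 htm
    obtain ⟨hg, h0, hd, ha0, hc⟩ := hch p (mem_filter.1 (hDS hp)).2
    have hw := hc.wk_loc hg htm
    by_cases hl : Large (P.home (f p (a p t)))
    · refine (hH2w _ hl (f p (a p t), f p (a p (t + 1))) ?_ _ hw).graph_mono
        ((Finset.le_sup (f := H2) (mem_univ _)).trans le_sup_right)
      refine mem_biUnion.2 ⟨p, mem_filter.2 ⟨hp, mem_image.2 ⟨t, mem_range.2 (by omega), rfl⟩⟩, ?_⟩
      exact mem_image.2 ⟨t, mem_filter.2 ⟨mem_range.2 (by omega), rfl⟩, rfl⟩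
    · refine (hH1w _ hl _ _ rfl ?_ (hc.bd t htm) _ hw).graph_mono
        (le_sup_right.trans le_sup_left)
      have := hc.bd (t - 1) (by omega)
      rw [show t - 1 + 1 = t by omega] at this
      exact ⟨_, this⟩
  -- good endpoints
  have hgood : ∀ p ∈ D, ∀ c ∈ vis p, ∀ x, (x = p.1 ∨ x = p.2) → ∀ k, Wk G k x c →
      Wk H (k + 12 * R * Λ) x c := by
    intro p hp c hcv x hx k hk
    obtain ⟨hg, h0, hd, ha0, hc⟩ := hch p (mem_filter.1 (hDS hp)).2
    obtain ⟨t, ht, rfl⟩ := mem_image.1 hcv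
    rw [mem_range] at ht
    have hr := (P.rad _ _ (P.mem (f p (a p t)))).graph_mono P.F_le
    have hle := hc.le t (by omega)
    have e12 : 12 * R * Λ = 9 * R * Λ + 3 * R * Λ := by ring
    rcases hx with rfl | rfl
    · have h1 := hc.start_to_center hFH (fun _ => 0) (j := t) (by omega)
        (fun t' h1 h2 => hseg p hp t' h1 (by omega))
      rw [ha0, h0] at h1
      rw [← h0] at hk
      have := hg.le (Nat.zero_le _) hle (hk.trans hr)
      refine h1.mono ?_
      rw [sum_const_zero]
      omega
    · have h1 := hc.center_to_end hFH (fun _ => 0) (i := t) (by omega)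
        (fun t' h1 h2 => hseg p hp t' (by omega) h2)
      rw [hd] at h1
      rw [← hd] at hk
      have := hg.le hle le_rfl (hr.symm.trans hk.symm)
      refine h1.symm.mono ?_
      rw [sum_const_zero]
      omega
  refine ⟨H, ?_, ?_, ?_⟩
  · exact sup_le (sup_le P.F_le hH1) (Finset.sup_le (fun c _ => hH2 c))
  · have e1 : ec H ≤ ec P.F + ec H1 + ec (univ.sup H2) :=
      (ec_sup_le _ _).trans (Nat.add_le_add_right (ec_sup_le _ _) _)
    have e2 : ec (univ.sup H2) ≤ 4 * Fintype.card V := by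
      calc _ ≤ ∑ c, ec (H2 c) := ec_sup_finset _ _
        _ ≤ ∑ c, 2 * P.s c := sum_le_sum (fun c _ => hH2e c)
        _ = 2 * ∑ c, P.s c := by rw [mul_sum]
        _ ≤ _ := by have := P.s_sum; omega
    have e3 := P.F_ec
    omega
  · intro u hu v hv k hk
    have hreach : ∃ k, Wk G k ((u, v) : V × V).1 ((u, v) : V × V).2 := ⟨k, hk⟩
    have hp : (u, v) ∈ SS := mem_filter.2 ⟨mem_product.2 ⟨hu, hv⟩, hreach⟩
    obtain ⟨hg, h0, hd, ha0, hc⟩ := hch (u, v) hreach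
    simp only at h0 hd
    have hdk : d (u, v) ≤ k := hg.short k (by rw [h0, hd]; exact hk)
    -- a common good cluster
    have hex : ∃ c ∈ vis (u, v), (∃ p ∈ D, (u = p.1 ∨ u = p.2) ∧ c ∈ vis p) ∧
        (∃ p ∈ D, (v = p.1 ∨ v = p.2) ∧ c ∈ vis p) := by
      by_cases hpD : (u, v) ∈ D
      · have : P.home (f (u, v) (a (u, v) 0)) ∈ vis (u, v) :=
          mem_image.2 ⟨0, mem_range.2 (by omega), rfl⟩
        exact ⟨_, this, ⟨_, hpD, Or.inl rfl, this⟩, ⟨_, hpD, Or.inr rfl, this⟩⟩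
      · have hnot : ¬ Inv (insert (u, v) D) := by
          intro hI
          have := hDmax (insert (u, v) D)
            (mem_filter.2 ⟨mem_powerset.2 (insert_subset hp hDS), hI⟩)
          rw [card_insert_of_notMem hpD] at this
          omega
        simp only [Inv] at hnot
        push Not at hnot
        obtain ⟨c, hcl, hlt⟩ := hnot
        have hEn : En D c ⊆ En (insert (u, v) D) c := by
          intro x hx
          obtain ⟨hx1, p, hp1, hp2⟩ := mem_filter.1 hx
          exact mem_filter.2 ⟨hx1, p, mem_insert_of_mem hp1, hp2⟩
        have hcv : c ∈ vis (u, v) := by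
          by_contra hn
          rw [filter_insert, if_neg hn] at hlt
          have := hDI c hcl
          have := card_le_card hEn
          omega
        have hcard : ((insert (u, v) D).filter (fun p => c ∈ vis p)).card ≤
            (D.filter (fun p => c ∈ vis p)).card + 1 := by
          rw [filter_insert, if_pos hcv]
          exact card_insert_le _ _
        have hin : ∀ x, x ∈ S → (x = u ∨ x = v) → x ∈ En D c := by
          intro x hxS hx
          by_contra hn
          have hsub : insert x (En D c) ⊆ En (insert (u, v) D) c := by
            refine insert_subset (mem_filter.2 ⟨hxS, (u, v), mem_insert_self _ _, hx, hcv⟩) hEn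
          have h1 := card_le_card hsub
          rw [card_insert_of_notMem hn] at h1
          have := hDI c hcl
          omega
        exact ⟨c, hcv, (mem_filter.1 (hin u hu (Or.inl rfl))).2,
          (mem_filter.1 (hin v hv (Or.inr rfl))).2⟩
    obtain ⟨c, hcv, ⟨p1, hp1, hx1, hc1⟩, ⟨p2, hp2, hx2, hc2⟩⟩ := hex
    obtain ⟨t, ht, rfl⟩ := mem_image.1 hcv
    rw [mem_range] at ht
    have hr := (P.rad _ _ (P.mem (f (u, v) (a (u, v) t)))).graph_mono P.F_le
    have hle := hc.le t (by omega)
    have hw1 := (hg.wk (Nat.zero_le _) hle).trans hr.symm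
    have hw2 := (hg.wk hle le_rfl).symm.trans hr.symm
    rw [h0] at hw1
    have hw2' := ((hr.trans (hg.wk hle le_rfl)).symm)
    rw [hd] at hw2'
    have hA := hgood p1 hp1 _ hc1 u hx1 _ hw1
    have hB := hgood p2 hp2 _ hc2 v hx2 _ hw2'
    refine (hA.trans hB.symm).mono ?_
    have : 30 * R * Λ = 3 * R * Λ + 12 * R * Λ + 3 * R * Λ + 12 * R * Λ := by ring
    omega


theorem hit_one {V : Type} [Fintype V] [DecidableEq V] (s : V → ℕ) (T L : ℕ) (hT : ∑ c, s c ≤ T)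
    (𝓕 : Finset (Finset V)) (hF : ∀ A ∈ 𝓕, L ≤ ∑ c ∈ A, s c) (hne : 0 < L * 𝓕.card) :
    ∃ c, L * 𝓕.card ≤ T * (𝓕.filter (fun A => c ∈ A)).card := by
  by_contra hcon
  push Not at hcon
  have h1 : L * 𝓕.card ≤ ∑ c, s c * (𝓕.filter (fun A => c ∈ A)).card := by
    calc L * 𝓕.card = ∑ A ∈ 𝓕, L := by rw [sum_const, smul_eq_mul, mul_comm]
      _ ≤ ∑ A ∈ 𝓕, ∑ c ∈ A, s c := sum_le_sum hF
      _ = ∑ A ∈ 𝓕, ∑ c, if c ∈ A then s c else 0 := by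
        refine sum_congr rfl (fun A _ => ?_)
        rw [← sum_filter]
        congr 1
        ext; simp
      _ = ∑ c, ∑ A ∈ 𝓕, if c ∈ A then s c else 0 := sum_comm
      _ = _ := by
        refine sum_congr rfl (fun c _ => ?_)
        rw [← sum_filter, sum_const, smul_eq_mul, mul_comm]
  have h3 : T * (L * 𝓕.card) ≤ ∑ c, s c * (T * (𝓕.filter (fun A => c ∈ A)).card) := by
    calc T * (L * 𝓕.card) ≤ T * ∑ c, s c * (𝓕.filter (fun A => c ∈ A)).card := by gcongr
      _ = _ := by rw [mul_sum]; exact sum_congr rfl (fun c _ => by ring)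
  have h4 : ∑ c, s c * (T * (𝓕.filter (fun A => c ∈ A)).card) ≤ ∑ c, s c * (L * 𝓕.card - 1) :=
    sum_le_sum (fun c _ => Nat.mul_le_mul_left _ (by have := hcon c; omega))
  rw [← sum_mul] at h4
  have h5 : (∑ c, s c) * (L * 𝓕.card - 1) ≤ T * (L * 𝓕.card - 1) := Nat.mul_le_mul_right _ hT
  have h6 : T * (L * 𝓕.card) ≤ T * (L * 𝓕.card - 1) := h3.trans (h4.trans h5)
  have hT0 : 0 < T := by
    by_contra h0
    have h0 : ∑ c, s c = 0 := by omega
    have h7 : ∑ c, s c * (𝓕.filter (fun A => c ∈ A)).card = 0 := by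
      rw [sum_eq_zero_iff] at h0 ⊢
      intro c hc
      rw [h0 c hc, zero_mul]
    omega
  have := Nat.le_of_mul_le_mul_left h6 hT0
  omega

theorem hit_half {V : Type} [Fintype V] [DecidableEq V] (s : V → ℕ) (T L : ℕ) (hL : 1 ≤ L)
    (hT : ∑ c, s c ≤ T)
    (𝓕 : Finset (Finset V)) (hF : ∀ A ∈ 𝓕, L ≤ ∑ c ∈ A, s c) (k : ℕ) :
    ∃ S : Finset V, S.card ≤ k ∧ (2 * (𝓕.filter (fun A => Disjoint A S)).card ≤ 𝓕.card ∨
      k * (L * 𝓕.card) + 2 * T * (𝓕.filter (fun A => Disjoint A S)).card ≤ 2 * T * 𝓕.card) := by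
  induction k with
  | zero => exact ⟨∅, by simp, by simp⟩
  | succ k ih =>
    obtain ⟨S, hS, h⟩ := ih
    by_cases h2 : 2 * (𝓕.filter (fun A => Disjoint A S)).card ≤ 𝓕.card
    · exact ⟨S, by omega, Or.inl h2⟩
    have h := h.resolve_left h2
    set 𝓖 := 𝓕.filter (fun A => Disjoint A S) with hG
    have hpos : 0 < L * 𝓖.card := Nat.mul_pos (by omega) (by omega)
    obtain ⟨c, hc⟩ := hit_one s T L hT 𝓖 (fun A hA => hF A (mem_filter.1 hA).1) hpos
    refine ⟨insert c S, (card_insert_le _ _).trans (by omega), Or.inr ?_⟩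
    have hsplit : (𝓕.filter (fun A => Disjoint A (insert c S))).card +
        (𝓖.filter (fun A => c ∈ A)).card ≤ 𝓖.card := by
      have h1 := card_filter_add_card_filter_not (s := 𝓖) (fun A => c ∈ A)
      have h2 : 𝓕.filter (fun A => Disjoint A (insert c S)) ⊆ 𝓖.filter (fun A => ¬ c ∈ A) := by
        intro A hA
        rw [mem_filter, disjoint_insert_right] at hA
        exact mem_filter.2 ⟨mem_filter.2 ⟨hA.1, hA.2.2⟩, hA.2.1⟩
      have := card_le_card h2
      omega
    have h5 : L * 𝓕.card ≤ 2 * (L * 𝓖.card) := by nlinarith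
    have h6 : 2 * T * ((𝓕.filter (fun A => Disjoint A (insert c S))).card +
        (𝓖.filter (fun A => c ∈ A)).card) ≤ 2 * T * 𝓖.card := Nat.mul_le_mul_left _ hsplit
    nlinarith

theorem hitting {V : Type} [Fintype V] [DecidableEq V] (s : V → ℕ) (T L : ℕ) (hL : 1 ≤ L)
    (hT : ∑ c, s c ≤ T) (b : ℕ) :
    ∀ 𝓕 : Finset (Finset V), (∀ A ∈ 𝓕, L ≤ ∑ c ∈ A, s c) → 𝓕.card < 2 ^ b →
    ∃ S : Finset V, S.card ≤ b * (T / L + 1) ∧ ∀ A ∈ 𝓕, ∃ c ∈ A, c ∈ S := by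
  induction b with
  | zero =>
    intro 𝓕 _ h
    have : 𝓕 = ∅ := by
      rw [pow_zero] at h
      rw [← card_eq_zero]; omega
    subst this
    exact ⟨∅, by simp, by simp⟩
  | succ b ih =>
    intro 𝓕 hF hcard
    obtain ⟨S, hS, h⟩ := hit_half s T L hL hT 𝓕 hF (T / L + 1)
    have hk : T < (T / L + 1) * L := by
      have := Nat.lt_div_mul_add (a := T) (b := L) (by omega)
      rw [Nat.add_mul, one_mul]; exact this
    have hhalf : 2 * (𝓕.filter (fun A => Disjoint A S)).card ≤ 𝓕.card := by
      rcases h with h | h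
      · exact h
      · by_contra hn
        push Not at hn
        have h1 : T * 𝓕.card ≤ T * (2 * (𝓕.filter (fun A => Disjoint A S)).card) :=
          Nat.mul_le_mul_left _ hn.le
        have hc : 0 < 𝓕.card := by
          have := card_filter_le 𝓕 (fun A => Disjoint A S)
          omega
        have h2 : T * 𝓕.card < (T / L + 1) * L * 𝓕.card := Nat.mul_lt_mul_of_pos_right hk hc
        nlinarith
    obtain ⟨S', hS', hS'2⟩ := ih (𝓕.filter (fun A => Disjoint A S))
      (fun A hA => hF A (mem_filter.1 hA).1) (by rw [pow_succ] at hcard; omega)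
    refine ⟨S ∪ S', (card_union_le _ _).trans (by rw [Nat.add_mul b, one_mul]; omega), ?_⟩
    intro A hA
    by_cases hd : Disjoint A S
    · obtain ⟨c, h1, h2⟩ := hS'2 A (mem_filter.2 ⟨hA, hd⟩)
      exact ⟨c, h1, mem_union_right _ h2⟩
    · rw [not_disjoint_iff] at hd
      obtain ⟨c, h1, h2⟩ := hd
      exact ⟨c, h1, mem_union_left _ h2⟩

theorem step {n R Λ K A L E q : ℕ} (hR : 1 ≤ R) (hΛ : n < 2 ^ Λ) (hΛ1 : 1 ≤ Λ) (hL : 1 ≤ L)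
    (h1 : ∀ s, s ≤ n → R ≤ 2 * s → ∃ e, SubAt s (2 * (2 * s / R)) K e ∧ e * L ≤ A * R * s)
    (h2 : SubAt n q K E) (hq : 4 * Λ * (2 * n / L + 1) ≤ q) :
    SubAt n n (7 * K + 2) (24 * R * Λ + 26 * Λ * A * R + E) := by
  classical
  intro V _ G S0 hV _
  obtain ⟨P⟩ := pack_exists G R Λ hR (by omega)
  obtain ⟨f, d, m, a, hch⟩ := chains P
  have h1' : ∀ c, ∃ e, (R ≤ 2 * P.s c → SubAt (P.s c) (2 * (2 * P.s c / R)) K e) ∧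
      e * L ≤ A * R * P.s c := by
    intro c
    by_cases hc : R ≤ 2 * P.s c
    · obtain ⟨e, he, he'⟩ := h1 (P.s c) ((P.s_le c).trans hV) hc
      exact ⟨e, fun _ => he, he'⟩
    · exact ⟨0, fun h => absurd h hc, by simp⟩
  choose e he1 he2 using h1'
  obtain ⟨H1, hH1, hH1e, hH1w⟩ := inner hR P K e (fun _ => True) (fun c _ h => he1 c h)
  let cc : V × V → ℕ → V := fun p t => P.home (f p (a p t))
  let 𝓕 : Finset (Finset V) :=
    ((univ ×ˢ (range n ×ˢ range n) : Finset ((V × V) × (ℕ × ℕ))).image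
      (fun x => (Ico x.2.1 x.2.2).image (cc x.1))).filter (fun A => L ≤ ∑ c ∈ A, P.s c)
  have hFc : 𝓕.card < 2 ^ (4 * Λ) := by
    calc 𝓕.card ≤ _ := card_filter_le _ _
      _ ≤ _ := card_image_le
      _ = Fintype.card V * Fintype.card V * (n * n) := by
        rw [card_product, card_product, card_range, card_univ, Fintype.card_prod]
      _ ≤ n * n * (n * n) := by gcongr
      _ = n ^ 4 := by ring
      _ < (2 ^ Λ) ^ 4 := Nat.pow_lt_pow_left hΛ (by norm_num)
      _ = _ := by rw [← pow_mul, mul_comm]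
  obtain ⟨S, hS, hhit⟩ := hitting P.s (2 * n) L hL (P.s_sum.trans (by omega)) (4 * Λ) 𝓕
    (fun A hA => (mem_filter.1 hA).2) hFc
  obtain ⟨H2, hH2, hH2e, hH2w⟩ := h2 V G S hV (hS.trans hq)
  let H := P.F ⊔ H1 ⊔ H2
  have hFH : P.F ≤ H := le_sup_left.trans le_sup_left
  refine ⟨H, sup_le (sup_le P.F_le hH1) hH2, ?_, ?_⟩
  · have e1 : ec H ≤ ec P.F + ec H1 + ec H2 :=
      (ec_sup_le _ _).trans (Nat.add_le_add_right (ec_sup_le _ _) _)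
    have e3 := P.F_ec
    have e4 : 6 * K * Fintype.card V ≤ 6 * K * n := by gcongr
    have e5 : (7 * K + 2) * n = 6 * K * n + K * n + 2 * n := by ring
    omega
  · intro u _ v _ k hk
    have hreach : ∃ k, Wk G k ((u, v) : V × V).1 ((u, v) : V × V).2 := ⟨k, hk⟩
    obtain ⟨hg, h0, hd, ha0, hc⟩ := hch (u, v) hreach
    simp only at h0 hd
    have hdk : d (u, v) ≤ k := hg.short k (by rw [h0, hd]; exact hk)
    have hmn : m (u, v) < n := by
      have := hc.m_le
      have := hg.lt_card
      omega
    have hmult := hc.mult hg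
    have hseg : ∀ t, 1 ≤ t → t < m (u, v) →
        Wk H (a (u, v) (t + 1) - a (u, v) t + e (cc (u, v) t)) (f (u, v) (a (u, v) t))
          (f (u, v) (a (u, v) (t + 1))) := by
      intro t ht1 htm
      have hw := hc.wk_loc hg htm
      refine (hH1w _ trivial _ _ rfl ?_ (hc.bd t htm) _ hw).graph_mono
        (le_sup_right.trans le_sup_left)
      have := hc.bd (t - 1) (by omega)
      rw [show t - 1 + 1 = t by omega] at this
      exact ⟨_, this⟩
    have hsum : ∀ i j, j ≤ m (u, v) → (∀ t, i ≤ t → t < j → cc (u, v) t ∉ S) →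
        ∑ t ∈ Ico i j, e (cc (u, v) t) ≤ 13 * Λ * A * R := by
      intro i j hj hno
      by_cases hij : i < n
      swap
      · rw [Ico_eq_empty (by omega)]; simp
      set B := (Ico i j).image (cc (u, v)) with hB
      have hw : ∑ c ∈ B, P.s c < L := by
        by_contra hn
        push Not at hn
        have hjn : j < n := by omega
        obtain ⟨c, hc1, hc2⟩ := hhit B (mem_filter.2 ⟨mem_image.2 ⟨((u, v), (i, j)),
          mem_product.2 ⟨mem_univ _, mem_product.2 ⟨mem_range.2 hij, mem_range.2 hjn⟩⟩, rfl⟩, hn⟩)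
        obtain ⟨t, ht, rfl⟩ := mem_image.1 hc1
        rw [mem_Ico] at ht
        exact hno t ht.1 ht.2 hc2
      have hX : ∑ c ∈ B, e c ≤ A * R := by
        have h3 : L * ∑ c ∈ B, e c ≤ L * (A * R) := by
          calc L * ∑ c ∈ B, e c = ∑ c ∈ B, e c * L := by rw [mul_comm, sum_mul]
            _ ≤ ∑ c ∈ B, A * R * P.s c := sum_le_sum (fun c _ => he2 c)
            _ = A * R * ∑ c ∈ B, P.s c := by rw [mul_sum]
            _ ≤ A * R * L := by gcongr
            _ = _ := by ring
        exact Nat.le_of_mul_le_mul_left h3 (by omega)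
      calc ∑ t ∈ Ico i j, e (cc (u, v) t)
          = ∑ c ∈ B, ((Ico i j).filter (fun t => cc (u, v) t = c)).card * e c := by
            rw [sum_comp e (cc (u, v))]; rfl
        _ ≤ ∑ c ∈ B, (13 * Λ) * e c := by
            refine sum_le_sum (fun c _ => Nat.mul_le_mul_right _ ?_)
            refine (card_le_card ?_).trans ((hmult c).trans (by omega : 12 * Λ + 1 ≤ 13 * Λ))
            intro t ht
            rw [mem_filter, mem_Ico] at ht
            exact mem_filter.2 ⟨mem_range.2 (by omega), ht.2⟩
        _ = 13 * Λ * ∑ c ∈ B, e c := by rw [mul_sum]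
        _ ≤ 13 * Λ * (A * R) := by gcongr
        _ = _ := by ring
    have e24 : 24 * R * Λ = 8 * (3 * R * Λ) := by ring
    have e9 : 9 * R * Λ = 3 * (3 * R * Λ) := by ring
    have e26 : 26 * Λ * A * R = 2 * (13 * Λ * A * R) := by ring
    by_cases hex : ∃ t, t ≤ m (u, v) ∧ cc (u, v) t ∈ S
    · have hi := Nat.find_spec hex
      have himin : ∀ t, t < Nat.find hex → cc (u, v) t ∉ S := by
        intro t ht hS
        have := hi.1
        exact Nat.find_min hex ht ⟨by omega, hS⟩
      obtain ⟨i0, hi0⟩ : ∃ i0, i0 = Nat.find hex := ⟨_, rfl⟩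
      rw [← hi0] at hi himin
      obtain ⟨j0, hj0, hjmax⟩ := exists_max_image ((range (m (u, v) + 1)).filter
        (fun t => cc (u, v) t ∈ S)) id ⟨i0, mem_filter.2 ⟨mem_range.2 (by omega), hi.2⟩⟩
      rw [mem_filter, mem_range] at hj0
      have hij : i0 ≤ j0 := hjmax i0 (mem_filter.2 ⟨mem_range.2 (by omega), hi.2⟩)
      have hjno : ∀ t, j0 + 1 ≤ t → t < m (u, v) → cc (u, v) t ∉ S := by
        intro t ht htm hS
        have : t ≤ j0 := hjmax t (mem_filter.2 ⟨mem_range.2 (by omega), hS⟩)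
        omega
      have w1 := hc.start_to_center hFH (fun t => e (cc (u, v) t)) (j := i0) hi.1
        (fun t h1 h2 => hseg t h1 (by have := hi.1; omega))
      have w3 := hc.center_to_end hFH (fun t => e (cc (u, v) t)) (i := j0) (by omega)
        (fun t h1 h2 => hseg t (by omega) h2)
      have hm := hc.mono' hij (by omega)
      have hmd := hc.le j0 (by omega)
      have r1 := (P.rad _ _ (P.mem (f (u, v) (a (u, v) i0)))).graph_mono P.F_le
      have r2 := (P.rad _ _ (P.mem (f (u, v) (a (u, v) j0)))).graph_mono P.F_le
      have w2 := hH2w _ hi.2 _ hj0.2 _ ((r1.trans (hg.wk hm hmd)).trans r2.symm)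
      have s1 := hsum 1 i0 hi.1 (fun t _ h2 => himin t h2)
      have s2 := hsum (j0 + 1) (m (u, v)) le_rfl hjno
      rw [ha0, h0] at w1
      rw [hd] at w3
      refine ((w1.trans (w2.graph_mono le_sup_right)).trans w3).mono ?_
      omega
    · push Not at hex
      have w1 := (P.rad _ _ (P.mem (f (u, v) (a (u, v) 0)))).graph_mono hFH
      have w3 := hc.center_to_end hFH (fun t => e (cc (u, v) t)) (i := 0) (by omega)
        (fun t h1 h2 => hseg t (by omega) h2)
      have s2 := hsum (0 + 1) (m (u, v)) le_rfl (fun t _ h2 => hex t (by omega))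
      have w := w1.symm.trans w3
      rw [ha0, h0, hd] at w
      refine w.mono ?_
      omega


theorem SubAt.anyq {m K e : ℕ} (h : SubAt m m K e) (q : ℕ) : SubAt m q K e := by
  intro V _ G S hV _
  exact h V G S hV ((card_le_univ S).trans hV)

def Full (ρ : ℝ) : Prop := ∃ K C : ℕ, ∀ m : ℕ, 1 ≤ m → SubAt m m K ⌊(C : ℝ) * (m : ℝ) ^ ρ⌋₊

theorem full_one : Full 1 := by
  classical
  refine ⟨1, 2, fun m _ => ?_⟩
  intro V _ G S hV _
  let rep : V → V := fun x => (G.connectedComponentMk x).out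
  have hrep : ∀ x, G.Reachable (rep x) x := by
    intro x
    exact SimpleGraph.ConnectedComponent.exact (Quot.out_eq _)
  let W : V → Finset V := fun c => univ.filter (fun x => rep x = c)
  have hconn : ∀ c, ∀ y ∈ W c, Wk (loc G (W c)) m c y := by
    intro c y hy
    have hyc : rep y = c := (mem_filter.1 hy).2
    obtain ⟨p⟩ := hrep y
    obtain ⟨f, d, hg, h0, hd, -⟩ := Geo.exists_of_wk (⟨p, le_rfl⟩ : Wk G p.length (rep y) y)
    have hd2 := hg.lt_card
    have hmem : ∀ i, i ≤ d → f i ∈ W c := by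
      intro i hi
      refine mem_filter.2 ⟨mem_univ _, ?_⟩
      rw [← hyc]
      obtain ⟨q, -⟩ := hg.wk hi le_rfl
      rw [hd] at q
      have : G.connectedComponentMk (f i) = G.connectedComponentMk y :=
        SimpleGraph.ConnectedComponent.sound ⟨q⟩
      simp only [rep, this]
    have := Wk.of_fun (G := loc G (W c)) f (Nat.zero_le d)
      (fun i _ hi => ⟨hg.adj i hi, hmem i (by omega), hmem (i + 1) (by omega)⟩)
    rw [h0, hd, hyc] at this
    exact this.mono (by omega)
  choose T hT1 hT2 hT3 using fun c => tree G (W c) c m (hconn c)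
  refine ⟨univ.sup T, Finset.sup_le (fun c _ => hT1 c), ?_, ?_⟩
  · calc ec (univ.sup T) ≤ ∑ c, ec (T c) := ec_sup_finset _ _
      _ ≤ ∑ c, (W c).card := sum_le_sum (fun c _ => hT2 c)
      _ = (univ : Finset V).card :=
        (card_eq_sum_card_fiberwise (f := rep) (s := univ) (t := univ) (fun x _ => mem_univ _)).symm
      _ ≤ 1 * m := by rw [card_univ]; omega
  · intro u _ v _ k hk
    obtain ⟨p, -⟩ := hk
    have : G.connectedComponentMk u = G.connectedComponentMk v :=
      SimpleGraph.ConnectedComponent.sound ⟨p⟩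
    have hu : u ∈ W (rep v) := mem_filter.2 ⟨mem_univ _, by simp only [rep, this]⟩
    have hv : v ∈ W (rep v) := mem_filter.2 ⟨mem_univ _, rfl⟩
    have w := ((hT3 _ u hu).symm.trans (hT3 _ v hv)).graph_mono
      (Finset.le_sup (f := T) (mem_univ (rep v)))
    refine w.mono ?_
    have : ⌊((2 : ℕ) : ℝ) * (m : ℝ) ^ (1 : ℝ)⌋₊ = 2 * m := by
      rw [Real.rpow_one, ← Nat.cast_mul, Nat.floor_natCast]
    omega

theorem small_case {s R L Λ : ℕ} (hR : 1 ≤ R) (hRs : R ≤ 2 * s) (hΛ1 : 1 ≤ Λ) (hs : s < 2 ^ Λ)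
    (hkey : (s : ℝ) * (L : ℝ) ^ 2 ≤ 4 * (R : ℝ) ^ 5) :
    ∃ e, SubAt s (2 * (2 * s / R)) 18 e ∧ e * L ≤ 131040 * Λ ^ 3 * R * s := by
  have hRr : (1 : ℝ) ≤ R := by exact_mod_cast hR
  have hΛr : (1 : ℝ) ≤ Λ := by exact_mod_cast hΛ1
  have hRs' : (R : ℝ) ≤ 2 * s := by exact_mod_cast hRs
  have hLr : (0 : ℝ) ≤ L := Nat.cast_nonneg _
  set t : ℝ := 104 * Λ * (s / R) with ht
  have hz : (1 : ℝ) / 2 ≤ (s : ℝ) / R := by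
    rw [le_div_iff₀ (by linarith)]; linarith
  have ht1 : 1 ≤ t := by rw [ht]; nlinarith
  have hst : 1 ≤ Real.sqrt t := by rw [Real.one_le_sqrt]; exact ht1
  have hsq : Real.sqrt t * Real.sqrt t = t := Real.mul_self_sqrt (by linarith)
  set Rs := ⌈t * Real.sqrt t⌉₊ with hRs0
  have h1 : t * Real.sqrt t ≤ Rs := Nat.le_ceil _
  have hts : 1 ≤ t * Real.sqrt t := by nlinarith
  have h2 : (Rs : ℝ) ≤ 2 * (t * Real.sqrt t) := by
    have := Nat.ceil_lt_add_one (show 0 ≤ t * Real.sqrt t by linarith)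
    linarith
  have hRs1 : 1 ≤ Rs := by
    have : (1 : ℝ) ≤ Rs := by linarith
    exact_mod_cast this
  refine ⟨30 * Rs * Λ, base hRs1 hs hΛ1 ?_, ?_⟩
  · have hq : ((2 * s / R : ℕ) : ℝ) ≤ 2 * (s / R) := by
      have := Nat.cast_div_le (α := ℝ) (m := 2 * s) (n := R)
      push_cast at this
      rw [mul_div_assoc] at this
      exact this
    have h3 : ((26 * (2 * (2 * s / R)) * Λ : ℕ) : ℝ) ≤ t := by
      rw [Nat.cast_mul, Nat.cast_mul, Nat.cast_mul, ht]
      push_cast at hq ⊢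
      nlinarith
    have h4 : (((26 * (2 * (2 * s / R)) * Λ) ^ 3 : ℕ) : ℝ) ≤ ((Rs ^ 2 : ℕ) : ℝ) := by
      rw [Nat.cast_pow, Nat.cast_pow]
      calc _ ≤ t ^ 3 := by gcongr
        _ = t ^ 2 * (Real.sqrt t * Real.sqrt t) := by rw [hsq]; exact pow_succ t 2
        _ = (t * Real.sqrt t) ^ 2 := by ring
        _ ≤ _ := by gcongr
    exact_mod_cast h4
  · have h5 : (Real.sqrt t * L) ≤ 21 * Λ * (R : ℝ) ^ 2 := by
      refine abs_le_of_sq_le_sq' ?_ (by positivity) |>.2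
      have : (Real.sqrt t * L) ^ 2 = 104 * Λ * (s * (L : ℝ) ^ 2) / R := by
        rw [mul_pow, pow_two (Real.sqrt t), hsq, ht]; ring
      rw [this, div_le_iff₀ (by linarith)]
      calc 104 * (Λ : ℝ) * (s * (L : ℝ) ^ 2) ≤ 104 * Λ * (4 * (R : ℝ) ^ 5) := by gcongr
        _ = 416 * Λ * (R : ℝ) ^ 5 := by ring
        _ ≤ 441 * (Λ * Λ) * (R : ℝ) ^ 5 := by gcongr <;> nlinarith
        _ = _ := by ring
    have h6 : ((30 * Rs * Λ * L : ℕ) : ℝ) ≤ ((131040 * Λ ^ 3 * R * s : ℕ) : ℝ) := by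
      push_cast
      calc 30 * (Rs : ℝ) * Λ * L ≤ 30 * (2 * (t * Real.sqrt t)) * Λ * L := by gcongr
        _ = 60 * t * Λ * (Real.sqrt t * L) := by ring
        _ ≤ 60 * t * Λ * (21 * Λ * (R : ℝ) ^ 2) := by gcongr
        _ = 131040 * (Λ : ℝ) ^ 3 * R * s := by rw [ht]; field_simp; ring
    exact_mod_cast h6

theorem log_bound (ε : ℝ) (hε : 0 < ε) :
    ∃ c : ℕ, ∀ n : ℕ, 1 ≤ n → ((Nat.log 2 n + 1 : ℕ) : ℝ) ^ 4 ≤ c * (n : ℝ) ^ ε := by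
  set δ := ε / 4 with hδ
  have hδ0 : 0 < δ := by positivity
  obtain ⟨c, hc⟩ := exists_nat_ge ((2 / δ + 1) ^ 4)
  refine ⟨c, fun n hn => ?_⟩
  have hnr : (1 : ℝ) ≤ n := by exact_mod_cast hn
  have h1 : Real.log n ≤ (n : ℝ) ^ δ / δ := Real.log_le_rpow_div (by linarith) hδ0
  have h2 : (Nat.log 2 n : ℝ) * Real.log 2 ≤ Real.log n := by
    rw [← Real.log_pow]
    apply Real.log_le_log (by positivity)
    exact_mod_cast Nat.pow_log_le_self 2 (by omega)
  have h3 : (1 : ℝ) / 2 ≤ Real.log 2 := by have := Real.log_two_gt_d9; linarith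
  have h4 : (Nat.log 2 n : ℝ) ≤ 2 * Real.log n := by
    have : (0 : ℝ) ≤ Nat.log 2 n := Nat.cast_nonneg _
    nlinarith
  have h5 : (1 : ℝ) ≤ (n : ℝ) ^ δ := Real.one_le_rpow hnr hδ0.le
  have h6 : ((Nat.log 2 n + 1 : ℕ) : ℝ) ≤ (2 / δ + 1) * (n : ℝ) ^ δ := by
    push_cast
    have : 2 / δ * (n : ℝ) ^ δ = 2 * ((n : ℝ) ^ δ / δ) := by ring
    rw [add_mul, this]
    linarith
  calc ((Nat.log 2 n + 1 : ℕ) : ℝ) ^ 4 ≤ ((2 / δ + 1) * (n : ℝ) ^ δ) ^ 4 := by gcongr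
    _ = (2 / δ + 1) ^ 4 * (n : ℝ) ^ ε := by
      rw [mul_pow, ← Real.rpow_natCast ((n : ℝ) ^ δ) 4, ← Real.rpow_mul (by linarith)]
      congr 2
      rw [hδ]; push_cast; ring
    _ ≤ _ := by gcongr

theorem ceil_two {x : ℝ} (hx : 1 ≤ x) : x ≤ (⌈x⌉₊ : ℝ) ∧ (⌈x⌉₊ : ℝ) ≤ 2 * x := by
  refine ⟨Nat.le_ceil _, ?_⟩
  have := Nat.ceil_lt_add_one (show 0 ≤ x by linarith)
  linarith

theorem full_step {sig r ρ : ℝ} (hr : 0 < r) (hr1 : r ≤ 1) (hrρ : r < ρ) (hsig : sig ≤ 1)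
    (hcond : 3 - 5 * r ≤ (1 - sig) * (19 * r - 6)) (h : Full sig) : Full ρ := by
  obtain ⟨K, C, hKC⟩ := h
  obtain ⟨c, hc⟩ := log_bound (ρ - r) (by linarith)
  refine ⟨7 * (K + 18) + 2, (2 * (24 + 26 * (131040 + 2 * C) + 30 * 312 ^ 2)) * c, fun n hn => ?_⟩
  have hnr : (1 : ℝ) ≤ n := by exact_mod_cast hn
  have hn0 : (0 : ℝ) < n := by linarith
  set Λ := Nat.log 2 n + 1 with hΛdef
  have hΛ1 : 1 ≤ Λ := by omega
  have hΛ : n < 2 ^ Λ := Nat.lt_pow_succ_log_self (by norm_num) n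
  have hΛr : (1 : ℝ) ≤ Λ := by exact_mod_cast hΛ1
  set lam : ℝ := 1 - 2 * r / 3 with hlam
  obtain ⟨hRl, hRu⟩ := ceil_two (Real.one_le_rpow hnr hr.le)
  obtain ⟨hLl, hLu⟩ := ceil_two (Real.one_le_rpow hnr (show 0 ≤ lam by rw [hlam]; linarith))
  set R := ⌈(n : ℝ) ^ r⌉₊ with hRdef
  set L := ⌈(n : ℝ) ^ lam⌉₊ with hLdef
  have hnr1 : (1 : ℝ) ≤ (n : ℝ) ^ r := Real.one_le_rpow hnr hr.le
  have hR1 : 1 ≤ R := by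
    have : (1 : ℝ) ≤ R := by linarith
    exact_mod_cast this
  have hL0 : (1 : ℝ) ≤ (n : ℝ) ^ lam := Real.one_le_rpow hnr (by rw [hlam]; linarith)
  have hL1 : 1 ≤ L := by
    have : (1 : ℝ) ≤ L := by linarith
    exact_mod_cast this
  -- inner
  have h1 : ∀ s, s ≤ n → R ≤ 2 * s → ∃ e, SubAt s (2 * (2 * s / R)) (K + 18) e ∧
      e * L ≤ (131040 * Λ ^ 3 + 2 * C) * R * s := by
    intro s hsn hRs
    have hs1 : 1 ≤ s := by omega
    have hsr : (1 : ℝ) ≤ s := by exact_mod_cast hs1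
    by_cases hcase : (s : ℝ) ≤ (n : ℝ) ^ (19 * r / 3 - 2)
    · have hkey : (s : ℝ) * (L : ℝ) ^ 2 ≤ 4 * (R : ℝ) ^ 5 := by
        calc (s : ℝ) * (L : ℝ) ^ 2 ≤ (n : ℝ) ^ (19 * r / 3 - 2) * (2 * (n : ℝ) ^ lam) ^ 2 := by
              gcongr
          _ = 4 * ((n : ℝ) ^ r) ^ 5 := by
              rw [mul_pow, ← Real.rpow_natCast ((n : ℝ) ^ lam) 2, ← Real.rpow_mul hn0.le,
                ← Real.rpow_natCast ((n : ℝ) ^ r) 5, ← Real.rpow_mul hn0.le, mul_left_comm,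
                ← Real.rpow_add hn0]
              congr 1
              · norm_num
              · congr 1
                rw [hlam]; push_cast; ring
          _ ≤ _ := by gcongr
      obtain ⟨e, he, he'⟩ := small_case hR1 hRs hΛ1 (lt_of_le_of_lt hsn hΛ) hkey
      refine ⟨e, he.mono le_rfl (by omega) le_rfl, he'.trans ?_⟩
      gcongr
      omega
    · push Not at hcase
      refine ⟨_, ((hKC s hs1).anyq _).mono le_rfl (by omega) le_rfl, ?_⟩
      have hf : (⌊(C : ℝ) * (s : ℝ) ^ sig⌋₊ : ℝ) ≤ (C : ℝ) * (s : ℝ) ^ sig :=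
        Nat.floor_le (by positivity)
      have hpow : (n : ℝ) ^ lam ≤ (n : ℝ) ^ r * (s : ℝ) ^ (1 - sig) := by
        calc (n : ℝ) ^ lam ≤ (n : ℝ) ^ (r + (19 * r / 3 - 2) * (1 - sig)) := by
              apply Real.rpow_le_rpow_of_exponent_le hnr
              rw [hlam]; nlinarith
          _ = (n : ℝ) ^ r * ((n : ℝ) ^ (19 * r / 3 - 2)) ^ (1 - sig) := by
              rw [Real.rpow_add hn0, Real.rpow_mul hn0.le]
          _ ≤ _ := by
              gcongr
      have hfin : ((⌊(C : ℝ) * (s : ℝ) ^ sig⌋₊ * L : ℕ) : ℝ) ≤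
          (((131040 * Λ ^ 3 + 2 * C) * R * s : ℕ) : ℝ) := by
        push_cast
        calc (⌊(C : ℝ) * (s : ℝ) ^ sig⌋₊ : ℝ) * L
            ≤ ((C : ℝ) * (s : ℝ) ^ sig) * (2 * (n : ℝ) ^ lam) := by gcongr
          _ ≤ ((C : ℝ) * (s : ℝ) ^ sig) * (2 * ((n : ℝ) ^ r * (s : ℝ) ^ (1 - sig))) := by gcongr
          _ = 2 * C * (n : ℝ) ^ r * ((s : ℝ) ^ sig * (s : ℝ) ^ (1 - sig)) := by ring
          _ = 2 * C * (n : ℝ) ^ r * s := by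
              rw [← Real.rpow_add (by linarith), show sig + (1 - sig) = 1 by ring, Real.rpow_one]
          _ ≤ (131040 * (Λ : ℝ) ^ 3 + 2 * C) * R * s := by
              gcongr
              have : (0 : ℝ) ≤ 131040 * (Λ : ℝ) ^ 3 := by positivity
              linarith
      exact_mod_cast hfin
  -- base for the hitting set
  have h2 : SubAt n (4 * Λ * (2 * n / L + 1)) (K + 18) (30 * (312 ^ 2 * Λ ^ 3 * R) * Λ) := by
    refine (base (R := 312 ^ 2 * Λ ^ 3 * R) ?_ hΛ hΛ1 ?_).mono le_rfl (by omega) le_rfl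
    · have : 0 < 312 ^ 2 * Λ ^ 3 * R := by positivity
      omega
    · have hd : ((2 * n / L : ℕ) : ℝ) ≤ 2 * (n : ℝ) ^ (2 * r / 3) := by
        have h3 := Nat.cast_div_le (α := ℝ) (m := 2 * n) (n := L)
        refine h3.trans ?_
        rw [div_le_iff₀ (by linarith)]
        push_cast
        calc 2 * (n : ℝ) = 2 * ((n : ℝ) ^ (2 * r / 3) * (n : ℝ) ^ lam) := by
              rw [← Real.rpow_add hn0, hlam, show 2 * r / 3 + (1 - 2 * r / 3) = 1 by ring,
                Real.rpow_one]
          _ ≤ 2 * ((n : ℝ) ^ (2 * r / 3) * L) := by gcongr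
          _ = _ := by ring
      have hn23 : (1 : ℝ) ≤ (n : ℝ) ^ (2 * r / 3) := Real.one_le_rpow hnr (by positivity)
      have h4 : ((26 * (4 * Λ * (2 * n / L + 1)) * Λ : ℕ) : ℝ) ≤
          312 * (Λ : ℝ) ^ 2 * (n : ℝ) ^ (2 * r / 3) := by
        rw [Nat.cast_mul, Nat.cast_mul, Nat.cast_mul, Nat.cast_add]
        push_cast at hd ⊢
        calc _ ≤ 26 * (4 * (Λ : ℝ) * (2 * (n : ℝ) ^ (2 * r / 3) + (n : ℝ) ^ (2 * r / 3))) * Λ := by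
              gcongr
          _ = _ := by ring
      have h5 : (((26 * (4 * Λ * (2 * n / L + 1)) * Λ) ^ 3 : ℕ) : ℝ) ≤
          (((312 ^ 2 * Λ ^ 3 * R) ^ 2 : ℕ) : ℝ) := by
        rw [Nat.cast_pow]
        calc _ ≤ (312 * (Λ : ℝ) ^ 2 * (n : ℝ) ^ (2 * r / 3)) ^ 3 := by gcongr
          _ = 312 ^ 3 * (Λ : ℝ) ^ 6 * ((n : ℝ) ^ (2 * r / 3)) ^ 3 := by ring
          _ = 312 ^ 3 * (Λ : ℝ) ^ 6 * ((n : ℝ) ^ r) ^ 2 := by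
              congr 1
              rw [← Real.rpow_natCast _ 3, ← Real.rpow_natCast _ 2, ← Real.rpow_mul hn0.le,
                ← Real.rpow_mul hn0.le]
              congr 1
              push_cast; ring
          _ ≤ 312 ^ 4 * (Λ : ℝ) ^ 6 * (R : ℝ) ^ 2 := by gcongr <;> norm_num
          _ = _ := by push_cast; ring
      exact_mod_cast h5
  refine (step hR1 hΛ hΛ1 hL1 h1 h2 le_rfl).mono le_rfl le_rfl (Nat.le_floor ?_)
  push_cast
  have hl := hc n hn
  rw [← hΛdef] at hl
  have hp : (Λ : ℝ) ^ 3 ≤ (Λ : ℝ) ^ 4 := pow_le_pow_right₀ hΛr (by norm_num)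
  have hp1 : (Λ : ℝ) ≤ (Λ : ℝ) ^ 4 := le_self_pow₀ hΛr (by norm_num)
  calc 24 * (R : ℝ) * Λ + 26 * Λ * (131040 * (Λ : ℝ) ^ 3 + 2 * C) * R +
        30 * (97344 * (Λ : ℝ) ^ 3 * R) * Λ
      = (24 * Λ + 26 * 131040 * (Λ : ℝ) ^ 4 + 26 * 2 * C * Λ + 2920320 * (Λ : ℝ) ^ 4) * R := by
        ring
    _ ≤ (24 * (Λ : ℝ) ^ 4 + 26 * 131040 * (Λ : ℝ) ^ 4 + 26 * 2 * C * (Λ : ℝ) ^ 4 +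
        2920320 * (Λ : ℝ) ^ 4) * (2 * (n : ℝ) ^ r) := by gcongr
    _ = 2 * (24 + 26 * (131040 + 2 * C) + 2920320) * (Λ : ℝ) ^ 4 * (n : ℝ) ^ r := by ring
    _ ≤ 2 * (24 + 26 * (131040 + 2 * C) + 2920320) * (c * (n : ℝ) ^ (ρ - r)) * (n : ℝ) ^ r := by
        gcongr
    _ = 2 * (24 + 26 * (131040 + 2 * C) + 2920320) * c *
        ((n : ℝ) ^ (ρ - r) * (n : ℝ) ^ r) := by ring
    _ = _ := by rw [← Real.rpow_add hn0, sub_add_cancel]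

theorem full_final : Full 0.403 := by
  have h0 := full_one
  have h1 : Full 0.61 := full_step (r := 0.605) (by norm_num) (by norm_num) (by norm_num)
    (by norm_num) (by norm_num) h0
  have h2 : Full 0.4315 := full_step (r := 0.431) (by norm_num) (by norm_num) (by norm_num)
    (by norm_num) (by norm_num) h1
  have h3 : Full 0.4065 := full_step (r := 0.406) (by norm_num) (by norm_num) (by norm_num)
    (by norm_num) (by norm_num) h2
  have h4 : Full 0.4034 := full_step (r := 0.4032) (by norm_num) (by norm_num) (by norm_num)
    (by norm_num) (by norm_num) h3
  exact full_step (r := 0.4029) (by norm_num) (by norm_num) (by norm_num)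
    (by norm_num) (by norm_num) h4

theorem linear_size_additive_spanner :
    ∃ C : ℝ, 0 < C ∧
      ∀ (V : Type) [Fintype V] (G : SimpleGraph V),
        ∃ H : SimpleGraph V, H ≤ G ∧
          (H.edgeSet.ncard : ℝ) ≤ C * (Fintype.card V : ℝ) ∧
          ∀ u v : V, G.Reachable u v →
            H.Reachable u v ∧
            (H.dist u v : ℝ) ≤ (G.dist u v : ℝ) +
              C * (Fintype.card V : ℝ) ^ (0.403 : ℝ) := by
  obtain ⟨K, C, h⟩ := full_final
  refine ⟨(K : ℝ) + C + 1, by positivity, ?_⟩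
  intro V _ G
  rcases Nat.eq_zero_or_pos (Fintype.card V) with h0 | hpos
  · have : IsEmpty V := Fintype.card_eq_zero_iff.1 h0
    refine ⟨⊥, bot_le, ?_, fun u => isEmptyElim u⟩
    rw [SimpleGraph.edgeSet_bot, Set.ncard_empty, h0]
    simp
  · obtain ⟨H, h1, h2, h3⟩ := h (Fintype.card V) hpos V G univ le_rfl (by rw [card_univ])
    refine ⟨H, h1, ?_, ?_⟩
    · have : (ec H : ℝ) ≤ K * (Fintype.card V : ℝ) := by exact_mod_cast h2
      have h5 : (0 : ℝ) ≤ (Fintype.card V : ℝ) := Nat.cast_nonneg _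
      have h6 : (0 : ℝ) ≤ (C : ℝ) := Nat.cast_nonneg _
      change (ec H : ℝ) ≤ _
      nlinarith
    · intro u v huv
      obtain ⟨p, hp⟩ := huv.exists_walk_length_eq_dist
      obtain ⟨q, hq⟩ := h3 u (mem_univ _) v (mem_univ _) (G.dist u v) ⟨p, hp.le⟩
      refine ⟨⟨q⟩, ?_⟩
      have h4 : H.dist u v ≤ G.dist u v + ⌊(C : ℝ) * (Fintype.card V : ℝ) ^ (0.403 : ℝ)⌋₊ :=
        (SimpleGraph.dist_le q).trans hq
      have h5 : (H.dist u v : ℝ) ≤ G.dist u v +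
          (⌊(C : ℝ) * (Fintype.card V : ℝ) ^ (0.403 : ℝ)⌋₊ : ℝ) := by exact_mod_cast h4
      have h6 : (⌊(C : ℝ) * (Fintype.card V : ℝ) ^ (0.403 : ℝ)⌋₊ : ℝ) ≤
          (C : ℝ) * (Fintype.card V : ℝ) ^ (0.403 : ℝ) := Nat.floor_le (by positivity)
      have h7 : (0 : ℝ) ≤ (Fintype.card V : ℝ) ^ (0.403 : ℝ) := by positivity
      have h8 : (0 : ℝ) ≤ (K : ℝ) := Nat.cast_nonneg _
      nlinarith
end

section
/- For every integer k ≥ 1 and every real 0 < ε < 1 there exists a constant C (depending only on k and ε) such that: for every finite undirected unweighted simple graph G on n vertices and every set P of (ordered) pairs of vertices of G, there is a subgraph H ⊆ G with at most C · 2^(2k/ε) · n^(1 + 10kε) · |P|^(1/2^(k+1)) edges such that for every pair (s,t) ∈ P with s, t connected in G, dist_H(s,t) ≤ dist_G(s,t) + 2^(30k/ε) · (dist_G(s,t))^(1 − 1/k). -/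
namespace PSAS

/-- There is a walk of length at most `m`. -/
def WD {V : Type} (G : SimpleGraph V) (u v : V) (m : ℕ) : Prop :=
  ∃ p : G.Walk u v, p.length ≤ m

/-- `m` is the distance between `u` and `v`, which are connected. -/
def IsD {V : Type} (G : SimpleGraph V) (u v : V) (m : ℕ) : Prop :=
  WD G u v m ∧ ∀ m', WD G u v m' → m ≤ m'

/-- number of edges, as a real number -/
noncomputable def ec {V : Type} (G : SimpleGraph V) : ℝ := (G.edgeSet.ncard : ℝ)

section basic
variable {V : Type} {G H : SimpleGraph V} {u v w : V} {a b : ℕ}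

lemma WD.refl (G : SimpleGraph V) (u : V) (m : ℕ) : WD G u u m :=
  ⟨SimpleGraph.Walk.nil, by simp⟩

lemma WD.symm (h : WD G u v a) : WD G v u a := by
  obtain ⟨p, hp⟩ := h
  exact ⟨p.reverse, by simpa using hp⟩

lemma WD.trans (h : WD G u v a) (h' : WD G v w b) : WD G u w (a + b) := by
  obtain ⟨p, hp⟩ := h
  obtain ⟨q, hq⟩ := h'
  exact ⟨p.append q, by rw [SimpleGraph.Walk.length_append]; omega⟩

lemma WD.le (h : WD G u v a) (hab : a ≤ b) : WD G u v b := by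
  obtain ⟨p, hp⟩ := h
  exact ⟨p, hp.trans hab⟩

lemma WD.mono (h : WD G u v a) (hGH : G ≤ H) : WD H u v a := by
  obtain ⟨p, hp⟩ := h
  exact ⟨p.mapLe hGH, by simpa using hp⟩

lemma WD.adj (h : G.Adj u v) : WD G u v 1 := ⟨h.toWalk, by simp⟩

lemma WD.zero (h : WD G u v 0) : u = v := by
  obtain ⟨p, hp⟩ := h
  exact SimpleGraph.Walk.eq_of_length_eq_zero (p := p) (by omega)

lemma WD.succ (h : WD G u v (a + 1)) (hne : u ≠ v) : ∃ w, WD G u w a ∧ G.Adj w v := by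
  obtain ⟨p, hp⟩ := h.symm
  cases p with
  | nil => exact absurd rfl hne
  | cons hadj q =>
    rename_i x
    refine ⟨x, ⟨q.reverse, ?_⟩, hadj.symm⟩
    simp at hp ⊢
    omega

lemma WD.exists_isD (h : WD G u v a) : ∃ m ≤ a, IsD G u v m := by
  classical
  have hex : ∃ m, WD G u v m := ⟨a, h⟩
  exact ⟨Nat.find hex, Nat.find_min' hex h, Nat.find_spec hex, fun m' hm' => Nat.find_min' hex hm'⟩

lemma IsD.symm (h : IsD G u v a) : IsD G v u a := ⟨h.1.symm, fun m hm => h.2 m hm.symm⟩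

lemma IsD.pos_of_ne (h : IsD G u v a) (hne : u ≠ v) : 0 < a := by
  rcases Nat.eq_zero_or_pos a with h0 | h0
  · subst h0
    exact absurd h.1.zero hne
  · exact h0

lemma wd_getVert {s t : V} (p : G.Walk s t) {a b : ℕ} (hab : a ≤ b) :
    WD G (p.getVert a) (p.getVert b) (b - a) := by
  have h1 : (p.drop a).getVert (b - a) = p.getVert b := by
    rw [SimpleGraph.Walk.drop_getVert]
    congr 1
    omega
  have : WD G (p.getVert a) ((p.drop a).getVert (b - a)) (b - a) :=
    ⟨(p.drop a).take (b - a), by rw [SimpleGraph.Walk.take_length]; exact min_le_left _ _⟩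
  rwa [h1] at this

/-- the graph restricted to a vertex set -/
def restr (G : SimpleGraph V) (C : Finset V) : SimpleGraph V where
  Adj x y := G.Adj x y ∧ x ∈ C ∧ y ∈ C
  symm := ⟨fun _ _ h => ⟨h.1.symm, h.2.2, h.2.1⟩⟩
  loopless := ⟨fun x h => G.loopless.irrefl x h.1⟩

lemma restr_le (G : SimpleGraph V) (C : Finset V) : restr G C ≤ G := fun _ _ h => h.1

lemma WD.restr {m : ℕ} {C : Finset V} (h : WD G u v m) (hC : ∀ x, WD G u x m → x ∈ C) :
    WD (restr G C) u v m := by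
  classical
  obtain ⟨p, hp⟩ := h
  have hs : ∀ x ∈ p.support, x ∈ C := fun x hx =>
    hC x ⟨p.takeUntil x hx, (SimpleGraph.Walk.length_takeUntil_le_length p hx).trans hp⟩
  refine ⟨p.transfer (PSAS.restr G C) ?_, by rw [SimpleGraph.Walk.length_transfer]; exact hp⟩
  intro e he
  induction e with
  | h x y =>
    exact ⟨p.adj_of_mem_edges he, hs _ (p.fst_mem_support_of_mem_edges he),
      hs _ (p.snd_mem_support_of_mem_edges he)⟩

lemma WD.mem_of_support {U : Finset V} (hU : ∀ x y, G.Adj x y → x ∈ U) {m : ℕ} (h : WD G u v m)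
    (hu : u ∈ U) : v ∈ U := by
  obtain ⟨p, hp⟩ := h.symm
  cases p with
  | nil => exact hu
  | cons hadj q => exact hU _ _ hadj

lemma mem_of_ne {U : Finset V} {s t : V} {δ : ℕ} (hU : ∀ x y, G.Adj x y → x ∈ U) (h : WD G s t δ)
    (hne : s ≠ t) : s ∈ U := by
  obtain ⟨p, hp⟩ := h
  cases p with
  | nil => exact absurd rfl hne
  | cons hadj q => exact hU _ _ hadj

lemma geo {s t : V} {δ r R : ℕ} (h : IsD G s t δ) (hr : 1 ≤ r) (hδ : δ ≤ R * r) :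
    ∃ m ≤ R, ∃ (u : ℕ → V) (pos : ℕ → ℕ), pos 0 = 0 ∧ pos m = δ ∧ u 0 = s ∧ u m = t ∧
      (∀ i < m, pos i = i * r) ∧ (∀ i, pos (i + 1) ≤ pos i + r) ∧ Monotone pos ∧
      (∀ i j, i ≤ j → IsD G (u i) (u j) (pos j - pos i)) := by
  classical
  obtain ⟨p, hp⟩ := h.1
  have hlen : p.length = δ := le_antisymm hp (h.2 _ ⟨p, le_rfl⟩)
  have hex : ∃ m, δ ≤ m * r := ⟨R, hδ⟩
  have hm := Nat.find_spec hex
  refine ⟨Nat.find hex, Nat.find_min' hex hδ, fun i => p.getVert (min (i * r) δ),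
    fun i => min (i * r) δ, by simp, by simpa using hm, by simp, ?_, ?_, ?_, ?_, ?_⟩
  · simp only [min_eq_right hm]
    rw [← hlen, SimpleGraph.Walk.getVert_length]
  · intro i hi
    have := Nat.find_min hex hi
    simp only [min_def]
    split_ifs <;> omega
  · intro i
    simp only [add_mul, one_mul]
    omega
  · intro i j hij
    have : i * r ≤ j * r := Nat.mul_le_mul_right _ hij
    simp only
    omega
  · intro i j hij
    have hij' : min (i * r) δ ≤ min (j * r) δ := by
      have : i * r ≤ j * r := Nat.mul_le_mul_right _ hij
      omega
    refine ⟨wd_getVert p hij', fun m' hm' => ?_⟩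
    have h1 := wd_getVert p (Nat.zero_le (min (i * r) δ))
    have h2 := wd_getVert p (min_le_right (j * r) δ)
    rw [SimpleGraph.Walk.getVert_zero] at h1
    have h3 : p.getVert δ = t := by rw [← hlen, SimpleGraph.Walk.getVert_length]
    rw [h3] at h2
    have := h.2 _ ((h1.trans hm').trans h2)
    have hle := min_le_right (j * r) δ
    simp only
    omega

end basic

section counting
variable {V : Type}

lemma ec_nonneg (G : SimpleGraph V) : 0 ≤ ec G := by unfold ec; positivity

lemma ec_bot : ec (⊥ : SimpleGraph V) = 0 := by simp [ec]

lemma ec_sup_le (G H : SimpleGraph V) : ec (G ⊔ H) ≤ ec G + ec H := by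
  unfold ec
  rw [SimpleGraph.edgeSet_sup]
  exact_mod_cast Set.ncard_union_le _ _

lemma ec_finset_sup_le {ι : Type} (s : Finset ι) (F : ι → SimpleGraph V) :
    ec (s.sup F) ≤ ∑ i ∈ s, ec (F i) := by
  classical
  induction s using Finset.induction_on with
  | empty => simp [ec_bot]
  | insert a s ha ih =>
    rw [Finset.sup_insert, Finset.sum_insert ha]
    exact (ec_sup_le _ _).trans (by linarith)

/-- A breadth first search tree. -/
lemma tree [Fintype V] (G : SimpleGraph V) (z : V) (ρ : ℕ) (B : Finset V) (hB : ∀ x, WD G z x ρ → x ∈ B) :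
    ∃ T ≤ G, ec T ≤ B.card ∧ ∀ x, WD G z x ρ → WD T z x ρ := by
  classical
  have hpar : ∀ x, ∃ y, x ≠ z → (∃ m, WD G z x m) →
      G.Adj y x ∧ ∀ m, WD G z x m → ∃ m', m = m' + 1 ∧ WD G z y m' := by
    intro x
    by_cases hx : x ≠ z ∧ ∃ m, WD G z x m
    · obtain ⟨hxz, m, hm⟩ := hx
      obtain ⟨m0, -, hm0⟩ := hm.exists_isD
      have hpos := hm0.pos_of_ne hxz.symm
      obtain ⟨m1, rfl⟩ : ∃ m1, m0 = m1 + 1 := ⟨m0 - 1, by omega⟩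
      obtain ⟨y, hy, hyx⟩ := hm0.1.succ hxz.symm
      refine ⟨y, fun _ _ => ⟨hyx, fun m' hm' => ?_⟩⟩
      have := hm0.2 _ hm'
      exact ⟨m' - 1, by omega, hy.le (by omega)⟩
    · exact ⟨x, fun h1 h2 => absurd ⟨h1, h2⟩ hx⟩
  choose par hpar using hpar
  let E : Set (Sym2 V) := (fun x => s(par x, x)) '' {x | x ≠ z ∧ WD G z x ρ}
  refine ⟨SimpleGraph.fromEdgeSet E, ?_, ?_, ?_⟩
  · intro a b hab
    rw [SimpleGraph.fromEdgeSet_adj] at hab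
    obtain ⟨⟨x, ⟨hx1, hx2⟩, hx⟩, -⟩ := hab
    have := (hpar x hx1 ⟨_, hx2⟩).1
    simp only [Sym2.eq_iff] at hx
    rcases hx with ⟨rfl, rfl⟩ | ⟨rfl, rfl⟩
    · exact this
    · exact this.symm
  · unfold ec
    rw [SimpleGraph.edgeSet_fromEdgeSet]
    have h1 : (E \ Sym2.diagSet).ncard ≤ E.ncard := Set.ncard_le_ncard Set.sdiff_subset
    have h2 : E.ncard ≤ {x | x ≠ z ∧ WD G z x ρ}.ncard := Set.ncard_image_le
    have h3 : {x | x ≠ z ∧ WD G z x ρ}.ncard ≤ (B : Set V).ncard :=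
      Set.ncard_le_ncard (fun x hx => hB x hx.2)
    rw [Set.ncard_coe_finset] at h3
    exact_mod_cast h1.trans (h2.trans h3)
  · have key : ∀ m, m ≤ ρ → ∀ x, WD G z x m → WD (SimpleGraph.fromEdgeSet E) z x m := by
      intro m
      induction m with
      | zero =>
        intro _ x hx
        rw [← hx.zero]
        exact WD.refl _ _ _
      | succ m ih =>
        intro hm x hx
        by_cases hxz : x = z
        · rw [hxz]; exact WD.refl _ _ _
        · obtain ⟨h1, h2⟩ := hpar x hxz ⟨_, hx⟩
          obtain ⟨m', hm', hy⟩ := h2 _ hx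
          obtain rfl : m = m' := by omega
          refine (ih (by omega) _ hy).trans (WD.adj ?_)
          rw [SimpleGraph.fromEdgeSet_adj]
          exact ⟨⟨x, ⟨hxz, hx.le hm⟩, rfl⟩, h1.ne⟩
    exact key ρ le_rfl

end counting

section cover
variable {V : Type} [Fintype V]

open Classical in
/-- the ball around `v` -/
noncomputable def ball (G : SimpleGraph V) (v : V) (ρ : ℕ) : Finset V :=
  Finset.univ.filter (fun x => WD G v x ρ)

lemma mem_ball {G : SimpleGraph V} {v x : V} {ρ : ℕ} : x ∈ ball G v ρ ↔ WD G v x ρ := by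
  simp [ball]

lemma growth (G : SimpleGraph V) (r : ℕ) (β : ℝ) (J : ℕ) (hβ1 : 1 ≤ β) (hJ : 1 ≤ J)
    (hβ : (Fintype.card V : ℝ) ≤ β ^ J) (v : V) :
    ∃ j < J, ((ball G v (4 ^ (j + 1) * r)).card : ℝ) ≤ β * (ball G v (4 ^ j * r)).card := by
  by_contra! hcon
  have key : ∀ j, j + 1 ≤ J → β ^ (j + 1) < ((ball G v (4 ^ (j + 1) * r)).card : ℝ) := by
    intro j
    induction j with
    | zero =>
      intro hj
      have h0 : (1 : ℝ) ≤ ((ball G v (4 ^ 0 * r)).card : ℝ) := by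
        have : 0 < (ball G v (4 ^ 0 * r)).card :=
          Finset.card_pos.2 ⟨v, mem_ball.2 (WD.refl _ _ _)⟩
        exact_mod_cast this
      have := hcon 0 (by omega)
      rw [zero_add, pow_one]
      nlinarith
    | succ j ih =>
      intro hj
      have h1 := ih (by omega)
      have h2 := hcon (j + 1) (by omega)
      rw [pow_succ]
      nlinarith
  obtain ⟨j, rfl⟩ : ∃ j, J = j + 1 := ⟨J - 1, by omega⟩
  have h1 := key j le_rfl
  have h2 : ((ball G v (4 ^ (j + 1) * r)).card : ℝ) ≤ Fintype.card V := by
    exact_mod_cast Finset.card_le_univ _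
  linarith

lemma cover (G : SimpleGraph V) (U : Finset V) (hU : ∀ x y, G.Adj x y → x ∈ U) (r : ℕ)
    (hr : 1 ≤ r) (β : ℝ) (J : ℕ) (hβ1 : 1 ≤ β) (hJ : 1 ≤ J)
    (hβ : (Fintype.card V : ℝ) ≤ β ^ J) :
    ∃ (Z : Finset V) (C : V → Finset V) (cl : V → V), (∀ z ∈ Z, C z ⊆ U) ∧
      (∀ z ∈ Z, ∃ T ≤ G, ec T ≤ (C z).card ∧ ∀ x ∈ C z, WD T z x (4 ^ J * r)) ∧
      (∀ v ∈ U, cl v ∈ Z ∧ ∀ x, WD G v x r → x ∈ C (cl v)) ∧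
      ∑ z ∈ Z, ((C z).card : ℝ) ≤ β * U.card := by
  classical
  choose j hjJ hj using growth G r β J hβ1 hJ hβ
  have hpow : ∀ v, 4 ^ j v * r ≤ 4 ^ J * r := fun v =>
    Nat.mul_le_mul_right _ (Nat.pow_le_pow_right (by norm_num) (hjJ v).le)
  obtain ⟨u, hut, hdis, hcov⟩ := Vitali.exists_disjoint_subfamily_covering_enlargement
    (fun v => (ball G v (4 ^ j v * r) : Set V)) (U : Set V) (fun v => ((4 ^ j v * r : ℕ) : ℝ))
    (3 / 2) (by norm_num) (fun _ _ => by positivity) ((4 ^ J * r : ℕ) : ℝ)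
    (fun v _ => by exact_mod_cast hpow v) (fun v _ => ⟨v, mem_ball.2 (WD.refl _ _ _)⟩)
  have hcov' : ∀ v, ∃ z, v ∈ U → z ∈ u ∧ ∃ y, WD G v y (4 ^ j v * r) ∧ WD G z y (4 ^ j z * r) ∧
      2 * (4 ^ j v * r) ≤ 3 * (4 ^ j z * r) := by
    intro v
    by_cases hv : v ∈ U
    · obtain ⟨z, hz, ⟨y, hy1, hy2⟩, hle⟩ := hcov v hv
      refine ⟨z, fun _ => ⟨hz, y, mem_ball.1 hy1, mem_ball.1 hy2, ?_⟩⟩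
      have : (2 * ((4 ^ j v * r : ℕ) : ℝ)) ≤ 3 * ((4 ^ j z * r : ℕ) : ℝ) := by
        linarith
      exact_mod_cast this
    · exact ⟨v, fun h => absurd h hv⟩
  choose cl hcl using hcov'
  refine ⟨u.toFinset, fun z => ball G z (4 ^ (j z + 1) * r), cl, ?_, ?_, ?_, ?_⟩
  · intro z hz x hx
    exact (mem_ball.1 hx).mem_of_support hU (hut (by simpa using hz))
  · intro z _
    obtain ⟨T, hT, hec, hd⟩ := tree G z (4 ^ (j z + 1) * r) (ball G z (4 ^ (j z + 1) * r))
      (fun x hx => mem_ball.2 hx)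
    refine ⟨T, hT, hec, fun x hx => (hd x (mem_ball.1 hx)).le ?_⟩
    exact Nat.mul_le_mul_right _ (Nat.pow_le_pow_right (by norm_num) (hjJ z))
  · intro v hv
    obtain ⟨hz, y, hy1, hy2, hle⟩ := hcl v hv
    refine ⟨by simpa using hz, fun x hx => mem_ball.2 ?_⟩
    refine ((hy2.trans hy1.symm).trans hx).le ?_
    have h1 : r ≤ 4 ^ j (cl v) * r := Nat.le_mul_of_pos_left _ (by positivity)
    rw [pow_succ]
    have h2 : 4 ^ j (cl v) * 4 * r = 4 * (4 ^ j (cl v) * r) := by ring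
    omega
  · have h1 : ∑ z ∈ u.toFinset, ((ball G z (4 ^ (j z + 1) * r)).card : ℝ) ≤
        ∑ z ∈ u.toFinset, β * ((ball G z (4 ^ j z * r)).card : ℝ) :=
      Finset.sum_le_sum (fun z _ => hj z)
    refine h1.trans ?_
    rw [← Finset.mul_sum]
    refine mul_le_mul_of_nonneg_left ?_ (by linarith)
    have h2 : (u.toFinset.biUnion (fun z => ball G z (4 ^ j z * r))).card =
        ∑ z ∈ u.toFinset, (ball G z (4 ^ j z * r)).card := by
      apply Finset.card_biUnion
      intro x hx y hy hxy
      have := hdis (by simpa using hx) (by simpa using hy) hxy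
      exact Finset.disjoint_coe.1 this
    have h3 : (u.toFinset.biUnion (fun z => ball G z (4 ^ j z * r))) ⊆ U := by
      intro x hx
      obtain ⟨z, hz, hx⟩ := Finset.mem_biUnion.1 hx
      exact (mem_ball.1 hx).mem_of_support hU (hut (by simpa using hz))
    have h4 := Finset.card_le_card h3
    rw [h2] at h4
    exact_mod_cast h4

end cover

section hitting

/-- Greedy hitting sets, one step at a time. -/
lemma hitting_aux {α ι : Type} [DecidableEq α] (Z : Finset α) (w : α → ℝ)
    (I : Finset ι) (A : ι → Finset α) (hA : ∀ i ∈ I, A i ⊆ Z) (τ W : ℝ)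
    (hW : 0 < W) (hτW : τ ≤ W) (hw : ∀ i ∈ I, τ ≤ ∑ z ∈ A i, w z) (hsum : ∑ z ∈ Z, w z ≤ W)
    (hw0 : ∀ z ∈ Z, 0 ≤ w z) (hτ : 0 < τ) (m : ℕ) :
    ∃ S ⊆ Z, S.card ≤ m ∧
      (((I.filter (fun i => Disjoint (A i) S)).card : ℝ) ≤ I.card * (1 - τ / W) ^ m) := by
  have hx : 0 ≤ 1 - τ / W := by
    rw [sub_nonneg, div_le_one hW]; exact hτW
  induction m with
  | zero => exact ⟨∅, by simp, by simp, by simp⟩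
  | succ m ih =>
    obtain ⟨S, hSZ, hSm, hS⟩ := ih
    set I' := I.filter (fun i => Disjoint (A i) S) with hI'
    by_cases hne : I'.Nonempty
    · -- some element hits many of the remaining sets
      have hex : ∃ z ∈ Z, (I'.card : ℝ) * (τ / W) ≤ ((I'.filter (fun i => z ∈ A i)).card : ℝ) := by
        by_contra! hcon
        have h1 : (I'.card : ℝ) * τ ≤ ∑ i ∈ I', ∑ z ∈ A i, w z := by
          rw [← nsmul_eq_mul]
          exact Finset.card_nsmul_le_sum _ _ _
            (fun i hi => hw i (Finset.mem_filter.1 hi).1)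
        have h2 : ∑ i ∈ I', ∑ z ∈ A i, w z =
            ∑ z ∈ Z, ((I'.filter (fun i => z ∈ A i)).card : ℝ) * w z := by
          have : ∀ i ∈ I', ∑ z ∈ A i, w z = ∑ z ∈ Z, if z ∈ A i then w z else 0 := by
            intro i hi
            rw [← Finset.sum_filter]
            congr 1
            ext z
            have := hA i (Finset.mem_filter.1 hi).1
            simp only [Finset.mem_filter]
            exact ⟨fun h => ⟨this h, h⟩, fun h => h.2⟩
          rw [Finset.sum_congr rfl this, Finset.sum_comm]
          refine Finset.sum_congr rfl (fun z _ => ?_)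
          rw [← Finset.sum_filter, Finset.sum_const, nsmul_eq_mul]
        have hpos : 0 < ∑ z ∈ Z, w z := by
          obtain ⟨i, hi⟩ := hne
          have hi := (Finset.mem_filter.1 hi).1
          exact (hτ.trans_le (hw i hi)).trans_le
            (Finset.sum_le_sum_of_subset_of_nonneg (hA i hi) (fun z hz _ => hw0 z hz))
        have h3 : ∑ z ∈ Z, ((I'.filter (fun i => z ∈ A i)).card : ℝ) * w z <
            ∑ z ∈ Z, (I'.card : ℝ) * (τ / W) * w z := by
          obtain ⟨z, hz, hzw⟩ : ∃ z ∈ Z, 0 < w z := by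
            by_contra! hc
            exact absurd (Finset.sum_nonpos hc) (not_le.2 hpos)
          refine Finset.sum_lt_sum (fun z hz =>
            mul_le_mul_of_nonneg_right (hcon z hz).le (hw0 z hz)) ⟨z, hz, ?_⟩
          exact mul_lt_mul_of_pos_right (hcon z hz) hzw
        rw [← Finset.mul_sum] at h3
        have h4 : (I'.card : ℝ) * (τ / W) * ∑ z ∈ Z, w z ≤ (I'.card : ℝ) * (τ / W) * W :=
          mul_le_mul_of_nonneg_left hsum (by positivity)
        have h5 : (I'.card : ℝ) * (τ / W) * W = I'.card * τ := by field_simp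
        linarith
      obtain ⟨z, hz, hzc⟩ := hex
      refine ⟨insert z S, Finset.insert_subset hz hSZ, (Finset.card_insert_le _ _).trans
        (by omega), ?_⟩
      have h1 : I.filter (fun i => Disjoint (A i) (insert z S)) =
          I'.filter (fun i => ¬ z ∈ A i) := by
        ext i
        simp only [hI', Finset.mem_filter, Finset.disjoint_insert_right]
        tauto
      have h2 := Finset.card_filter_add_card_filter_not (s := I') (fun i => z ∈ A i)
      have h3 : ((I'.filter (fun i => z ∈ A i)).card : ℝ) +
        ((I'.filter (fun i => ¬ z ∈ A i)).card : ℝ) = I'.card := by exact_mod_cast h2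
      rw [h1, pow_succ, ← mul_assoc]
      have h4 := mul_le_mul_of_nonneg_right hS hx
      nlinarith
    · refine ⟨S, hSZ, by omega, ?_⟩
      rw [← hI', Finset.not_nonempty_iff_eq_empty.1 hne]
      simp only [Finset.card_empty, Nat.cast_zero]
      positivity

lemma hitting {α ι : Type} [DecidableEq α] (Z : Finset α) (w : α → ℝ)
    (I : Finset ι) (A : ι → Finset α) (hA : ∀ i ∈ I, A i ⊆ Z) (τ W N : ℝ)
    (hW : 0 < W) (hτW : τ ≤ W) (hw : ∀ i ∈ I, τ ≤ ∑ z ∈ A i, w z) (hsum : ∑ z ∈ Z, w z ≤ W)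
    (hw0 : ∀ z ∈ Z, 0 ≤ w z) (hτ : 0 < τ) (hN : 1 ≤ N) (hIN : (I.card : ℝ) ≤ N) :
    ∃ S ⊆ Z, (S.card : ℝ) ≤ W / τ * (Real.log N + 1) ∧ ∀ i ∈ I, ∃ z ∈ A i, z ∈ S := by
  have hq : 1 ≤ W / τ := by rwa [le_div_iff₀ hτ, one_mul]
  have hlog : 0 ≤ Real.log N := Real.log_nonneg hN
  set m := ⌊W / τ * Real.log N⌋₊ + 1 with hm
  obtain ⟨S, hSZ, hSm, hS⟩ := hitting_aux Z w I A hA τ W hW hτW hw hsum hw0 hτ m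
  refine ⟨S, hSZ, ?_, ?_⟩
  · have h1 : (S.card : ℝ) ≤ m := by exact_mod_cast hSm
    have h2 : (m : ℝ) ≤ W / τ * Real.log N + 1 := by
      rw [hm]; push_cast
      have := Nat.floor_le (a := W / τ * Real.log N) (by positivity)
      linarith
    linarith
  · have hx : 0 ≤ 1 - τ / W := by
      rw [sub_nonneg, div_le_one hW]; exact hτW
    have h1 : (1 - τ / W) ^ m ≤ Real.exp (-(τ / W)) ^ m := by
      apply pow_le_pow_left₀ hx
      have := Real.add_one_le_exp (-(τ / W))
      linarith
    rw [← Real.exp_nat_mul] at h1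
    have h2 : (m : ℝ) * -(τ / W) < - Real.log N := by
      have : W / τ * Real.log N < m := by rw [hm]; push_cast; exact Nat.lt_floor_add_one _
      have h3 : W / τ * Real.log N * (τ / W) < m * (τ / W) :=
        mul_lt_mul_of_pos_right this (by positivity)
      have h4 : W / τ * Real.log N * (τ / W) = Real.log N := by field_simp
      linarith
    have h3 : Real.exp ((m : ℝ) * -(τ / W)) < N⁻¹ := by
      have h0 : Real.exp (-Real.log N) = N⁻¹ := by
        rw [Real.exp_neg, Real.exp_log (by linarith)]
      rw [← h0]
      exact Real.exp_lt_exp.2 h2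
    have h4 : ((I.filter (fun i => Disjoint (A i) S)).card : ℝ) < 1 := by
      have h5 : (I.card : ℝ) * (1 - τ / W) ^ m ≤ N * (1 - τ / W) ^ m :=
        mul_le_mul_of_nonneg_right hIN (by positivity)
      have h6 : N * (1 - τ / W) ^ m < N * N⁻¹ :=
        mul_lt_mul_of_pos_left (h1.trans_lt h3) (by linarith)
      rw [mul_inv_cancel₀ (by linarith)] at h6
      linarith
    have h5 : (I.filter (fun i => Disjoint (A i) S)).card = 0 := by
      have : (I.filter (fun i => Disjoint (A i) S)).card < 1 := by exact_mod_cast h4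
      omega
    rw [Finset.card_eq_zero, Finset.filter_eq_empty_iff] at h5
    intro i hi
    have := h5 hi
    rw [Finset.not_disjoint_iff] at this
    exact this

end hitting

section step
variable {V : Type}

/-- The situation after building the clusters of one level. -/
structure Setup (G H0 : SimpleGraph V) (U Z : Finset V) (C : V → Finset V) (cl : V → V)
    (r e rad c : ℕ) (M : ℝ) : Prop where
  hU : ∀ x y, G.Adj x y → x ∈ U
  hr : 1 ≤ r
  hM : 0 < M
  hrad : rad ≤ c * r
  H0le : H0 ≤ G
  cen : ∀ z ∈ Z, ∀ x ∈ C z, WD H0 z x rad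
  clZ : ∀ v ∈ U, cl v ∈ Z
  clmem : ∀ v ∈ U, ∀ x, WD G v x r → x ∈ C (cl v)
  seg : ∀ x ∈ U, ∀ y δ, WD G x y δ → δ ≤ r →
    ∃ F ≤ G, ec F ≤ (C (cl x)).card / M ∧ WD (H0 ⊔ F) x y (δ + e)

/-- A shortest path cut into segments of length `r`. -/
structure Geo (G : SimpleGraph V) (s t : V) (δ r R m : ℕ) (u : ℕ → V) (pos : ℕ → ℕ) : Prop where
  mR : m ≤ R
  pos0 : pos 0 = 0
  posm : pos m = δ
  u0 : u 0 = s
  um : u m = t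
  posi : ∀ i < m, pos i = i * r
  posr : ∀ i, pos (i + 1) ≤ pos i + r
  mono : Monotone pos
  isD : ∀ i j, i ≤ j → IsD G (u i) (u j) (pos j - pos i)

variable {G H0 : SimpleGraph V} {U Z : Finset V} {C : V → Finset V} {cl : V → V}
    {r R e rad c : ℕ} {M : ℝ}

lemma exists_geo {s t : V} {δ : ℕ} (h : IsD G s t δ) (hr : 1 ≤ r) (hδ : δ ≤ R * r) :
    ∃ m u pos, Geo G s t δ r R m u pos := by
  obtain ⟨m, h1, u, pos, h2, h3, h4, h5, h6, h7, h8, h9⟩ := geo h hr hδ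
  exact ⟨m, u, pos, h1, h2, h3, h4, h5, h6, h7, h8, h9⟩

lemma Geo.memU (st : Setup G H0 U Z C cl r e rad c M) {s t : V} {δ m : ℕ} {u : ℕ → V}
    {pos : ℕ → ℕ} (hg : Geo G s t δ r R m u pos) (hs : s ∈ U) (i : ℕ) : u i ∈ U := by
  have h := (hg.isD 0 i (Nat.zero_le _)).1
  rw [hg.u0] at h
  exact h.mem_of_support st.hU hs

lemma Geo.step_wd {s t : V} {δ m : ℕ} {u : ℕ → V}
    {pos : ℕ → ℕ} (hg : Geo G s t δ r R m u pos) (i : ℕ) : WD G (u i) (u (i + 1)) r :=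
  (hg.isD i (i + 1) (Nat.le_succ _)).1.le (by have := hg.posr i; omega)

lemma chain [Fintype V] (st : Setup G H0 U Z C cl r e rad c M) {s t : V} {δ m : ℕ} {u : ℕ → V}
    {pos : ℕ → ℕ} (hg : Geo G s t δ r R m u pos) (hs : s ∈ U) (a b : ℕ) :
    ∃ F ≤ G, ec F ≤ (∑ i ∈ Finset.Ico a b, ((C (cl (u i))).card : ℝ)) / M ∧
      ∀ i j, a ≤ i → i ≤ j → j ≤ b →
        WD (H0 ⊔ F) (u i) (u j) (pos j - pos i + (j - i) * e) := by
  have hseg : ∀ i, ∃ F ≤ G, ec F ≤ (C (cl (u i))).card / M ∧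
      WD (H0 ⊔ F) (u i) (u (i + 1)) (pos (i + 1) - pos i + e) := fun i =>
    st.seg (u i) (hg.memU st hs i) (u (i + 1)) _ (hg.isD i (i + 1) (Nat.le_succ _)).1
      (by have := hg.posr i; omega)
  choose F hFG hFe hF using hseg
  refine ⟨(Finset.Ico a b).sup F, Finset.sup_le (fun i _ => hFG i), ?_, ?_⟩
  · refine (ec_finset_sup_le _ _).trans ?_
    rw [Finset.sum_div]
    exact Finset.sum_le_sum (fun i _ => hFe i)
  · intro i j hai hij
    induction j, hij using Nat.le_induction with
    | base => intro _; exact WD.refl _ _ _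
    | succ j hij ih =>
      intro hjb
      have h1 := ih (by omega)
      have h2 : WD (H0 ⊔ (Finset.Ico a b).sup F) (u j) (u (j + 1)) (pos (j + 1) - pos j + e) := by
        refine (hF j).mono (sup_le_sup_left ?_ _)
        exact Finset.le_sup (f := F) (Finset.mem_Ico.2 ⟨by omega, by omega⟩)
      refine (h1.trans h2).le ?_
      have h3 := hg.mono hij
      have h4 := hg.mono (Nat.le_succ j)
      have h5 : (j + 1 - i) * e = (j - i) * e + e := by
        rw [Nat.succ_sub hij, Nat.succ_mul]
      simp only [Nat.succ_eq_add_one] at h4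
      omega

lemma multi [Fintype V] (st : Setup G H0 U Z C cl r e rad c M) {s t : V} {δ m : ℕ} {u : ℕ → V}
    {pos : ℕ → ℕ} (hg : Geo G s t δ r R m u pos) (hs : s ∈ U) [DecidableEq V] (I : Finset ℕ)
    (hI : ∀ i ∈ I, i < m) (f : V → ℝ) (hf : ∀ z, 0 ≤ f z) :
    ∑ i ∈ I, f (cl (u i)) ≤ (2 * c + 1) * ∑ z ∈ I.image (fun i => cl (u i)), f z := by
  rw [Finset.sum_comp f (fun i => cl (u i)), Finset.mul_sum]
  refine Finset.sum_le_sum (fun z _ => ?_)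
  rw [nsmul_eq_mul]
  refine mul_le_mul_of_nonneg_right ?_ (hf z)
  have hle : ∀ i ∈ I.filter (fun i => cl (u i) = z), ∀ j ∈ I.filter (fun i => cl (u i) = z),
      j ≤ i + 2 * c := by
    intro i hi j hj
    by_cases hij : i ≤ j
    · obtain ⟨hi, hiz⟩ := Finset.mem_filter.1 hi
      obtain ⟨hj, hjz⟩ := Finset.mem_filter.1 hj
      have key : ∀ i, cl (u i) = z → WD G z (u i) rad := by
        intro i hiz
        have hiU := hg.memU st hs i
        have := st.cen _ (st.clZ _ hiU) (u i) (st.clmem _ hiU _ (WD.refl _ _ _))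
        rw [hiz] at this
        exact this.mono st.H0le
      have h1 := (hg.isD i j hij).2 _ ((key i hiz).symm.trans (key j hjz))
      rw [hg.posi i (hI i hi), hg.posi j (hI j hj), ← Nat.sub_mul] at h1
      have h2 := st.hrad
      have h3 : (j - i) * r ≤ (2 * c) * r := by
        calc (j - i) * r ≤ rad + rad := h1
          _ ≤ (2 * c) * r := by rw [mul_assoc]; omega
      have := Nat.le_of_mul_le_mul_right h3 st.hr
      omega
    · omega
  have : (I.filter (fun i => cl (u i) = z)).card ≤ 2 * c + 1 := by
    rcases Finset.eq_empty_or_nonempty (I.filter (fun i => cl (u i) = z)) with h0 | h0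
    · rw [h0]; simp
    · have hsub : I.filter (fun i => cl (u i) = z) ⊆
          Finset.Icc (Finset.min' _ h0) (Finset.min' _ h0 + 2 * c) := fun j hj =>
        Finset.mem_Icc.2 ⟨Finset.min'_le _ _ hj, hle _ (Finset.min'_mem _ h0) _ hj⟩
      have := Finset.card_le_card hsub
      rw [Nat.card_Icc] at this
      omega
  exact_mod_cast this

lemma pathbuy [Fintype V] (st : Setup G H0 U Z C cl r e rad c M) (R : ℕ) (S : Finset V) (hS : S ⊆ Z) :
    ∃ H, H0 ≤ H ∧ H ≤ G ∧
      ec H ≤ ec H0 + (2 * c + 1) / M * (S.card * ∑ z ∈ Z, ((C z).card : ℝ)) ∧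
      ∀ x1 x2 δ z1 z2, IsD G x1 x2 δ → δ ≤ R * r → x1 ∈ U → z1 ∈ S → z2 ∈ S → x1 ∈ C z1 →
        x2 ∈ C z2 → WD H x1 x2 (δ + 6 * rad + 2 * (4 * rad + R * e)) := by
  classical
  set A := 4 * rad + R * e with hA
  let good : SimpleGraph V → Finset (V × V) := fun H =>
    (S ×ˢ Z).filter (fun p => ∀ q, WD G p.1 p.2 q → WD H p.1 p.2 (q + A))
  let g : SimpleGraph V → ℝ := fun H => ∑ p ∈ good H, ((C p.2).card : ℝ)
  have hK : (0 : ℝ) ≤ (2 * c + 1) / M := div_nonneg (by positivity) st.hM.le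
  obtain ⟨H, ⟨hH0, hHG, hHe⟩, hmax⟩ := Set.exists_max_image
    {H : SimpleGraph V | H0 ≤ H ∧ H ≤ G ∧ ec H ≤ ec H0 + (2 * c + 1) / M * g H} g
    (Set.toFinite _) ⟨H0, le_rfl, st.H0le, by
      have : 0 ≤ g H0 := Finset.sum_nonneg (fun _ _ => by positivity)
      have := mul_nonneg hK this
      linarith⟩
  refine ⟨H, hH0, hHG, hHe.trans ?_, ?_⟩
  · have : g H ≤ S.card * ∑ z ∈ Z, ((C z).card : ℝ) := by
      have h1 : g H ≤ ∑ p ∈ S ×ˢ Z, ((C p.2).card : ℝ) :=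
        Finset.sum_le_sum_of_subset_of_nonneg (Finset.filter_subset _ _)
          (fun _ _ _ => by positivity)
      rw [Finset.sum_product] at h1
      simpa using h1
    have := mul_le_mul_of_nonneg_left this hK
    linarith
  · intro x1 x2 δ z1 z2 hD hδ hx1 hz1 hz2 hxz1 hxz2
    obtain ⟨m, u, pos, hg⟩ := exists_geo hD st.hr hδ
    have c1 : WD H0 z1 x1 rad := st.cen _ (hS hz1) _ hxz1
    have c2 : WD H0 z2 x2 rad := st.cen _ (hS hz2) _ hxz2
    have cu : ∀ i, WD H0 (cl (u i)) (u i) rad := fun i =>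
      st.cen _ (st.clZ _ (hg.memU st hx1 i)) _ (st.clmem _ (hg.memU st hx1 i) _ (WD.refl _ _ _))
    have hclZ : ∀ i, cl (u i) ∈ Z := fun i => st.clZ _ (hg.memU st hx1 i)
    have d1 : ∀ i, IsD G x1 (u i) (pos i) := by
      intro i
      have := hg.isD 0 i (Nat.zero_le _)
      rwa [hg.u0, hg.pos0, Nat.sub_zero] at this
    have d2 : ∀ i, i ≤ m → IsD G (u i) x2 (δ - pos i) := by
      intro i hi
      have := hg.isD i m hi
      rwa [hg.um, hg.posm] at this
    have hposm : ∀ i, i ≤ m → pos i ≤ δ := by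
      intro i hi
      have := hg.mono hi
      rwa [hg.posm] at this
    rcases Nat.eq_zero_or_pos m with hm0 | hm0
    · have h1 := hg.u0
      have h2 := hg.um
      rw [hm0, h1] at h2
      rw [h2]
      exact WD.refl _ _ _
    by_cases hcase : ∃ i < m, (z1, cl (u i)) ∈ good H ∧ (z2, cl (u i)) ∈ good H
    · obtain ⟨i, him, hi1, hi2⟩ := hcase
      have hi1 := (Finset.mem_filter.1 hi1).2 _
        ((c1.mono st.H0le).trans ((d1 i).1.trans ((cu i).mono st.H0le).symm))
      have hi2 := (Finset.mem_filter.1 hi2).2 _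
        ((c2.mono st.H0le).trans ((d2 i him.le).1.symm.trans ((cu i).mono st.H0le).symm))
      refine (((c1.mono hH0).symm.trans hi1).trans (hi2.symm.trans (c2.mono hH0))).le ?_
      have := hposm i him.le
      omega
    · exfalso
      push Not at hcase
      obtain ⟨F, hFG, hFe, hF⟩ := chain st hg hx1 0 m
      have hle : H0 ⊔ F ≤ H ⊔ F := sup_le_sup_right hH0 _
      have hH0' : H0 ≤ H ⊔ F := hH0.trans le_sup_left
      have hmul : ∀ i, i ≤ m → i * e ≤ R * e := fun i hi =>
        Nat.mul_le_mul_right _ (hi.trans hg.mR)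
      have n1 : ∀ i < m, (z1, cl (u i)) ∈ good (H ⊔ F) := by
        intro i him
        refine Finset.mem_filter.2 ⟨Finset.mem_product.2 ⟨hz1, hclZ i⟩, fun q hq => ?_⟩
        have h1 := (d1 i).2 _ (((c1.mono st.H0le).symm.trans hq).trans ((cu i).mono st.H0le))
        have h2 := (hF 0 i (Nat.zero_le _) (Nat.zero_le _) him.le).mono hle
        rw [hg.u0, hg.pos0] at h2
        refine (((c1.mono hH0').trans h2).trans ((cu i).mono hH0').symm).le ?_
        have := hmul i him.le
        simp only [Nat.sub_zero]
        omega
      have n2 : ∀ i < m, (z2, cl (u i)) ∈ good (H ⊔ F) := by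
        intro i him
        refine Finset.mem_filter.2 ⟨Finset.mem_product.2 ⟨hz2, hclZ i⟩, fun q hq => ?_⟩
        have h1 := (d2 i him.le).2 _
          (((c2.mono st.H0le).symm.trans hq).trans ((cu i).mono st.H0le)).symm
        have h2 := (hF i m (Nat.zero_le _) him.le le_rfl).mono hle
        rw [hg.um, hg.posm] at h2
        refine (((c2.mono hH0').trans h2.symm).trans ((cu i).mono hH0').symm).le ?_
        have := hmul (m - i) (Nat.sub_le _ _)
        omega
      have hsub : good H ⊆ good (H ⊔ F) := by
        intro p hp
        obtain ⟨hp1, hp2⟩ := Finset.mem_filter.1 hp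
        exact Finset.mem_filter.2 ⟨hp1, fun q hq => (hp2 q hq).mono le_sup_left⟩
      set I := (Finset.range m).image (fun i => cl (u i)) with hI
      have hnew : ∑ z ∈ I, ((C z).card : ℝ) ≤
          ∑ p ∈ good (H ⊔ F) \ good H, ((C p.2).card : ℝ) := by
        let φ : V → V × V := fun z => if (z1, z) ∈ good H then (z2, z) else (z1, z)
        have hφ2 : ∀ z, (φ z).2 = z := by
          intro z; simp only [φ]; split_ifs <;> rfl
        have hinj : Set.InjOn φ (I : Set V) := by
          intro a _ b _ hab
          have := congrArg Prod.snd hab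
          rwa [hφ2, hφ2] at this
        have h1 : ∑ z ∈ I, ((C z).card : ℝ) = ∑ p ∈ I.image φ, ((C p.2).card : ℝ) := by
          rw [Finset.sum_image hinj]
          exact Finset.sum_congr rfl (fun z _ => by rw [hφ2])
        rw [h1]
        refine Finset.sum_le_sum_of_subset_of_nonneg ?_ (fun _ _ _ => by positivity)
        intro p hp
        obtain ⟨z, hz, rfl⟩ := Finset.mem_image.1 hp
        obtain ⟨i, hi, rfl⟩ := Finset.mem_image.1 hz
        have him := Finset.mem_range.1 hi
        rw [Finset.mem_sdiff]
        simp only [φ]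
        split_ifs with h
        · exact ⟨n2 i him, hcase i him h⟩
        · exact ⟨n1 i him, h⟩
      have hgeq : g (H ⊔ F) = g H + ∑ p ∈ good (H ⊔ F) \ good H, ((C p.2).card : ℝ) := by
        simp only [g]
        rw [add_comm]
        exact (Finset.sum_sdiff hsub).symm
      have hcost : ec F ≤ (2 * c + 1) / M * ∑ z ∈ I, ((C z).card : ℝ) := by
        have h1 := multi st hg hx1 (Finset.range m) (fun i hi => Finset.mem_range.1 hi)
          (fun z => ((C z).card : ℝ)) (fun _ => by positivity)
        rw [Nat.Ico_zero_eq_range] at hFe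
        refine hFe.trans ?_
        rw [div_mul_eq_mul_div]
        exact div_le_div_of_nonneg_right h1 st.hM.le
      have hIpos : 0 < ∑ z ∈ I, ((C z).card : ℝ) := by
        have h0 : cl (u 0) ∈ I := Finset.mem_image.2 ⟨0, Finset.mem_range.2 hm0, rfl⟩
        have h1 : 0 < (C (cl (u 0))).card :=
          Finset.card_pos.2 ⟨u 0, st.clmem _ (hg.memU st hx1 0) _ (WD.refl _ _ _)⟩
        have h2 : ((C (cl (u 0))).card : ℝ) ≤ ∑ z ∈ I, ((C z).card : ℝ) :=
          Finset.single_le_sum (f := fun z => ((C z).card : ℝ)) (fun _ _ => by positivity) h0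
        have h3 : (0 : ℝ) < ((C (cl (u 0))).card : ℝ) := by exact_mod_cast h1
        linarith
      have hmem := hmax (H ⊔ F) ⟨hH0', sup_le hHG hFG, by
        have h1 := ec_sup_le H F
        have h2 := mul_le_mul_of_nonneg_left hnew hK
        rw [hgeq, mul_add]
        linarith⟩
      linarith

lemma split (f : ℕ → ℝ) (hf : ∀ i, 0 ≤ f i) (T : ℝ) (hT : 0 ≤ T) (m : ℕ)
    (h : 2 * T < ∑ i ∈ Finset.range m, f i) :
    ∃ a b, a ≤ b ∧ b < m ∧ ∑ i ∈ Finset.Ico 0 a, f i ≤ T ∧ T < ∑ i ∈ Finset.range (a + 1), f i ∧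
      ∑ i ∈ Finset.Ico (b + 1) m, f i ≤ T ∧ T < ∑ i ∈ Finset.Ico b m, f i := by
  classical
  have hm : 0 < m := by
    rcases Nat.eq_zero_or_pos m with h0 | h0
    · subst h0; simp at h; linarith
    · exact h0
  have hex : ∃ a, T < ∑ i ∈ Finset.range (a + 1), f i := ⟨m - 1, by
    rw [Nat.sub_add_cancel hm]; linarith⟩
  have ha := Nat.find_spec hex
  have ha' : ∑ i ∈ Finset.range (Nat.find hex), f i ≤ T := by
    rcases Nat.eq_zero_or_pos (Nat.find hex) with h0 | h0
    · rw [h0]; simpa using hT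
    · have := Nat.find_min hex (Nat.sub_lt h0 one_pos)
      rw [show Nat.find hex - 1 + 1 = Nat.find hex by omega] at this
      linarith
  set a := Nat.find hex
  let P : ℕ → Prop := fun b => T < ∑ i ∈ Finset.Ico b m, f i
  have hP0 : P 0 := by
    simp only [P, Nat.Ico_zero_eq_range]; linarith
  have hb : P (Nat.findGreatest P m) := Nat.findGreatest_spec (Nat.zero_le _) hP0
  have hble : Nat.findGreatest P m ≤ m := Nat.findGreatest_le _
  have hbg : ∀ k, Nat.findGreatest P m < k → k ≤ m → ¬ P k := fun k h1 h2 =>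
    Nat.findGreatest_is_greatest h1 h2
  set b := Nat.findGreatest P m
  have hbm : b < m := by
    rcases hble.lt_or_eq with h1 | h1
    · exact h1
    · rw [h1] at hb
      simp only [P, Finset.Ico_self, Finset.sum_empty] at hb
      linarith
  have hb' : ∑ i ∈ Finset.Ico (b + 1) m, f i ≤ T := not_lt.1 (hbg (b + 1) (Nat.lt_succ_self _) hbm)
  refine ⟨a, b, ?_, hbm, by rwa [Nat.Ico_zero_eq_range], ha, hb', hb⟩
  by_contra! hab
  have h1 : ∑ i ∈ Finset.range m, f i =
      ∑ i ∈ Finset.range (b + 1), f i + ∑ i ∈ Finset.Ico (b + 1) m, f i :=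
    (Finset.sum_range_add_sum_Ico f hbm).symm
  have h2 : ∑ i ∈ Finset.range (b + 1), f i ≤ ∑ i ∈ Finset.range a, f i :=
    Finset.sum_le_sum_of_subset_of_nonneg (Finset.range_subset_range.2 hab) (fun i _ _ => hf i)
  linarith

end step

section level
variable {V : Type} [Fintype V]
variable {G H0 : SimpleGraph V} {U Z : Finset V} {C : V → Finset V} {cl : V → V}
    {r R e rad c : ℕ} {M : ℝ}

lemma routes [DecidableEq V] (st : Setup G H0 U Z C cl r e rad c M) (T : ℝ) (hT : 0 ≤ T)
    (s t : V) (δ : ℕ) (hD : IsD G s t δ) (hδ : δ ≤ R * r) (hs : s ∈ U) :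
    (∃ F ≤ G, ec F ≤ 2 * T / M ∧ WD (H0 ⊔ F) s t (δ + R * e)) ∨
    ∃ A B : Finset V, A ⊆ Z ∧ B ⊆ Z ∧ T / (2 * c + 1) ≤ ∑ z ∈ A, ((C z).card : ℝ) ∧
      T / (2 * c + 1) ≤ ∑ z ∈ B, ((C z).card : ℝ) ∧
      ∀ z1 ∈ A, ∀ z2 ∈ B, ∃ x1 x2 δ', x1 ∈ U ∧ IsD G x1 x2 δ' ∧ δ' ≤ R * r ∧ x1 ∈ C z1 ∧
        x2 ∈ C z2 ∧ ∃ F ≤ G, ec F ≤ 2 * T / M ∧ ∃ e1 e2, WD (H0 ⊔ F) s x1 e1 ∧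
          WD (H0 ⊔ F) x2 t e2 ∧ e1 + δ' + e2 ≤ δ + R * e := by
  obtain ⟨m, u, pos, hg⟩ := exists_geo hD st.hr hδ
  by_cases hsum : 2 * T < ∑ i ∈ Finset.range m, ((C (cl (u i))).card : ℝ)
  · right
    obtain ⟨a, b, hab, hbm, ha, ha', hb, hb'⟩ :=
      split (fun i => ((C (cl (u i))).card : ℝ)) (fun _ => by positivity) T hT m hsum
    have hmulti := fun I hI => multi st hg hs I hI (fun z => ((C z).card : ℝ))
      (fun _ => by positivity)
    have hc : (0 : ℝ) < 2 * c + 1 := by positivity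
    refine ⟨(Finset.range (a + 1)).image (fun i => cl (u i)),
      (Finset.Ico b m).image (fun i => cl (u i)), ?_, ?_, ?_, ?_, ?_⟩
    · intro z hz
      obtain ⟨i, -, rfl⟩ := Finset.mem_image.1 hz
      exact st.clZ _ (hg.memU st hs i)
    · intro z hz
      obtain ⟨i, -, rfl⟩ := Finset.mem_image.1 hz
      exact st.clZ _ (hg.memU st hs i)
    · rw [div_le_iff₀ hc, mul_comm]
      refine ha'.le.trans (hmulti _ fun i hi => ?_)
      have := Finset.mem_range.1 hi
      omega
    · rw [div_le_iff₀ hc, mul_comm]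
      exact hb'.le.trans (hmulti _ fun i hi => (Finset.mem_Ico.1 hi).2)
    · intro z1 hz1 z2 hz2
      obtain ⟨i, hi, rfl⟩ := Finset.mem_image.1 hz1
      obtain ⟨j, hj, rfl⟩ := Finset.mem_image.1 hz2
      have hi := Finset.mem_range.1 hi
      obtain ⟨hbj, hjm⟩ := Finset.mem_Ico.1 hj
      obtain ⟨F1, hF1G, hF1e, hF1⟩ := chain st hg hs 0 a
      obtain ⟨F2, hF2G, hF2e, hF2⟩ := chain st hg hs (b + 1) m
      have hp0 := hg.pos0
      have hpm := hg.posm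
      have hm1 : pos i ≤ pos (j + 1) := hg.mono (by omega)
      have hm2 : pos (j + 1) ≤ pos m := hg.mono (by omega)
      refine ⟨u i, u (j + 1), pos (j + 1) - pos i, hg.memU st hs i,
        hg.isD i (j + 1) (by omega), by omega,
        st.clmem _ (hg.memU st hs i) _ (WD.refl _ _ _),
        st.clmem _ (hg.memU st hs j) _ (hg.step_wd j), F1 ⊔ F2, sup_le hF1G hF2G, ?_,
        pos i - pos 0 + (i - 0) * e, pos m - pos (j + 1) + (m - (j + 1)) * e, ?_, ?_, ?_⟩
      · refine (ec_sup_le _ _).trans ?_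
        have h1 := hF1e.trans (div_le_div_of_nonneg_right ha st.hM.le)
        have h2 := hF2e.trans (div_le_div_of_nonneg_right hb st.hM.le)
        have h3 : 2 * T / M = T / M + T / M := by ring
        linarith
      · have := (hF1 0 i le_rfl (Nat.zero_le _) (by omega)).mono
          (sup_le_sup_left (le_sup_left : F1 ≤ F1 ⊔ F2) H0)
        rwa [hg.u0] at this
      · have := (hF2 (j + 1) m (by omega) (by omega) le_rfl).mono
          (sup_le_sup_left (le_sup_right : F2 ≤ F1 ⊔ F2) H0)
        rwa [hg.um] at this
      · have h1 : (i - 0) * e + (m - (j + 1)) * e ≤ R * e := by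
          rw [← Nat.add_mul]
          refine Nat.mul_le_mul_right _ ?_
          have := hg.mR
          omega
        omega
  · left
    obtain ⟨F, hFG, hFe, hF⟩ := chain st hg hs 0 m
    refine ⟨F, hFG, hFe.trans ?_, ?_⟩
    · rw [Nat.Ico_zero_eq_range]
      exact div_le_div_of_nonneg_right (not_lt.1 hsum) st.hM.le
    · have := hF 0 m le_rfl (Nat.zero_le _) le_rfl
      rw [hg.u0, hg.um, hg.pos0, hg.posm] at this
      refine this.le ?_
      have := Nat.mul_le_mul_right e hg.mR
      simp only [Nat.sub_zero]
      omega

lemma finish [Nonempty V] (st : Setup G H0 U Z C cl r e rad c M) (R : ℕ) (T W : ℝ) (hT : 0 < T)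
    (hTW : T / (2 * c + 1) ≤ W) (hW : ∑ z ∈ Z, ((C z).card : ℝ) ≤ W) :
    ∃ H ≤ G, ec H ≤ ec H0 + (2 * c + 1) / M *
        (W / (T / (2 * c + 1)) * (Real.log (2 * (Fintype.card V : ℝ) ^ 2) + 1) * W) ∧
      ∀ s t δ, IsD G s t δ → δ ≤ R * r → s ∈ U → ∃ F ≤ G, ec F ≤ 2 * T / M ∧
        WD (H ⊔ F) s t (δ + (R * e + 6 * rad + 2 * (4 * rad + R * e))) := by
  classical
  let easy : V × V → Prop := fun p => ∀ δ, IsD G p.1 p.2 δ →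
    ∃ F ≤ G, ec F ≤ 2 * T / M ∧ WD (H0 ⊔ F) p.1 p.2 (δ + R * e)
  let I : Finset (V × V) := Finset.univ.filter (fun p => p.1 ∈ U ∧ ¬ easy p ∧
    ∃ δ, δ ≤ R * r ∧ IsD G p.1 p.2 δ)
  have hex : ∀ p : V × V, p ∈ I → ∃ A B : Finset V, A ⊆ Z ∧ B ⊆ Z ∧
      T / (2 * c + 1) ≤ ∑ z ∈ A, ((C z).card : ℝ) ∧
      T / (2 * c + 1) ≤ ∑ z ∈ B, ((C z).card : ℝ) ∧
      ∀ δ, IsD G p.1 p.2 δ →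
      ∀ z1 ∈ A, ∀ z2 ∈ B, ∃ x1 x2 δ', x1 ∈ U ∧ IsD G x1 x2 δ' ∧ δ' ≤ R * r ∧ x1 ∈ C z1 ∧
        x2 ∈ C z2 ∧ ∃ F ≤ G, ec F ≤ 2 * T / M ∧ ∃ e1 e2, WD (H0 ⊔ F) p.1 x1 e1 ∧
          WD (H0 ⊔ F) x2 p.2 e2 ∧ e1 + δ' + e2 ≤ δ + R * e := by
    intro p hp
    obtain ⟨-, hpU, hne, δ, hδ, hD⟩ := Finset.mem_filter.1 hp
    have huniq : ∀ δ', IsD G p.1 p.2 δ' → δ' = δ := fun δ' h' =>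
      le_antisymm (h'.2 _ hD.1) (hD.2 _ h'.1)
    rcases routes st T hT.le p.1 p.2 δ hD hδ hpU with h | ⟨A, B, h1, h2, h3, h4, h5⟩
    · exact absurd (fun δ' h' => by rw [huniq δ' h']; exact h) hne
    · exact ⟨A, B, h1, h2, h3, h4, fun δ' h' => by rw [huniq δ' h']; exact h5⟩
  choose! A B hA hB hAw hBw hAB using hex
  have hc : (0 : ℝ) < 2 * c + 1 := by positivity
  have hτ : 0 < T / (2 * c + 1) := by positivity
  have hcard : (1 : ℝ) ≤ Fintype.card V := by exact_mod_cast Fintype.card_pos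
  obtain ⟨S, hSZ, hSc, hShit⟩ := hitting Z (fun z => ((C z).card : ℝ))
    (I ×ˢ (Finset.univ : Finset Bool)) (fun q => if q.2 then A q.1 else B q.1)
    (by
      intro q hq
      have := (Finset.mem_product.1 hq).1
      split_ifs
      · exact hA _ this
      · exact hB _ this)
    (T / (2 * c + 1)) W (2 * (Fintype.card V : ℝ) ^ 2) (by linarith) hTW
    (by
      intro q hq
      have := (Finset.mem_product.1 hq).1
      split_ifs
      · exact hAw _ this
      · exact hBw _ this) hW (fun _ _ => by positivity) hτ (by nlinarith)
    (by
      rw [Finset.card_product]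
      have : I.card ≤ Fintype.card V ^ 2 := by
        have := Finset.card_le_univ I
        rwa [Fintype.card_prod, ← sq] at this
      have h2 : I.card * (Finset.univ : Finset Bool).card ≤ 2 * Fintype.card V ^ 2 := by
        simp only [Finset.card_univ, Fintype.card_bool]
        omega
      exact_mod_cast h2)
  obtain ⟨H, hH0, hHG, hHe, hH⟩ := pathbuy st R S hSZ
  refine ⟨H, hHG, hHe.trans ?_, ?_⟩
  · have hK : (0 : ℝ) ≤ (2 * c + 1) / M := div_nonneg hc.le st.hM.le
    have h1 : (S.card : ℝ) * ∑ z ∈ Z, ((C z).card : ℝ) ≤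
        W / (T / (2 * c + 1)) * (Real.log (2 * (Fintype.card V : ℝ) ^ 2) + 1) * W :=
      mul_le_mul hSc hW (Finset.sum_nonneg (fun _ _ => by positivity))
        ((Nat.cast_nonneg _).trans hSc)
    have := mul_le_mul_of_nonneg_left h1 hK
    linarith
  · intro s t δ hD hδ hs
    by_cases he : easy (s, t)
    · obtain ⟨F, hF, hFe, hW⟩ := he δ hD
      exact ⟨F, hF, hFe, (hW.mono (sup_le_sup_right hH0 _)).le (by omega)⟩
    · have hp : (s, t) ∈ I := Finset.mem_filter.2 ⟨Finset.mem_univ _, hs, he, δ, hδ, hD⟩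
      obtain ⟨z1, hz1, hz1S⟩ := hShit ((s, t), true)
        (Finset.mem_product.2 ⟨hp, Finset.mem_univ _⟩)
      obtain ⟨z2, hz2, hz2S⟩ := hShit ((s, t), false)
        (Finset.mem_product.2 ⟨hp, Finset.mem_univ _⟩)
      simp only [if_true] at hz1
      simp only [Bool.false_eq_true, if_false] at hz2
      obtain ⟨x1, x2, δ', hx1, hD', hδ', hx1z, hx2z, F, hFG, hFe, e1, e2, hw1, hw2, hsum⟩ :=
        hAB (s, t) hp δ hD z1 hz1 z2 hz2
      have hmid := hH x1 x2 δ' z1 z2 hD' hδ' hx1 hz1S hz2S hx1z hx2z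
      refine ⟨F, hFG, hFe, ?_⟩
      have hle : H0 ⊔ F ≤ H ⊔ F := sup_le_sup_right hH0 _
      refine (((hw1.mono hle).trans (hmid.mono le_sup_left)).trans (hw2.mono hle)).le ?_
      omega

/-- additive error at level `k` -/
def err (c R : ℕ) : ℕ → ℕ
  | 0 => 0
  | k + 1 => R * err c R k + 6 * (c * R ^ k) + 2 * (4 * (c * R ^ k) + R * err c R k)

lemma ec_le_sq (G : SimpleGraph V) (U : Finset V) (hU : ∀ x y, G.Adj x y → x ∈ U) :
    ec G ≤ (U.card : ℝ) * U.card := by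
  classical
  have hsub : G.edgeSet ⊆ ((U ×ˢ U).image (fun p => s(p.1, p.2)) : Finset (Sym2 V)) := by
    intro x hx
    induction x with
    | h a b =>
      have hab : G.Adj a b := hx
      exact Finset.mem_coe.2 (Finset.mem_image.2
        ⟨(a, b), Finset.mem_product.2 ⟨hU _ _ hab, hU _ _ hab.symm⟩, rfl⟩)
  have h1 := Set.ncard_le_ncard hsub
  rw [Set.ncard_coe_finset] at h1
  have h2 := h1.trans Finset.card_image_le
  rw [Finset.card_product] at h2
  unfold ec
  exact_mod_cast h2

theorem level [Nonempty V] (β : ℝ) (J : ℕ) (hβ1 : 1 ≤ β) (hJ : 1 ≤ J)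
    (hβ : (Fintype.card V : ℝ) ≤ β ^ J) (R : ℕ) (hR : 1 ≤ R) (d : ℝ) (hd : 1 ≤ d) (Q : ℝ)
    (hQ : Q = 2 * (2 * 4 ^ J + 1) ^ 2 * (Real.log (2 * (Fintype.card V : ℝ) ^ 2) + 1)) (k : ℕ) :
    ∀ (G : SimpleGraph V) (U : Finset V), (∀ x y, G.Adj x y → x ∈ U) →
    ∃ H ≤ G, ec H ≤ (1 + 2 * k) * Q * β ^ (k + 1) * (U.card * d) ∧
      ∀ s t δ, IsD G s t δ → δ ≤ R ^ k → ∃ F ≤ G, ec F ≤ U.card / d ^ (2 ^ (k + 1) - 1) ∧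
        WD (H ⊔ F) s t (δ + err (4 ^ J) R k) := by
  classical
  have hcard : (1 : ℝ) ≤ Fintype.card V := by exact_mod_cast Fintype.card_pos
  have hlog : 0 ≤ Real.log (2 * (Fintype.card V : ℝ) ^ 2) := Real.log_nonneg (by nlinarith)
  have hQ1 : 1 ≤ Q := by
    rw [hQ]
    have h1 : (1 : ℝ) ≤ 2 * 4 ^ J + 1 := by
      have : (0 : ℝ) < 4 ^ J := by positivity
      linarith
    nlinarith [one_le_pow₀ (n := 2) h1]
  have hd0 : 0 < d := by linarith
  induction k with
  | zero =>
    intro G U hU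
    have hUd : 0 ≤ (U.card : ℝ) * d := by positivity
    by_cases hcase : (U.card : ℝ) < d
    · refine ⟨G, le_rfl, ?_, ?_⟩
      · have h1 := ec_le_sq G U hU
        have h2 : (U.card : ℝ) * U.card ≤ U.card * d :=
          mul_le_mul_of_nonneg_left hcase.le (by positivity)
        have h3 : (1 : ℝ) ≤ Q * β := by nlinarith
        have h4 : (1 + 2 * ((0 : ℕ) : ℝ)) * Q * β ^ (0 + 1) = Q * β := by push_cast; ring
        rw [h4]
        nlinarith
      · intro s t δ hD _
        refine ⟨⊥, bot_le, ?_, (hD.1.mono le_sup_left).le (by omega)⟩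
        rw [ec_bot]; positivity
    · refine ⟨⊥, bot_le, ?_, ?_⟩
      · rw [ec_bot]; positivity
      · intro s t δ hD hδ
        by_cases hst : s = t
        · refine ⟨⊥, bot_le, ?_, ?_⟩
          · rw [ec_bot]; positivity
          · rw [hst]; exact WD.refl _ _ _
        · have hpos := hD.pos_of_ne hst
          obtain rfl : δ = 0 + 1 := by rw [pow_zero] at hδ; omega
          obtain ⟨w, hw, hadj⟩ := hD.1.succ hst
          have := hw.zero
          subst this
          refine ⟨SimpleGraph.fromEdgeSet {s(s, t)}, ?_, ?_, ?_⟩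
          · intro a b hab
            rw [SimpleGraph.fromEdgeSet_adj] at hab
            have := hab.1
            rw [Set.mem_singleton_iff, Sym2.eq_iff] at this
            rcases this with ⟨rfl, rfl⟩ | ⟨rfl, rfl⟩
            · exact hadj
            · exact hadj.symm
          · have h1 : ec (SimpleGraph.fromEdgeSet {s(s, t)}) ≤ 1 := by
              unfold ec
              rw [SimpleGraph.edgeSet_fromEdgeSet]
              have : (({s(s, t)} : Set (Sym2 V)) \ Sym2.diagSet).ncard ≤
                ({s(s, t)} : Set (Sym2 V)).ncard := Set.ncard_le_ncard Set.sdiff_subset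
              rw [Set.ncard_singleton] at this
              exact_mod_cast this
            refine h1.trans ?_
            norm_num
            rw [le_div_iff₀ hd0]
            linarith
          · refine ((WD.adj ?_).mono le_sup_right).le (by omega)
            rw [SimpleGraph.fromEdgeSet_adj]
            exact ⟨rfl, hst⟩
  | succ k ih =>
    intro G U hU
    rcases Finset.eq_empty_or_nonempty U with hU0 | hUne
    · refine ⟨⊥, bot_le, ?_, ?_⟩
      · rw [ec_bot]; positivity
      · intro s t δ hD _
        have hst : s = t := by
          by_contra hne
          have := mem_of_ne hU hD.1 hne
          rw [hU0] at this
          simp at this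
        refine ⟨⊥, bot_le, ?_, ?_⟩
        · rw [ec_bot]; positivity
        · rw [hst]; exact WD.refl _ _ _
    have hUpos : (0 : ℝ) < U.card := by exact_mod_cast Finset.card_pos.2 hUne
    have hr : 1 ≤ R ^ k := Nat.one_le_pow _ _ hR
    obtain ⟨Z, C, cl, hCU, htree, hcl, hsum⟩ := cover G U hU (R ^ k) hr β J hβ1 hJ hβ
    have hih := fun z => ih (restr G (C z)) (C z) (fun x y h => h.2.1)
    choose Hz hHzG hHze hHz using hih
    choose! Tz hTzG hTze hTz using htree
    set a : ℝ := (1 + 2 * k) * Q * β ^ (k + 1) with ha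
    have ha0 : 0 ≤ a := by positivity
    set H0 := Z.sup (fun z => Hz z ⊔ Tz z) with hH0
    have hHle : ∀ z ∈ Z, Hz z ⊔ Tz z ≤ H0 := fun z hz =>
      Finset.le_sup (f := fun z => Hz z ⊔ Tz z) hz
    have hH0e : ec H0 ≤ (a * d + 1) * (β * U.card) := by
      refine (ec_finset_sup_le _ _).trans ?_
      have h1 : ∀ z ∈ Z, ec (Hz z ⊔ Tz z) ≤ (a * d + 1) * ((C z).card : ℝ) := by
        intro z hz
        refine (ec_sup_le _ _).trans ?_
        have h1 := hHze z
        have h2 := hTze z hz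
        nlinarith
      refine (Finset.sum_le_sum h1).trans ?_
      rw [← Finset.mul_sum]
      exact mul_le_mul_of_nonneg_left hsum (by positivity)
    set M : ℝ := d ^ (2 ^ (k + 1) - 1) with hM
    have hM0 : 0 < M := by positivity
    have st : Setup G H0 U Z C cl (R ^ k) (err (4 ^ J) R k) (4 ^ J * R ^ k) (4 ^ J) M :=
      { hU := hU
        hr := hr
        hM := hM0
        hrad := le_rfl
        H0le := Finset.sup_le fun z hz => sup_le ((hHzG z).trans (restr_le _ _)) (hTzG z hz)
        cen := fun z hz x hx => (hTz z hz x hx).mono (le_sup_right.trans (hHle z hz))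
        clZ := fun v hv => (hcl v hv).1
        clmem := fun v hv => (hcl v hv).2
        seg := by
          intro x hx y δ hxy hδ
          have h1 : WD (restr G (C (cl x))) x y δ :=
            hxy.restr (fun w hw => (hcl x hx).2 w (hw.le hδ))
          obtain ⟨m, hmδ, hm⟩ := h1.exists_isD
          obtain ⟨F, hFG, hFe, hF⟩ := hHz (cl x) x y m hm (hmδ.trans hδ)
          refine ⟨F, hFG.trans (restr_le _ _), hFe, ?_⟩
          refine (hF.mono (sup_le_sup_right ?_ _)).le (by omega)
          exact le_sup_left.trans (hHle _ (hcl x hx).1) }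
    have hc1 : (1 : ℝ) ≤ 2 * ((4 ^ J : ℕ) : ℝ) + 1 := by
      have : (0 : ℝ) ≤ ((4 ^ J : ℕ) : ℝ) := by positivity
      linarith
    have hdp : 1 ≤ d ^ (2 ^ (k + 1)) := one_le_pow₀ hd
    obtain ⟨H, hHG, hHe, hH⟩ := finish st R ((U.card : ℝ) / (2 * d ^ (2 ^ (k + 1))))
      (β * U.card) (by positivity) (by
        have h1 : (U.card : ℝ) / (2 * d ^ (2 ^ (k + 1))) ≤ U.card :=
          div_le_self hUpos.le (by linarith)
        have h2 : (U.card : ℝ) / (2 * d ^ (2 ^ (k + 1))) / (2 * ((4 ^ J : ℕ) : ℝ) + 1) ≤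
          (U.card : ℝ) / (2 * d ^ (2 ^ (k + 1))) := div_le_self (by positivity) hc1
        nlinarith) hsum
    have hpow : d ^ (2 ^ (k + 1)) = M * d := by
      rw [hM, ← pow_succ]
      congr 1
      have : 0 < 2 ^ (k + 1) := by positivity
      omega
    refine ⟨H, hHG, hHe.trans ?_, ?_⟩
    · have h1 : (2 * ((4 ^ J : ℕ) : ℝ) + 1) / M *
          (β * U.card / ((U.card : ℝ) / (2 * d ^ (2 ^ (k + 1))) / (2 * ((4 ^ J : ℕ) : ℝ) + 1)) *
          (Real.log (2 * (Fintype.card V : ℝ) ^ 2) + 1) * (β * U.card)) =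
          Q * β ^ 2 * (U.card * d) := by
        rw [hpow, hQ]
        push_cast
        field_simp
      rw [h1]
      have hUd : (0 : ℝ) < U.card * d := by positivity
      have hb : β ^ 2 ≤ β ^ (k + 2) := pow_le_pow_right₀ hβ1 (by omega)
      have hb1 : β ≤ β ^ (k + 2) := le_self_pow₀ hβ1 (by omega)
      have e1 : (a * d + 1) * (β * U.card) ≤ ((1 + 2 * k) * Q * β ^ (k + 2) + β) * (U.card * d) := by
        have : (a * d + 1) * (β * U.card) ≤ (a * d + d) * (β * U.card) :=
          mul_le_mul_of_nonneg_right (by linarith) (by positivity)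
        refine this.trans (le_of_eq ?_)
        rw [ha]; ring
      have e2 : (1 + 2 * k) * Q * β ^ (k + 2) + β + Q * β ^ 2 ≤
          (1 + 2 * ((k + 1 : ℕ) : ℝ)) * Q * β ^ (k + 1 + 1) := by
        have h2 : Q * β ^ 2 ≤ Q * β ^ (k + 2) := mul_le_mul_of_nonneg_left hb (by linarith)
        have h3 : β ^ (k + 2) ≤ Q * β ^ (k + 2) := le_mul_of_one_le_left (by positivity) hQ1
        have h4 : (1 + 2 * ((k + 1 : ℕ) : ℝ)) * Q * β ^ (k + 1 + 1) =
          (1 + 2 * k) * Q * β ^ (k + 2) + 2 * (Q * β ^ (k + 2)) := by push_cast; ring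
        rw [h4]
        linarith
      have e3 := mul_le_mul_of_nonneg_right e2 hUd.le
      nlinarith
    · intro s t δ hD hδ
      by_cases hst : s = t
      · refine ⟨⊥, bot_le, ?_, ?_⟩
        · rw [ec_bot]; positivity
        · rw [hst]; exact WD.refl _ _ _
      · obtain ⟨F, hFG, hFe, hF⟩ := hH s t δ hD (by rw [pow_succ, mul_comm] at hδ; exact hδ)
          (mem_of_ne hU hD.1 hst)
        refine ⟨F, hFG, hFe.trans (le_of_eq ?_), hF⟩
        have hp2 : d ^ (2 ^ (k + 1 + 1) - 1) = d ^ (2 ^ (k + 1)) * M := by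
          rw [hM, ← pow_add]
          congr 1
          have : 0 < 2 ^ (k + 1) := by positivity
          rw [pow_succ 2 (k + 1)]
          omega
        rw [hp2]
        field_simp

end level

section final

lemma err_bound (c R k : ℕ) :
    err c R (k + 1) + 7 * (c * R ^ k) = 7 * 3 ^ (k + 1) * (c * R ^ k) := by
  induction k with
  | zero => simp [err]; ring
  | succ k ih =>
    have h : err c R (k + 1 + 1) = R * err c R (k + 1) + 6 * (c * R ^ (k + 1)) +
      2 * (4 * (c * R ^ (k + 1)) + R * err c R (k + 1)) := rfl
    rw [h]
    have h2 : 3 * R * (err c R (k + 1) + 7 * (c * R ^ k)) =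
      3 * R * (7 * 3 ^ (k + 1) * (c * R ^ k)) := by rw [ih]
    calc _ = 3 * R * (err c R (k + 1) + 7 * (c * R ^ k)) := by ring
      _ = _ := by rw [h2]; ring

lemma const_bound (k : ℕ) (hk : 1 ≤ k) (ε : ℝ) (hε : 0 < ε) (hε1 : ε < 1) :
    (7 * 3 ^ k * 4 ^ ⌈1 / ε⌉₊ * 2 ^ k : ℝ) ≤ (2 : ℝ) ^ ((30 * (k : ℝ)) / ε) := by
  set J := ⌈1 / ε⌉₊
  have hJ : (J : ℝ) ≤ 1 / ε + 1 := (Nat.ceil_lt_add_one (by positivity)).le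
  have h1 : (7 * 3 ^ k * 4 ^ J * 2 ^ k : ℝ) ≤ 2 ^ (3 + 2 * k + 2 * J + k) := by
    have h7 : (7 : ℝ) ≤ 2 ^ 3 := by norm_num
    have h3 : (3 : ℝ) ^ k ≤ 2 ^ (2 * k) := by
      rw [pow_mul]; exact pow_le_pow_left₀ (by norm_num) (by norm_num) _
    have h4 : (4 : ℝ) ^ J = 2 ^ (2 * J) := by rw [pow_mul]; norm_num
    rw [pow_add, pow_add, pow_add, h4]
    gcongr
  refine h1.trans ?_
  rw [← Real.rpow_natCast]
  refine Real.rpow_le_rpow_of_exponent_le (by norm_num) ?_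
  push_cast
  have hx : 1 ≤ 1 / ε := by rw [le_div_iff₀ hε]; linarith
  have hk' : (1 : ℝ) ≤ k := by exact_mod_cast hk
  have : 30 * (k : ℝ) / ε = 30 * (k * (1 / ε)) := by ring
  rw [this]
  nlinarith [mul_le_mul hk' hx (by norm_num) (by linarith)]

lemma scale_bound (k : ℕ) (δ i : ℕ) (h : (2 ^ i) ^ (k + 1) ≤ δ) :
    (((2 : ℕ) ^ i) ^ k : ℝ) ≤ (δ : ℝ) ^ ((1 : ℝ) - 1 / ((k + 1 : ℕ) : ℝ)) := by
  have hk : (0 : ℝ) < ((k + 1 : ℕ) : ℝ) := by positivity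
  have h1 : (((2 : ℝ) ^ i) ^ (k + 1)) ≤ δ := by exact_mod_cast h
  have he : (0 : ℝ) ≤ (1 : ℝ) - 1 / ((k + 1 : ℕ) : ℝ) := by
    rw [sub_nonneg, div_le_one hk]; push_cast
    have : (0 : ℝ) ≤ k := by positivity
    linarith
  have h2 := Real.rpow_le_rpow (by positivity) h1 he
  refine le_trans (le_of_eq ?_) h2
  rw [← Real.rpow_natCast (((2 : ℝ) ^ i)) (k + 1), ← Real.rpow_mul (by positivity)]
  have : ((k + 1 : ℕ) : ℝ) * ((1 : ℝ) - 1 / ((k + 1 : ℕ) : ℝ)) = (k : ℕ) := by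
    field_simp
    push_cast
    ring
  rw [this, Real.rpow_natCast]
  norm_num

theorem main (k : ℕ) (hk : 1 ≤ k) (ε : ℝ) (hε : 0 < ε) (hε1 : ε < 1) (q K : ℝ)
    (hq : q = 2 + 2 / ε) (hK : K = 2 * (2 * 4 ^ ⌈1 / ε⌉₊ + 1) ^ 2 * q)
    (V : Type) [Fintype V] (G : SimpleGraph V) (P : Finset (V × V)) (hP : P.Nonempty) :
    ∃ H : SimpleGraph V, H ≤ G ∧
      ec H ≤ q * ((1 + 2 * k) * K + 1) * (Fintype.card V : ℝ) ^ ((1 : ℝ) + 10 * (k : ℝ) * ε) *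
              (P.card : ℝ) ^ ((1 : ℝ) / 2 ^ (k + 1)) ∧
      ∀ p ∈ P, ∀ δ, IsD G p.1 p.2 δ → δ < Fintype.card V →
        ∃ j, (∀ i < j, (2 ^ i) ^ k < δ) ∧ WD H p.1 p.2 (δ + err (4 ^ ⌈1 / ε⌉₊) (2 ^ j) k) := by
  classical
  obtain ⟨p0, hp0⟩ := hP
  have : Nonempty V := ⟨p0.1⟩
  set J := ⌈1 / ε⌉₊ with hJ
  set N : ℝ := (Fintype.card V : ℝ) with hN
  set d : ℝ := (P.card : ℝ) ^ ((1 : ℝ) / 2 ^ (k + 1)) with hd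
  have hN1 : 1 ≤ N := by rw [hN]; exact_mod_cast Fintype.card_pos
  have hN0 : 0 < N := by linarith
  have hP1 : (1 : ℝ) ≤ P.card := by exact_mod_cast Finset.card_pos.2 ⟨p0, hp0⟩
  have hd1 : 1 ≤ d := Real.one_le_rpow hP1 (by positivity)
  have hd0 : 0 < d := by linarith
  have hdP : d ^ (2 ^ (k + 1)) = P.card := by
    rw [hd, ← Real.rpow_natCast, ← Real.rpow_mul (by positivity)]
    push_cast
    rw [one_div, inv_mul_cancel₀ (by positivity), Real.rpow_one]
  set β : ℝ := N ^ ε with hβ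
  have hβ1 : 1 ≤ β := Real.one_le_rpow hN1 hε.le
  have hJ1 : 1 ≤ J := Nat.one_le_iff_ne_zero.2 (Nat.ceil_pos.2 (by positivity)).ne'
  have hβJ : N ≤ β ^ J := by
    rw [hβ, ← Real.rpow_natCast, ← Real.rpow_mul hN0.le]
    refine Real.self_le_rpow_of_one_le hN1 ?_
    have := Nat.le_ceil (1 / ε)
    rw [div_le_iff₀ hε] at this
    rw [mul_comm]; exact this
  have hlogN : Real.log N ≤ β / ε := Real.log_le_rpow_div hN0.le hε
  have hlog2 : Real.log 2 ≤ 1 := by linarith [Real.log_two_lt_d9]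
  have hlog2' : 1 / 2 ≤ Real.log 2 := by linarith [Real.log_two_gt_d9]
  have hq1 : 1 ≤ q := by
    rw [hq]
    have : 0 < 2 / ε := by positivity
    linarith
  have hqβ : 2 * (β / ε) + 2 ≤ q * β := by
    rw [hq]
    have : (2 + 2 / ε) * β = 2 * β + 2 * (β / ε) := by ring
    rw [this]; linarith
  set Q : ℝ := 2 * (2 * 4 ^ J + 1) ^ 2 * (Real.log (2 * N ^ 2) + 1) with hQ
  have hQle : Q ≤ K * β := by
    rw [hQ, hK, mul_assoc _ q β]
    refine mul_le_mul_of_nonneg_left ?_ (by positivity)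
    rw [Real.log_mul (by norm_num) (by positivity), Real.log_pow]
    push_cast
    linarith
  set n := Nat.log 2 (Fintype.card V) + 2 with hn
  have hnle : (n : ℝ) ≤ q * β := by
    have h1 : 2 ^ Nat.log 2 (Fintype.card V) ≤ Fintype.card V :=
      Nat.pow_log_le_self 2 Fintype.card_ne_zero
    have h2 : (2 : ℝ) ^ Nat.log 2 (Fintype.card V) ≤ N := by rw [hN]; exact_mod_cast h1
    have h3 := Real.log_le_log (by positivity) h2
    rw [Real.log_pow] at h3
    rw [hn]; push_cast
    have h4 : (0 : ℝ) ≤ (Nat.log 2 (Fintype.card V) : ℝ) := by positivity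
    nlinarith
  have hlev := fun j : ℕ => level (V := V) β J hβ1 hJ1 hβJ (2 ^ j) Nat.one_le_two_pow d hd1 Q hQ k
    G Finset.univ (fun _ _ _ => Finset.mem_univ _)
  choose Hj hHjG hHje hHj using hlev
  have hF : ∀ (j : ℕ) (p : V × V), ∃ F ≤ G, ec F ≤ N / d ^ (2 ^ (k + 1) - 1) ∧
      ∀ δ, IsD G p.1 p.2 δ → δ ≤ (2 ^ j) ^ k →
        WD (Hj j ⊔ F) p.1 p.2 (δ + err (4 ^ J) (2 ^ j) k) := by
    intro j p
    by_cases hex : ∃ δ, IsD G p.1 p.2 δ ∧ δ ≤ (2 ^ j) ^ k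
    · obtain ⟨δ, hD, hδ⟩ := hex
      obtain ⟨F, h1, h2, h3⟩ := hHj j p.1 p.2 δ hD hδ
      refine ⟨F, h1, by simpa using h2, fun δ' hD' _ => ?_⟩
      obtain rfl : δ' = δ := le_antisymm (hD'.2 _ hD.1) (hD.2 _ hD'.1)
      exact h3
    · refine ⟨⊥, bot_le, by rw [ec_bot]; positivity, fun δ h1 h2 => absurd ⟨δ, h1, h2⟩ hex⟩
  choose F hFG hFe hFW using hF
  refine ⟨(Finset.range n).sup (fun j => Hj j ⊔ P.sup (F j)), ?_, ?_, ?_⟩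
  · exact Finset.sup_le fun j _ => sup_le (hHjG j) (Finset.sup_le fun p _ => hFG j p)
  · have hone : ∀ j ∈ Finset.range n, ec (Hj j ⊔ P.sup (F j)) ≤
        ((1 + 2 * k) * Q * β ^ (k + 1) + 1) * (N * d) := by
      intro j _
      refine (ec_sup_le _ _).trans ?_
      have h1 := hHje j
      rw [Finset.card_univ] at h1
      have h2 : ec (P.sup (F j)) ≤ N * d := by
        refine (ec_finset_sup_le _ _).trans ((Finset.sum_le_sum fun p _ => hFe j p).trans ?_)
        rw [Finset.sum_const, nsmul_eq_mul, ← hdP]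
        have : d ^ (2 ^ (k + 1)) = d ^ (2 ^ (k + 1) - 1) * d := by
          rw [← pow_succ]
          congr 1
          have : 0 < 2 ^ (k + 1) := by positivity
          omega
        rw [this]
        refine le_of_eq ?_
        field_simp
      linarith
    have htot := (ec_finset_sup_le (Finset.range n) (fun j => Hj j ⊔ P.sup (F j))).trans
      (Finset.sum_le_sum hone)
    rw [Finset.sum_const, Finset.card_range, nsmul_eq_mul] at htot
    refine htot.trans ?_
    have hK0 : 0 ≤ K := by rw [hK]; positivity
    have hb : (1 + 2 * (k : ℝ)) * Q * β ^ (k + 1) + 1 ≤ ((1 + 2 * k) * K + 1) * β ^ (k + 2) := by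
      have h1 : (1 + 2 * (k : ℝ)) * Q * β ^ (k + 1) ≤ (1 + 2 * k) * (K * β) * β ^ (k + 1) := by
        gcongr
      have h2 : 1 ≤ β ^ (k + 2) := one_le_pow₀ hβ1
      have h3 : (1 + 2 * (k : ℝ)) * (K * β) * β ^ (k + 1) = (1 + 2 * k) * K * β ^ (k + 2) := by ring
      linarith
    have hβpow : β ^ (k + 3) * N ≤ N ^ ((1 : ℝ) + 10 * (k : ℝ) * ε) := by
      rw [Real.rpow_add hN0, Real.rpow_one, mul_comm]
      refine mul_le_mul_of_nonneg_left ?_ hN0.le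
      rw [hβ, ← Real.rpow_natCast, ← Real.rpow_mul hN0.le]
      refine Real.rpow_le_rpow_of_exponent_le hN1 ?_
      have hk' : (1 : ℝ) ≤ k := by exact_mod_cast hk
      push_cast
      nlinarith
    calc (n : ℝ) * (((1 + 2 * k) * Q * β ^ (k + 1) + 1) * (N * d))
        ≤ (q * β) * ((((1 + 2 * k) * K + 1) * β ^ (k + 2)) * (N * d)) := by
          have hNd : 0 < N * d := by positivity
          have hpos : 0 ≤ ((1 + 2 * (k : ℝ)) * K + 1) * β ^ (k + 2) := by positivity
          have hm := mul_le_mul_of_nonneg_right hb hNd.le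
          have h5 : (0 : ℝ) ≤ n := by positivity
          refine (mul_le_mul_of_nonneg_left hm h5).trans ?_
          exact mul_le_mul_of_nonneg_right hnle (mul_nonneg hpos hNd.le)
      _ = q * ((1 + 2 * k) * K + 1) * (β ^ (k + 3) * N) * d := by ring
      _ ≤ q * ((1 + 2 * k) * K + 1) * N ^ ((1 : ℝ) + 10 * (k : ℝ) * ε) * d := by
          have : 0 ≤ q * ((1 + 2 * (k : ℝ)) * K + 1) := by positivity
          exact mul_le_mul_of_nonneg_right (mul_le_mul_of_nonneg_left hβpow this) hd0.le
  · intro p hp δ hD hδ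
    have h0 : δ ≤ (2 ^ (Nat.log 2 (Fintype.card V) + 1)) ^ k := by
      have h1 : Fintype.card V < 2 ^ (Nat.log 2 (Fintype.card V) + 1) :=
        Nat.lt_pow_succ_log_self (by norm_num) _
      have h2 : 2 ^ (Nat.log 2 (Fintype.card V) + 1) ≤
          (2 ^ (Nat.log 2 (Fintype.card V) + 1)) ^ k := Nat.le_self_pow (by omega) _
      omega
    have hex : ∃ j, δ ≤ (2 ^ j) ^ k := ⟨_, h0⟩
    have hjn : Nat.find hex < n := by
      have := Nat.find_min' hex h0
      omega
    refine ⟨Nat.find hex, fun i hi => not_le.1 (Nat.find_min hex hi), ?_⟩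
    refine (hFW (Nat.find hex) p δ hD (Nat.find_spec hex)).mono ?_
    refine le_trans ?_ (Finset.le_sup (f := fun j => Hj j ⊔ P.sup (F j))
      (Finset.mem_range.2 hjn))
    exact sup_le_sup_left (Finset.le_sup hp) _

end final
end PSAS

/-- **Pairwise sublinear additive spanners.**
For every integer `k ≥ 1` and `0 < ε < 1`, there is a constant `C` (depending
only on `k` and `ε`) such that: for every finite simple graph `G` on `n`
vertices and every finite set `P` of (ordered) pairs of vertices, there is a
subgraph `H ⊆ G` with at most
`C · 2^(2k/ε) · n^(1 + 10kε) · |P|^(1/2^(k+1))` edges such that for every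
`(s,t) ∈ P` with `s, t` connected in `G`,
`dist_H(s,t) ≤ dist_G(s,t) + 2^(30k/ε) · dist_G(s,t)^(1 − 1/k)`. -/
theorem pairwise_sublinear_additive_spanner
    (k : ℕ) (hk : 1 ≤ k) (ε : ℝ) (hε : 0 < ε) (hε1 : ε < 1) :
    ∃ C : ℝ, 0 < C ∧
      ∀ (V : Type) [Fintype V] (G : SimpleGraph V) (P : Finset (V × V)),
        ∃ H : SimpleGraph V, H ≤ G ∧
          (H.edgeSet.ncard : ℝ) ≤
            C * (2 : ℝ) ^ ((2 * (k : ℝ)) / ε) *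
              (Fintype.card V : ℝ) ^ ((1 : ℝ) + 10 * (k : ℝ) * ε) *
              (P.card : ℝ) ^ ((1 : ℝ) / 2 ^ (k + 1)) ∧
          ∀ p ∈ P, G.Reachable p.1 p.2 →
            H.Reachable p.1 p.2 ∧
            (H.dist p.1 p.2 : ℝ) ≤ (G.dist p.1 p.2 : ℝ) +
              (2 : ℝ) ^ ((30 * (k : ℝ)) / ε) *
                (G.dist p.1 p.2 : ℝ) ^ ((1 : ℝ) - 1 / (k : ℝ)) := by

  classical
  set q : ℝ := 2 + 2 / ε with hq
  set K : ℝ := 2 * (2 * 4 ^ ⌈1 / ε⌉₊ + 1) ^ 2 * q with hK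
  have hq0 : 0 < q := by positivity
  refine ⟨q * ((1 + 2 * k) * K + 1), by positivity, ?_⟩
  intro V _ G P
  have htwo : (1 : ℝ) ≤ (2 : ℝ) ^ ((2 * (k : ℝ)) / ε) :=
    Real.one_le_rpow (by norm_num) (by positivity)
  rcases Finset.eq_empty_or_nonempty P with rfl | hP
  · refine ⟨⊥, bot_le, ?_, by simp⟩
    simp only [SimpleGraph.edgeSet_bot, Set.ncard_empty, Nat.cast_zero]
    positivity
  obtain ⟨H, hHG, hHe, hH⟩ := PSAS.main k hk ε hε hε1 q K hq hK V G P hP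
  refine ⟨H, hHG, ?_, ?_⟩
  · refine le_trans hHe ?_
    refine mul_le_mul_of_nonneg_right (mul_le_mul_of_nonneg_right ?_ (by positivity))
      (by positivity)
    exact le_mul_of_one_le_right (by positivity) htwo
  · intro p hp hreach
    obtain ⟨w, hw⟩ := hreach.exists_walk_length_eq_dist
    have hD : PSAS.IsD G p.1 p.2 (G.dist p.1 p.2) :=
      ⟨⟨w, hw.le⟩, fun m ⟨w', hw'⟩ => (SimpleGraph.dist_le w').trans hw'⟩
    have hcard : G.dist p.1 p.2 < Fintype.card V := by
      obtain ⟨w', hw', hlen⟩ := hreach.exists_path_of_dist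
      rw [← hlen]
      exact hw'.length_lt
    obtain ⟨j, hj, ⟨w2, hw2⟩⟩ := hH p hp _ hD hcard
    refine ⟨⟨w2⟩, ?_⟩
    by_cases h0 : G.dist p.1 p.2 = 0
    · have heq : p.1 = p.2 := (hreach.dist_eq_zero_iff).1 h0
      rw [heq, SimpleGraph.dist_self]
      push_cast
      positivity
    set δ := G.dist p.1 p.2 with hδ
    have h1 : (H.dist p.1 p.2 : ℝ) ≤ δ + (PSAS.err (4 ^ ⌈1 / ε⌉₊) (2 ^ j) k : ℕ) := by
      exact_mod_cast (SimpleGraph.dist_le w2).trans hw2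
    refine h1.trans (add_le_add_right ?_ _)
    obtain ⟨k', rfl⟩ : ∃ k', k = k' + 1 := ⟨k - 1, by omega⟩
    have h2 := PSAS.err_bound (4 ^ ⌈1 / ε⌉₊) (2 ^ j) k'
    have h3 : PSAS.err (4 ^ ⌈1 / ε⌉₊) (2 ^ j) (k' + 1) ≤
        7 * 3 ^ (k' + 1) * (4 ^ ⌈1 / ε⌉₊ * (2 ^ j) ^ k') := by omega
    have h4 : ((PSAS.err (4 ^ ⌈1 / ε⌉₊) (2 ^ j) (k' + 1) : ℕ) : ℝ) ≤
        7 * 3 ^ (k' + 1) * (4 ^ ⌈1 / ε⌉₊ * (2 ^ j) ^ k') := by exact_mod_cast h3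
    have h5 : ((2 : ℝ) ^ j) ^ k' ≤
        2 ^ (k' + 1) * (δ : ℝ) ^ ((1 : ℝ) - 1 / ((k' + 1 : ℕ) : ℝ)) := by
      have hscale : ∀ i, (2 ^ i) ^ (k' + 1) ≤ δ → ((2 : ℝ) ^ i) ^ k' ≤
          (δ : ℝ) ^ ((1 : ℝ) - 1 / ((k' + 1 : ℕ) : ℝ)) := by
        intro i hi
        have := PSAS.scale_bound k' δ i hi
        simpa using this
      have hrp : (0 : ℝ) ≤ (δ : ℝ) ^ ((1 : ℝ) - 1 / ((k' + 1 : ℕ) : ℝ)) := by positivity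
      rcases Nat.eq_zero_or_pos j with hj0 | hj0
      · subst hj0
        refine (hscale 0 (by simp; omega)).trans ?_
        exact le_mul_of_one_le_left hrp (one_le_pow₀ (by norm_num))
      · obtain ⟨i, rfl⟩ : ∃ i, j = i + 1 := ⟨j - 1, by omega⟩
        have h6 := hscale i (hj i (by omega)).le
        have h7 : ((2 : ℝ) ^ (i + 1)) ^ k' = 2 ^ k' * ((2 : ℝ) ^ i) ^ k' := by
          rw [pow_succ, mul_pow, mul_comm]
        rw [h7]
        have h8 : (2 : ℝ) ^ k' ≤ 2 ^ (k' + 1) := pow_le_pow_right₀ (by norm_num) (by omega)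
        exact mul_le_mul h8 h6 (by positivity) (by positivity)
    have h6 := PSAS.const_bound (k' + 1) hk ε hε hε1
    calc _ ≤ _ := h4
      _ ≤ 7 * 3 ^ (k' + 1) * (4 ^ ⌈1 / ε⌉₊ *
          (2 ^ (k' + 1) * (δ : ℝ) ^ ((1 : ℝ) - 1 / ((k' + 1 : ℕ) : ℝ)))) := by gcongr
      _ = (7 * 3 ^ (k' + 1) * 4 ^ ⌈1 / ε⌉₊ * 2 ^ (k' + 1)) *
          (δ : ℝ) ^ ((1 : ℝ) - 1 / ((k' + 1 : ℕ) : ℝ)) := by ring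
      _ ≤ _ := mul_le_mul_of_nonneg_right h6 (by positivity)
end
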